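/- arXiv:1811.00977 — 4 statements merged into one kernel-verified Lean document; each statement's English description precedes it below -/
import Mathlib

section
/- Let p be a prime and G a finite powerful p-group. Then Ω₁(G^p), the subgroup generated by the elements of G^p of order dividing p, is abelian. -/
/-!
Let `F 0 = G`, `F (s + 1) = (F s) ^ p [G, F s]` be the lower `p`-series, so that `G ^ p ≤ F 1`.
In a powerful `p`-group commutation with `G` raises the level by one (by two when `p = 2`), and every
element of `F (s + 1)` is a `p`-th power of an element of `F s`: this holds up to a deeper error term
(`CentralFiltration.exists_approx_root`), and since the series reaches the trivial subgroup, the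
errors can be removed by successive approximation (`CentralFiltration.powFiltration`).

For any such filtration, three statements about the elements killed by `p ^ t` are proved together,
for all `t`, by reverse induction on the level `s ≥ 1`:

* `ProdTors`: a product of elements killed by `p ^ t`, the second one in `F s`, is killed by `p ^ t`;
* `CommTors`: if `z ∈ F s` and `y ∈ G` are killed by `p ^ (t + 1)`, then `⁅y, z⁆` is killed by `p ^ t`;
* `CommTors'`: the same for `z ∈ F (s + 1)`, with `y` only assumed to be killed by `p ^ (t + 2)`.

By `ProdTors` the `p ^ t`-torsion of a deeper term of the filtration is a normal subgroup `N`. For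
`CommTors`, write `z = a ^ p`; modulo `N` the commutator `⁅y, a ^ p⁆` is `⁅y, a⁆ ^ p` because the
iterated commutators that interfere lie deeper and are controlled by `CommTors'`. That `⁅y, a⁆` is
itself killed by `p ^ (t + 1)` comes from `tors_of_mul`: `y⁻¹ * ⁅y, a⁆` is a conjugate of `y⁻¹`. At
fixed level, `CommTors` and `CommTors'` descend from `t + 1` to `t`, starting from the exponent
of `G`. `ProdTors` then follows by computing `(y * o) ^ p` modulo `N`.

For `s = 1`, `t = 0`, `CommTors` says that elements of order dividing `p`, one of them in `F 1`,
commute; hence the generators of `Ω₁(G ^ p)` commute with each other.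
-/

/-- The subgroup generated by the `n`-th powers of the elements of `H`. -/
def subgroupPow {G : Type*} [Group G] (H : Subgroup G) (n : ℕ) : Subgroup G :=
  Subgroup.closure {x | ∃ h ∈ H, h ^ n = x}

/-- `Ω_i(H)`: the subgroup generated by the elements of `H` whose order divides `p ^ i`. -/
def omegaSubgroup {G : Type*} [Group G] (p i : ℕ) (H : Subgroup G) : Subgroup G :=
  Subgroup.closure {x | x ∈ H ∧ x ^ p ^ i = 1}

/-- A finite `p`-group `G` is powerful if `[G,G] ≤ G^p` when `p` is odd,
and `[G,G] ≤ G^4` when `p = 2`. -/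
def IsPowerful (p : ℕ) (G : Type*) [Group G] : Prop :=
  if p = 2 then commutator G ≤ subgroupPow (⊤ : Subgroup G) 4
  else commutator G ≤ subgroupPow (⊤ : Subgroup G) p

/-- The subgroup of `n`-th powers of the whole group is normal (indeed characteristic). -/
instance subgroupPow_top_normal {G : Type*} [Group G] (n : ℕ) :
    (subgroupPow (⊤ : Subgroup G) n).Normal := by
  constructor
  intro x hx g
  have key : Subgroup.map (MulAut.conj g).toMonoidHom (subgroupPow (⊤ : Subgroup G) n)
      ≤ subgroupPow (⊤ : Subgroup G) n := by
    rw [subgroupPow, MonoidHom.map_closure]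
    apply Subgroup.closure_le _ |>.mpr
    rintro y ⟨z, ⟨h, -, rfl⟩, rfl⟩
    exact Subgroup.subset_closure ⟨(MulAut.conj g) h, trivial, by
      simp [((MulAut.conj g).toMonoidHom.map_pow h n).symm]⟩
  have hmem : (MulAut.conj g) x ∈
      Subgroup.map (MulAut.conj g).toMonoidHom (subgroupPow (⊤ : Subgroup G) n) :=
    Subgroup.mem_map_of_mem _ hx
  simpa [MulAut.conj_apply] using key hmem

/-- A powerfully central chain `{1} = H 0 ≤ H 1 ≤ ⋯ ≤ H n = G` of length `n`:
`[H (k+1), G] ≤ (H k)^p` for all `k < n`. -/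
def IsPowerfullyCentralChain (p : ℕ) {G : Type*} [Group G] (n : ℕ) (H : ℕ → Subgroup G) : Prop :=
  H 0 = ⊥ ∧ H n = ⊤ ∧ (∀ k, k < n → H k ≤ H (k + 1)) ∧
    ∀ k, k < n → ⁅H (k + 1), (⊤ : Subgroup G)⁆ ≤ subgroupPow (H k) p

/-- A group is powerfully nilpotent if it is powerful and admits a powerfully central chain. -/
def IsPowerfullyNilpotent (p : ℕ) (G : Type*) [Group G] : Prop :=
  IsPowerful p G ∧ ∃ (n : ℕ) (H : ℕ → Subgroup G), IsPowerfullyCentralChain p n H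

/-- The powerful nilpotency class: the least possible length of a powerfully central chain. -/
noncomputable def powerfulNilpotencyClass (p : ℕ) (G : Type*) [Group G] : ℕ :=
  sInf {n | ∃ H : ℕ → Subgroup G, IsPowerfullyCentralChain p n H}

open scoped commutatorElement

/-! ### Filtrations -/

/-- A descending normal filtration `F` of a group reaching the trivial subgroup, in which taking
`p`-th powers raises the level by one, and commutation with the whole group raises it by one (by two
when `p = 2`). -/
structure CentralFiltration (p : ℕ) {G : Type*} [Group G] (F : ℕ → Subgroup G) : Prop where
  normal : ∀ s, (F s).Normal
  anti : ∀ s, F (s + 1) ≤ F s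
  bot : ∃ n, F n = ⊥
  comm : ∀ s, ∀ x ∈ F s, ∀ g : G, ⁅g, x⁆ ∈ F (s + 1)
  comm_two : p = 2 → ∀ s, ∀ x ∈ F s, ∀ g : G, ⁅g, x⁆ ∈ F (s + 2)
  pow : ∀ s, ∀ x ∈ F s, x ^ p ∈ F (s + 1)

/-- A `CentralFiltration` in which the elements of `F (s + 1)` are exactly the `p`-th powers of the
elements of `F s`. -/
structure PowFiltration (p : ℕ) {G : Type*} [Group G] (F : ℕ → Subgroup G) : Prop extends
    CentralFiltration p F where
  root : ∀ s, ∀ x ∈ F (s + 1), ∃ y ∈ F s, y ^ p = x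

/-! ### The `p`-th power of a product in class two -/

section Power

variable {G : Type*} [Group G]

lemma mul_pow_class_two (x y k : G) (hk : y * x = x * y * k) (hx : k * x = x * k)
    (hy : k * y = y * k) (n : ℕ) : (x * y) ^ n = x ^ n * y ^ n * k ^ n.choose 2 := by
  have hyx : ∀ m : ℕ, y ^ m * x = x * y ^ m * k ^ m := by
    intro m
    induction m with
    | zero => simp
    | succ m ih =>
      have hkm : k ^ m * y = y * k ^ m := ((show Commute k y from hy).pow_left m).eq
      calc y ^ (m + 1) * x = y * (y ^ m * x) := by rw [pow_succ']; group
        _ = (y * x) * y ^ m * k ^ m := by rw [ih]; group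
        _ = x * y * (k * y ^ m) * k ^ m := by rw [hk]; group
        _ = x * y * (y ^ m * k) * k ^ m := by
          rw [((show Commute k y from hy).pow_right m).eq]
        _ = x * (y * y ^ m) * (k * k ^ m) := by group
        _ = x * y ^ (m + 1) * k ^ (m + 1) := by rw [pow_succ', pow_succ']
  induction n with
  | zero => simp
  | succ n ih =>
    have hc : (n + 1).choose 2 = n + n.choose 2 := by
      rw [Nat.choose_succ_succ' n 1]; simp
    have h1 : k ^ n.choose 2 * (x * y) = x * y * k ^ n.choose 2 :=
      (((show Commute k x from hx).mul_right (show Commute k y from hy)).pow_left _).eq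
    have h2 : k ^ n * y = y * k ^ n := ((show Commute k y from hy).pow_left n).eq
    calc (x * y) ^ (n + 1) = x ^ n * y ^ n * (k ^ n.choose 2 * (x * y)) := by
          rw [pow_succ, ih]; group
      _ = x ^ n * (y ^ n * x) * y * k ^ n.choose 2 := by rw [h1]; group
      _ = x ^ n * x * y ^ n * (k ^ n * y) * k ^ n.choose 2 := by rw [hyx]; group
      _ = (x ^ n * x) * (y ^ n * y) * (k ^ n * k ^ n.choose 2) := by rw [h2]; group
      _ = _ := by rw [← pow_succ, ← pow_succ, ← pow_add, hc]

/-- Modulo `N`, the `p`-th power map is multiplicative on `x, y` as soon as `⁅y, x⁆` is trivial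
(`p = 2`), respectively central of order dividing `p` (`p` odd). -/
lemma mul_pow_mod {p : ℕ} (hp : p.Prime) (N : Subgroup G) (hN : N.Normal) (x y : G)
    (h2 : p = 2 → ⁅y, x⁆ ∈ N)
    (h3 : p ≠ 2 → ⁅y, x⁆ ^ p ∈ N ∧ ⁅x, ⁅y, x⁆⁆ ∈ N ∧ ⁅y, ⁅y, x⁆⁆ ∈ N) :
    (x ^ p * y ^ p)⁻¹ * (x * y) ^ p ∈ N := by
  have key : ∀ g : G, g ∈ N ↔ (QuotientGroup.mk' N) g = 1 := fun g => by simp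
  generalize QuotientGroup.mk' N = f at key
  simp only [key, map_pow, map_commutatorElement, map_mul, map_inv] at *
  generalize f x = x at *
  generalize f y = y at *
  rw [inv_mul_eq_one]
  set k := ⁅y, x⁆ with hkdef
  by_cases hp2 : p = 2
  · have hk := h2 hp2
    rw [hkdef, commutatorElement_eq_one_iff_mul_comm] at hk
    exact ((show Commute x y from hk.symm).mul_pow p).symm
  · obtain ⟨hkp, hkx, hky⟩ := h3 hp2
    rw [commutatorElement_eq_one_iff_mul_comm] at hkx hky
    have hk : y * x = x * y * k := by
      have : y * x = k * (x * y) := by rw [hkdef, commutatorElement_def]; group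
      rw [this, ← mul_assoc, ← hkx, mul_assoc, ← hky, mul_assoc]
    rw [mul_pow_class_two x y k hk hkx.symm hky.symm p]
    have hd : p ∣ p.choose 2 :=
      hp.dvd_choose_self (by norm_num) (lt_of_le_of_ne hp.two_le (Ne.symm hp2))
    obtain ⟨m, hm⟩ := hd
    rw [hm, pow_mul, hkp]; simp

/-- Since `⁅y, a ^ p⁆ = (⁅y, a⁆ * a) ^ p * (a ^ p)⁻¹`, `mul_pow_mod` reads `⁅y, a ^ p⁆` off
`⁅y, a⁆ ^ p` modulo `N`. -/
lemma comm_pow_mod {p : ℕ} (hp : p.Prime) (N : Subgroup G) (hN : N.Normal) (a y : G)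
    (h2 : p = 2 → ⁅a, ⁅y, a⁆⁆ ∈ N)
    (h3 : p ≠ 2 → ⁅a, ⁅y, a⁆⁆ ^ p ∈ N ∧ ⁅⁅y, a⁆, ⁅a, ⁅y, a⁆⁆⁆ ∈ N ∧ ⁅a, ⁅a, ⁅y, a⁆⁆⁆ ∈ N) :
    (⁅y, a⁆ ^ p)⁻¹ * ⁅y, a ^ p⁆ ∈ N := by
  have h := mul_pow_mod hp N hN ⁅y, a⁆ a h2 h3
  have e : ⁅y, a ^ p⁆ = (⁅y, a⁆ * a) ^ p * (a ^ p)⁻¹ := by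
    have : ⁅y, a⁆ * a = y * a * y⁻¹ := by rw [commutatorElement_def]; group
    rw [this, conj_pow, commutatorElement_def]
  have h' := hN.conj_mem _ h (a ^ p)
  rw [e]
  convert h' using 1
  group

end Power

/-! ### Powers and roots in a filtration -/

namespace CentralFiltration

variable {G : Type*} [Group G] {p : ℕ} {F : ℕ → Subgroup G}

lemma mono (hF : CentralFiltration p F) {s r : ℕ} (h : s ≤ r) : F r ≤ F s :=
  antitone_nat_of_succ_le hF.anti h

lemma mul_pow_mem (hp : p.Prime) (hF : CentralFiltration p F) {r : ℕ} {e : G} (he : e ∈ F r)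
    (c : G) :
    (c ^ p * e ^ p)⁻¹ * (c * e) ^ p ∈ F (r + 2) := by
  have hn := hF.normal
  have hk1 : ⁅e, c⁆ ∈ F (r + 1) := by
    rw [← commutatorElement_inv]; exact inv_mem (hF.comm r e he c)
  refine mul_pow_mod hp _ (hn _) c e (fun h => ?_) (fun _ => ⟨?_, ?_, ?_⟩)
  · rw [← commutatorElement_inv]; exact inv_mem (hF.comm_two h r e he c)
  · exact hF.pow _ _ hk1
  · exact hF.comm _ _ hk1 _
  · exact hF.comm _ _ hk1 _

end CentralFiltration

namespace PowFiltration

variable {G : Type*} [Group G] {p : ℕ} {F : ℕ → Subgroup G}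

lemma pow_pow_mem (hF : PowFiltration p F) {r : ℕ} {e : G} (he : e ∈ F r) (t : ℕ) :
    e ^ p ^ t ∈ F (r + t) := by
  induction t with
  | zero => simpa using he
  | succ t ih => rw [pow_succ, pow_mul]; exact hF.pow _ _ ih

lemma mul_pow_pow_mem (hp : p.Prime) (hF : PowFiltration p F) {r : ℕ} {e : G} (he : e ∈ F r)
    (c : G) (t : ℕ) : (c ^ p ^ t * e ^ p ^ t)⁻¹ * (c * e) ^ p ^ t ∈ F (r + t + 1) := by
  induction t with
  | zero => simp
  | succ t ih =>
    set n := (c ^ p ^ t * e ^ p ^ t)⁻¹ * (c * e) ^ p ^ t with hn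
    have e1 : (c * e) ^ p ^ t = c ^ p ^ t * (e ^ p ^ t * n) := by rw [hn]; group
    have het : e ^ p ^ t ∈ F (r + t) := hF.pow_pow_mem he t
    have h1 := hF.mul_pow_mem hp (mul_mem het (hF.anti _ ih)) (c ^ p ^ t)
    have h2 := hF.anti _ (hF.mul_pow_mem hp ih (e ^ p ^ t))
    have h3 := hF.pow _ _ ih
    have h4 := mul_mem (mul_mem h3 h2) h1
    simp only [pow_succ, pow_mul]
    rw [e1]
    convert h4 using 1
    group

lemma root_pow (hF : PowFiltration p F) (r t : ℕ) : ∀ x ∈ F (r + t), ∃ y ∈ F r, y ^ p ^ t = x := by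
  induction t with
  | zero => intro x hx; exact ⟨x, hx, by simp⟩
  | succ t ih =>
    intro x hx
    obtain ⟨y, hy, rfl⟩ := hF.root (r + t) x hx
    obtain ⟨z, hz, rfl⟩ := ih y hy
    exact ⟨z, hz, by rw [pow_succ, pow_mul]⟩

/-- If `c ∈ F s` has its `p ^ t`-th power one level deeper than expected, then `c` can be corrected
by an element of `F (s + 1)` to an element killed by `p ^ t`, by successive approximation. -/
lemma correct (hp : p.Prime) (hF : PowFiltration p F) {s t : ℕ} {c : G}
    (hct : c ^ p ^ t ∈ F (s + t + 1)) : ∃ e ∈ F (s + 1), (c * e) ^ p ^ t = 1 := by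
  have key : ∀ k : ℕ, ∃ e ∈ F (s + 1), (c * e) ^ p ^ t ∈ F (s + 1 + k + t) := by
    intro k
    induction k with
    | zero => exact ⟨1, one_mem _, by rw [mul_one]; convert hct using 2; omega⟩
    | succ k ih =>
      obtain ⟨e, he, hu⟩ := ih
      obtain ⟨v, hv, hvu⟩ := hF.root_pow _ _ _ (inv_mem hu)
      refine ⟨e * v, mul_mem he (hF.mono (by omega) hv), ?_⟩
      have h := hF.mul_pow_pow_mem hp hv (c * e) t
      rw [hvu, mul_inv_cancel, inv_one, one_mul, mul_assoc] at h
      convert h using 2; omega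
  obtain ⟨n, hn⟩ := hF.bot
  obtain ⟨e, he, h⟩ := key n
  refine ⟨e, he, ?_⟩
  have := hF.mono (show n ≤ s + 1 + n + t by omega) h
  rwa [hn, Subgroup.mem_bot] at this

/-! ### Torsion elements of the filtration -/

/-- Multiplying an element killed by `p ^ t` by such an element of `F s` gives such an element. -/
def ProdTors (p : ℕ) (F : ℕ → Subgroup G) (s t : ℕ) : Prop :=
  ∀ y : G, ∀ o ∈ F s, y ^ p ^ t = 1 → o ^ p ^ t = 1 → (y * o) ^ p ^ t = 1

/-- Commutators of `p ^ (t + 1)`-torsion elements, one of them in `F s`, are killed by `p ^ t`. -/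
def CommTors (p : ℕ) (F : ℕ → Subgroup G) (s t : ℕ) : Prop :=
  ∀ z ∈ F s, ∀ y : G, z ^ p ^ (t + 1) = 1 → y ^ p ^ (t + 1) = 1 → ⁅y, z⁆ ^ p ^ t = 1

/-- The variant of `CommTors` one level deeper in the filtration, where the other element need only
be killed by `p ^ (t + 2)`. -/
def CommTors' (p : ℕ) (F : ℕ → Subgroup G) (s t : ℕ) : Prop :=
  ∀ z ∈ F (s + 1), ∀ y : G, z ^ p ^ (t + 1) = 1 → y ^ p ^ (t + 2) = 1 → ⁅y, z⁆ ^ p ^ t = 1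

lemma tors_succ {t : ℕ} {g : G} (h : g ^ p ^ t = 1) : g ^ p ^ (t + 1) = 1 := by
  rw [pow_succ, pow_mul, h, one_pow]

lemma pow_tors_iff {t : ℕ} {g : G} : (g ^ p) ^ p ^ t = 1 ↔ g ^ p ^ (t + 1) = 1 := by
  rw [pow_succ', pow_mul]

lemma ProdTors.exists_subgroup (hF : PowFiltration p F) {s t : ℕ} (hK : ProdTors p F s t) :
    ∃ N : Subgroup G, N.Normal ∧ ∀ g, g ∈ N ↔ g ∈ F s ∧ g ^ p ^ t = 1 := by
  refine ⟨{ carrier := {g | g ∈ F s ∧ g ^ p ^ t = 1}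
            one_mem' := ⟨one_mem _, one_pow _⟩
            mul_mem' := fun {a b} ha hb => ⟨mul_mem ha.1 hb.1, hK a b hb.1 ha.2 hb.2⟩
            inv_mem' := fun {a} ha => ⟨inv_mem ha.1, by rw [inv_pow, ha.2, inv_one]⟩ },
          ⟨fun n hn g => ⟨(hF.normal s).conj_mem n hn.1 g, ?_⟩⟩, fun g => Iff.rfl⟩
  rw [conj_pow, hn.2]; group

/-- If `y` and `y * c` are killed by `p ^ t`, so is `c`: reverse induction on the level `s` of `c`.
Split off from `c` a torsion factor by `correct`; what remains is one level deeper. -/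
lemma tors_of_mul (hp : p.Prime) (hF : PowFiltration p F) {s₀ t : ℕ}
    (hK : ProdTors p F s₀ t) : ∀ s, s₀ ≤ s → ∀ y : G, ∀ c ∈ F s, y ^ p ^ t = 1 →
      (y * c) ^ p ^ t = 1 → c ^ p ^ t = 1 := by
  obtain ⟨n, hn⟩ := hF.bot
  have key : ∀ k s, s₀ ≤ s → n ≤ s + k → ∀ y : G, ∀ c ∈ F s, y ^ p ^ t = 1 →
      (y * c) ^ p ^ t = 1 → c ^ p ^ t = 1 := by
    intro k
    induction k with
    | zero =>
      intro s _ hs y c hc _ _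
      have := hF.mono hs hc
      rw [hn, Subgroup.mem_bot] at this
      rw [this, one_pow]
    | succ k ih =>
      intro s hs hsk y c hc hy hyc
      have hct : c ^ p ^ t ∈ F (s + t + 1) := by
        have h := hF.mul_pow_pow_mem hp hc y t
        rw [hyc, hy, one_mul, mul_one] at h
        exact (Subgroup.inv_mem_iff _).1 h
      obtain ⟨e, he, hce⟩ := hF.correct hp hct
      have ho : c * e ∈ F s₀ := hF.mono hs (mul_mem hc (hF.anti _ he))
      have he' : e⁻¹ ^ p ^ t = 1 := by
        refine ih (s + 1) (by omega) (by omega) (y * (c * e)) e⁻¹ (inv_mem he)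
          (hK _ _ ho hy hce) ?_
        rw [show y * (c * e) * e⁻¹ = y * c by group]; exact hyc
      have := hK (c * e) e⁻¹ (hF.mono (by omega) (inv_mem he)) hce he'
      rwa [mul_inv_cancel_right] at this
  exact fun s hs => key n s hs (by omega)

lemma comm_tors (hp : p.Prime) (hF : PowFiltration p F) {s t : ℕ} (hK : ProdTors p F s t)
    {y a : G} (hc : ⁅y, a⁆ ∈ F s) (hy : y ^ p ^ t = 1) : ⁅y, a⁆ ^ p ^ t = 1 := by
  refine hF.tors_of_mul hp hK s le_rfl y⁻¹ _ hc (by rw [inv_pow, hy, inv_one]) ?_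
  rw [show y⁻¹ * ⁅y, a⁆ = a * y⁻¹ * a⁻¹ by rw [commutatorElement_def]; group, conj_pow, inv_pow, hy]
  group

lemma comm_tors' (hp : p.Prime) (hF : PowFiltration p F) {s t : ℕ} (hK : ProdTors p F s t)
    {y a : G} (hc : ⁅a, y⁆ ∈ F s) (hy : y ^ p ^ t = 1) : ⁅a, y⁆ ^ p ^ t = 1 := by
  rw [← commutatorElement_inv] at hc ⊢
  rw [inv_pow, hF.comm_tors hp hK ((Subgroup.inv_mem_iff _).1 hc) hy, inv_one]

/-- For odd `p` the commutator `⁅o, y⁆` is central of order `p` modulo the `p ^ t`-torsion of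
`F (s + 1)`, so `(y * o) ^ p` is `y ^ p * o ^ p` there. -/
lemma prodTors_odd (hp : p.Prime) (hF : PowFiltration p F) (hp2 : p ≠ 2) {s : ℕ}
    (hK : ∀ t, ProdTors p F (s + 1) t) (hX : ∀ t, CommTors p F (s + 1) t) (t : ℕ) :
    ProdTors p F s t := by
  intro y o ho hy hot
  cases t with
  | zero => simp_all
  | succ t =>
    obtain ⟨N, hN, hmem⟩ := (hK t).exists_subgroup hF
    have hk1 : ⁅o, y⁆ ∈ F (s + 1) := by
      rw [← commutatorElement_inv]; exact inv_mem (hF.comm _ _ ho _)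
    have hkt : ⁅o, y⁆ ^ p ^ (t + 1) = 1 := hF.comm_tors hp (hK _) hk1 hot
    have h := mul_pow_mod hp N hN y o (fun h => absurd h hp2) (fun _ => by
      refine ⟨(hmem _).2 ⟨hF.anti _ (hF.pow _ _ hk1), pow_tors_iff.2 hkt⟩,
        (hmem _).2 ⟨hF.anti _ (hF.comm _ _ hk1 _), hX t _ hk1 _ hkt hy⟩,
        (hmem _).2 ⟨hF.anti _ (hF.comm _ _ hk1 _), hX t _ hk1 _ hkt hot⟩⟩)
    have ho' : o ^ p ∈ N := (hmem _).2 ⟨hF.pow _ _ ho, pow_tors_iff.2 hot⟩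
    have h' := (hmem _).1 (mul_mem ho' h)
    have := hK t (y ^ p) _ h'.1 (pow_tors_iff.2 hy) h'.2
    rw [← pow_tors_iff]
    convert this using 2
    group

lemma prodTors_two (hp : p.Prime) (hF : PowFiltration p F) (hp2 : p = 2) {s : ℕ}
    (hK : ∀ t, ProdTors p F (s + 1) t) (hX : ∀ t, CommTors p F s t) (t : ℕ) :
    ProdTors p F s t := by
  intro y o ho hy hot
  cases t with
  | zero => simp_all
  | succ t =>
    obtain ⟨N, hN, hmem⟩ := (hK t).exists_subgroup hF
    have h := mul_pow_mod hp N hN y o (fun h => by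
      rw [← commutatorElement_inv]
      exact inv_mem ((hmem _).2 ⟨hF.comm _ _ ho _, hX t _ ho _ hot hy⟩)) (fun h => absurd hp2 h)
    have ho' : o ^ p ∈ N := (hmem _).2 ⟨hF.pow _ _ ho, pow_tors_iff.2 hot⟩
    have h' := (hmem _).1 (mul_mem ho' h)
    have := hK t (y ^ p) _ h'.1 (pow_tors_iff.2 hy) h'.2
    rw [← pow_tors_iff]
    convert this using 2
    group

/-- With `z = d ^ p`, the commutator `⁅y, z⁆` is `⁅y, d⁆ ^ p` modulo the `p ^ t`-torsion of
`F (s + 1)`. -/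
lemma commTors'_step (hp : p.Prime) (hF : PowFiltration p F) {s t : ℕ}
    (hK : ∀ t, ProdTors p F (s + 1) t) (hX : CommTors p F s (t + 1))
    (hX' : CommTors' p F (s + 1) t) : CommTors' p F s t := by
  intro z hz y hzt hyt
  obtain ⟨d, hd, rfl⟩ := hF.root _ _ hz
  rw [pow_tors_iff] at hzt
  obtain ⟨N, hN, hmem⟩ := (hK t).exists_subgroup hF
  have hh1 : ⁅y, d⁆ ∈ F (s + 1) := hF.comm _ _ hd _
  have hht : ⁅y, d⁆ ^ p ^ (t + 1) = 1 := hX d hd y hzt hyt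
  have hk1 : ⁅d, ⁅y, d⁆⁆ ∈ F (s + 2) := hF.comm _ _ hh1 _
  have hkt : ⁅d, ⁅y, d⁆⁆ ^ p ^ (t + 1) = 1 := hF.comm_tors' hp (hK _) (hF.anti _ hk1) hht
  have h := comm_pow_mod hp N hN d y
    (fun h2 => (hmem _).2 ⟨hF.anti _ hk1, hX' _ (hF.comm_two h2 _ _ hd _) _ hht hzt⟩)
    (fun _ => ⟨(hmem _).2 ⟨hF.anti _ (hF.anti _ (hF.pow _ _ hk1)), pow_tors_iff.2 hkt⟩,
      (hmem _).2 ⟨hF.anti _ (hF.anti _ (hF.comm _ _ hk1 _)), hX' _ hk1 _ hkt (tors_succ hht)⟩,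
      (hmem _).2 ⟨hF.anti _ (hF.anti _ (hF.comm _ _ hk1 _)), hX' _ hk1 _ hkt hzt⟩⟩)
  have hw : ⁅y, d⁆ ^ p ∈ N := (hmem _).2 ⟨hF.anti _ (hF.pow _ _ hh1), pow_tors_iff.2 hht⟩
  have hyz := mul_mem hw h
  rw [mul_inv_cancel_left] at hyz
  exact ((hmem _).1 hyz).2

/-- With `z = a ^ p`, the commutator `⁅y, z⁆` is `⁅y, a⁆ ^ p` modulo the `p ^ t`-torsion of
`F (s + 2)`; here the level of `z` is `s + 1`, so that `z` has a `p`-th root in `F s`. -/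
lemma commTors_step (hp : p.Prime) (hF : PowFiltration p F) {s t : ℕ}
    (hK : ∀ t, ProdTors p F (s + 2) t) (hK' : p ≠ 2 → ∀ t, ProdTors p F (s + 1) t)
    (hX' : CommTors' p F (s + 1) t) : CommTors p F (s + 1) t := by
  intro z hz y hzt hyt
  obtain ⟨a, ha, rfl⟩ := hF.root _ _ hz
  rw [pow_tors_iff] at hzt
  obtain ⟨N, hN, hmem⟩ := (hK t).exists_subgroup hF
  have hw1 : ⁅y, a⁆ ∈ F (s + 1) := hF.comm _ _ ha _
  have hwt : ⁅y, a⁆ ^ p ^ (t + 1) = 1 := by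
    by_cases h2 : p = 2
    · exact hF.comm_tors hp (hK _) (hF.comm_two h2 _ _ ha _) hyt
    · exact hF.comm_tors hp (hK' h2 _) hw1 hyt
  have hk1 : ⁅a, ⁅y, a⁆⁆ ∈ F (s + 2) := hF.comm _ _ hw1 _
  have hkt : ⁅a, ⁅y, a⁆⁆ ^ p ^ (t + 1) = 1 := hF.comm_tors' hp (hK _) hk1 hwt
  have h := comm_pow_mod hp N hN a y
    (fun h2 => (hmem _).2 ⟨hk1, hX' _ (hF.comm_two h2 _ _ ha _) _ hwt hzt⟩)
    (fun _ => ⟨(hmem _).2 ⟨hF.anti _ (hF.pow _ _ hk1), pow_tors_iff.2 hkt⟩,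
      (hmem _).2 ⟨hF.anti _ (hF.comm _ _ hk1 _), hX' _ hk1 _ hkt (tors_succ hwt)⟩,
      (hmem _).2 ⟨hF.anti _ (hF.comm _ _ hk1 _), hX' _ hk1 _ hkt hzt⟩⟩)
  have hw : ⁅y, a⁆ ^ p ∈ N := (hmem _).2 ⟨hF.pow _ _ hw1, pow_tors_iff.2 hwt⟩
  have hyz := mul_mem hw h
  rw [mul_inv_cancel_left] at hyz
  exact ((hmem _).1 hyz).2

/-- Reverse induction on `t`: the commutator statements at level `s + 1` and exponent `t` follow
from those at exponent `t + 1`, and they are trivial once `p ^ t` kills the group. -/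
lemma commTors_level (hp : p.Prime) (hF : PowFiltration p F) {m : ℕ}
    (hm : ∀ g : G, g ^ p ^ m = 1) {s : ℕ} (hK : ∀ t, ProdTors p F (s + 2) t)
    (hK' : p ≠ 2 → ∀ t, ProdTors p F (s + 1) t) (hX' : ∀ t, CommTors' p F (s + 2) t) (t : ℕ) :
    CommTors p F (s + 1) t ∧ CommTors' p F (s + 1) t := by
  have key : ∀ k t, m ≤ t + k → CommTors p F (s + 1) t ∧ CommTors' p F (s + 1) t := by
    intro k
    induction k with
    | zero =>
      intro t ht
      have : ∀ g : G, g ^ p ^ t = 1 := by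
        intro g
        obtain ⟨j, rfl⟩ := Nat.exists_eq_add_of_le (show m ≤ t by omega)
        rw [pow_add, pow_mul, hm, one_pow]
      exact ⟨fun _ _ _ _ _ => this _, fun _ _ _ _ _ => this _⟩
    | succ k ih =>
      intro t ht
      have h' := commTors'_step hp hF hK (ih (t + 1) (by omega)).1 (hX' t)
      exact ⟨commTors_step hp hF hK hK' h', h'⟩
  exact key m t (by omega)

theorem commTors_all (hp : p.Prime) (hF : PowFiltration p F) {m : ℕ}
    (hm : ∀ g : G, g ^ p ^ m = 1) (s t : ℕ) : CommTors p F (s + 1) t := by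
  obtain ⟨n, hn⟩ := hF.bot
  have key : ∀ k s, n ≤ s + k → ∀ t, ProdTors p F (s + 1) t ∧ CommTors p F (s + 1) t ∧
      CommTors' p F (s + 1) t := by
    intro k
    induction k with
    | zero =>
      intro s hs t
      have triv : ∀ j, s ≤ j → ∀ z ∈ F j, z = 1 := by
        intro j hj z hz
        have := hF.mono (show n ≤ j by omega) hz
        rwa [hn, Subgroup.mem_bot] at this
      refine ⟨fun y o ho hy _ => ?_, fun z hz y _ _ => ?_, fun z hz y _ _ => ?_⟩
      · rw [triv _ (by omega) o ho, mul_one, hy]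
      · rw [triv _ (by omega) z hz]; simp
      · rw [triv _ (by omega) z hz]; simp
    | succ k ih =>
      intro s hs t
      have IH := ih (s + 1) (by omega)
      have hK := fun t => (IH t).1
      have hX := fun t => (IH t).2.1
      have hX' := fun t => (IH t).2.2
      by_cases hp2 : p = 2
      · have hC := commTors_level hp hF hm hK (fun h => absurd hp2 h) hX'
        exact ⟨prodTors_two hp hF hp2 hK (fun t => (hC t).1) t, hC t⟩
      · have hK' := prodTors_odd hp hF hp2 hK hX
        exact ⟨hK' t, commTors_level hp hF hm hK (fun _ => hK') hX' t⟩
  exact (key n s (by omega) t).2.1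

end PowFiltration

/-! ### The lower `p`-series of a powerful group -/

/-- The lower exponent-`p` central series: each term is generated by the `p`-th powers of the
previous term and by its commutators with the whole group. -/
def lowerPSeries (p : ℕ) (G : Type*) [Group G] : ℕ → Subgroup G
  | 0 => ⊤
  | s + 1 => subgroupPow (lowerPSeries p G s) p ⊔ ⁅(⊤ : Subgroup G), lowerPSeries p G s⁆

section Series

variable {G : Type*} [Group G] {p : ℕ}

lemma subgroupPow_normal (H : Subgroup G) (hH : H.Normal) (n : ℕ) : (subgroupPow H n).Normal := by
  refine ⟨fun x hx g => ?_⟩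
  induction hx using Subgroup.closure_induction with
  | mem x hx =>
    obtain ⟨h, hh, rfl⟩ := hx
    exact Subgroup.subset_closure ⟨g * h * g⁻¹, hH.conj_mem h hh g, conj_pow⟩
  | one => simp
  | mul x y _ _ hx hy =>
    rw [show g * (x * y) * g⁻¹ = g * x * g⁻¹ * (g * y * g⁻¹) by group]
    exact mul_mem hx hy
  | inv x _ hx =>
    rw [show g * x⁻¹ * g⁻¹ = (g * x * g⁻¹)⁻¹ by group]
    exact inv_mem hx

lemma lps_normal (s : ℕ) : (lowerPSeries p G s).Normal := by
  induction s with
  | zero => exact inferInstanceAs (⊤ : Subgroup G).Normal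
  | succ s ih =>
    have := subgroupPow_normal _ ih p
    have : (⁅(⊤ : Subgroup G), lowerPSeries p G s⁆).Normal := inferInstance
    exact Subgroup.sup_normal _ _

lemma lps_pow {s : ℕ} {x : G} (hx : x ∈ lowerPSeries p G s) : x ^ p ∈ lowerPSeries p G (s + 1) :=
  Subgroup.mem_sup_left (Subgroup.subset_closure ⟨x, hx, rfl⟩)

lemma lps_comm {s : ℕ} {x : G} (hx : x ∈ lowerPSeries p G s) (g : G) :
    ⁅g, x⁆ ∈ lowerPSeries p G (s + 1) :=
  Subgroup.mem_sup_right (Subgroup.commutator_mem_commutator (Subgroup.mem_top g) hx)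

/-- To bound a term of the series from above, check the generators. -/
lemma lps_succ_le {s : ℕ} {H : Subgroup G} (h1 : ∀ x ∈ lowerPSeries p G s, x ^ p ∈ H)
    (h2 : ∀ x ∈ lowerPSeries p G s, ∀ g : G, ⁅g, x⁆ ∈ H) : lowerPSeries p G (s + 1) ≤ H := by
  refine sup_le ((Subgroup.closure_le _).2 ?_) (Subgroup.commutator_le.2 fun g _ x hx => h2 x hx g)
  rintro _ ⟨x, hx, rfl⟩
  exact h1 x hx

lemma lps_anti (s : ℕ) : lowerPSeries p G (s + 1) ≤ lowerPSeries p G s := by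
  have hn : (lowerPSeries p G s).Normal := lps_normal s
  refine lps_succ_le (fun x hx => pow_mem hx p) fun x hx g => ?_
  rw [commutatorElement_def]
  exact mul_mem (hn.conj_mem x hx g) (inv_mem hx)

lemma lps_map {H : Type*} [Group H] (f : G →* H) (s : ℕ) :
    lowerPSeries p G s ≤ (lowerPSeries p H s).comap f := by
  induction s with
  | zero => exact fun _ _ => Subgroup.mem_top _
  | succ s ih =>
    refine lps_succ_le (fun x hx => ?_) fun x hx g => ?_
    · rw [Subgroup.mem_comap, map_pow]; exact lps_pow (ih hx)
    · rw [Subgroup.mem_comap, map_commutatorElement]; exact lps_comm (ih hx) _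

/-- Modulo the centre the series terminates by induction; below the centre each step is just taking
`p`-th powers. -/
lemma lps_eq_bot [Group.IsNilpotent G] {m : ℕ} (hm : ∀ g : G, g ^ p ^ m = 1) :
    ∃ n, lowerPSeries p G n = ⊥ := by
  revert hm
  refine Group.nilpotent_center_quotient_ind
    (P := fun G _ _ => (∀ g : G, g ^ p ^ m = 1) → ∃ n, lowerPSeries p G n = ⊥) G ?_ ?_
  · intro G _ _ _
    exact ⟨0, Subsingleton.elim _ _⟩
  · intro G _ _ ih hm
    obtain ⟨n, hn⟩ := ih fun g => by
      obtain ⟨g, rfl⟩ := QuotientGroup.mk_surjective g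
      rw [← QuotientGroup.mk_pow, hm, QuotientGroup.mk_one]
    have key : ∀ j k, k + j = m → ∀ x ∈ lowerPSeries p G (n + j),
        x ∈ Subgroup.center G ∧ x ^ p ^ k = 1 := by
      intro j
      induction j with
      | zero =>
        intro k hk x hx
        refine ⟨?_, by rw [show k = m by omega]; exact hm x⟩
        have := lps_map (QuotientGroup.mk' (Subgroup.center G)) n hx
        rw [hn] at this
        simpa using this
      | succ j ihj =>
        intro k hk
        let H : Subgroup G :=
          { carrier := {x | x ∈ Subgroup.center G ∧ x ^ p ^ k = 1}
            one_mem' := ⟨one_mem _, one_pow _⟩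
            mul_mem' := fun {a b} ha hb => ⟨mul_mem ha.1 hb.1, by
              have : Commute a b := (Subgroup.mem_center_iff.1 ha.1 b).symm
              rw [this.mul_pow, ha.2, hb.2, one_mul]⟩
            inv_mem' := fun {a} ha => ⟨inv_mem ha.1, by rw [inv_pow, ha.2, inv_one]⟩ }
        have hle : lowerPSeries p G (n + j + 1) ≤ H := by
          refine lps_succ_le (fun x hx => ?_) fun x hx g => ?_
          · obtain ⟨h1, h2⟩ := ihj (k + 1) (by omega) x hx
            exact ⟨pow_mem h1 p, by rw [← pow_mul, ← pow_succ']; exact h2⟩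
          · obtain ⟨h1, -⟩ := ihj (k + 1) (by omega) x hx
            rw [commutatorElement_eq_one_iff_mul_comm.2 (Subgroup.mem_center_iff.1 h1 g)]
            exact one_mem _
        exact fun x hx => hle hx
    refine ⟨n + m, (Subgroup.eq_bot_iff_forall _).2 fun x hx => ?_⟩
    simpa using (key m 0 (by omega) x hx).2

lemma exists_subgroup_comm_mem (N : Subgroup G) (hN : N.Normal) :
    ∃ C : Subgroup G, ∀ x, x ∈ C ↔ ∀ g : G, ⁅g, x⁆ ∈ N := by
  refine ⟨(Subgroup.center (G ⧸ N)).comap (QuotientGroup.mk' N), fun x => ?_⟩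
  rw [Subgroup.mem_comap, Subgroup.mem_center_iff, QuotientGroup.mk_surjective.forall]
  refine forall_congr' fun g => ?_
  rw [← QuotientGroup.eq_one_iff, ← QuotientGroup.mk'_apply, ← QuotientGroup.mk'_apply,
    map_commutatorElement, commutatorElement_eq_one_iff_mul_comm]

lemma lps_comm_two (h : commutator G ≤ subgroupPow (⊤ : Subgroup G) 4) (s : ℕ) :
    ∀ x ∈ lowerPSeries 2 G s, ∀ g : G, ⁅g, x⁆ ∈ lowerPSeries 2 G (s + 2) := by
  induction s with
  | zero =>
    intro x _ g
    have h4 : subgroupPow (⊤ : Subgroup G) 4 ≤ lowerPSeries 2 G (0 + 2) := by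
      refine (Subgroup.closure_le _).2 ?_
      rintro _ ⟨y, -, rfl⟩
      have : y ∈ lowerPSeries 2 G 0 := Subgroup.mem_top y
      rw [show (4 : ℕ) = 2 * 2 from rfl, pow_mul]
      exact lps_pow (lps_pow this)
    exact h4 (h (Subgroup.commutator_mem_commutator (Subgroup.mem_top g) (Subgroup.mem_top x)))
  | succ s ih =>
    obtain ⟨C, hC⟩ := exists_subgroup_comm_mem (lowerPSeries 2 G (s + 3)) (lps_normal _)
    have hle : lowerPSeries 2 G (s + 1) ≤ C := by
      refine lps_succ_le (fun a ha => (hC _).2 fun g => ?_) fun x hx g => (hC _).2 fun k => ?_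
      · have h1 := ih a ha g
        have h2 := comm_pow_mod Nat.prime_two _ (lps_normal (p := 2) (s + 3)) a g
          (fun _ => lps_comm h1 a) (fun h => absurd rfl h)
        have h3 := mul_mem (lps_pow h1) h2
        rwa [mul_inv_cancel_left] at h3
      · exact lps_comm (ih x hx g) k
    exact fun x hx => (hC x).1 (hle hx)

lemma lps_central [Group.IsNilpotent G] {m : ℕ} (hm : ∀ g : G, g ^ p ^ m = 1)
    (hpow : IsPowerful p G) : CentralFiltration p (lowerPSeries p G) where
  normal := lps_normal
  anti := lps_anti
  bot := lps_eq_bot hm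
  comm _ _ hx := lps_comm hx
  comm_two := by
    rintro rfl
    rw [IsPowerful, if_pos rfl] at hpow
    exact lps_comm_two hpow
  pow _ _ hx := lps_pow hx

end Series

/-! ### Extraction of roots in the lower `p`-series -/

namespace CentralFiltration

variable {G : Type*} [Group G] {p : ℕ}

lemma exists_subgroup_approx (hp : p.Prime) {F : ℕ → Subgroup G} (hF : CentralFiltration p F)
    (r : ℕ) : ∃ A : Subgroup G, ∀ u, u ∈ A ↔ ∃ v ∈ F r, (v ^ p)⁻¹ * u ∈ F (r + 2) := by
  have hn := hF.normal (r + 2)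
  refine ⟨{ carrier := {u | ∃ v ∈ F r, (v ^ p)⁻¹ * u ∈ F (r + 2)}
            one_mem' := ⟨1, one_mem _, by simp⟩
            mul_mem' := ?_
            inv_mem' := ?_ }, fun u => Iff.rfl⟩
  · rintro u₁ u₂ ⟨v₁, hv₁, h₁⟩ ⟨v₂, hv₂, h₂⟩
    refine ⟨v₁ * v₂, mul_mem hv₁ hv₂, ?_⟩
    have h := mul_mem (mul_mem (inv_mem (hF.mul_pow_mem hp hv₂ v₁))
      (hn.conj_mem _ h₁ (v₂ ^ p)⁻¹)) h₂
    convert h using 1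
    group
  · rintro u ⟨v, hv, h⟩
    refine ⟨v⁻¹, inv_mem hv, ?_⟩
    have h := hn.conj_mem _ (inv_mem h) (v ^ p)
    convert h using 1
    group

/-- Every element of a term of the series is a `p`-th power from the previous term, up to an error
one level deeper. For odd `p` the induction rests on `⁅g, a ^ p⁆` being congruent
to `⁅g, a⁆ ^ p`. -/
lemma exists_approx_root (hp : p.Prime) (hF : CentralFiltration p (lowerPSeries p G))
    (hpow : IsPowerful p G) (r : ℕ) : ∀ u ∈ lowerPSeries p G (r + 1),
      ∃ v ∈ lowerPSeries p G r, (v ^ p)⁻¹ * u ∈ lowerPSeries p G (r + 2) := by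
  induction r with
  | zero =>
    obtain ⟨A, hA⟩ := hF.exists_subgroup_approx hp 0
    have hpowA : ∀ x ∈ lowerPSeries p G 0, x ^ p ∈ A := fun x hx => (hA _).2 ⟨x, hx, by simp⟩
    have hle : lowerPSeries p G (0 + 1) ≤ A := by
      refine lps_succ_le hpowA fun x hx g => ?_
      by_cases h2 : p = 2
      · exact (hA _).2 ⟨1, one_mem _, by simpa using hF.comm_two h2 _ x hx g⟩
      · rw [IsPowerful, if_neg h2] at hpow
        have hc := hpow
          (Subgroup.commutator_mem_commutator (Subgroup.mem_top g) (Subgroup.mem_top x))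
        refine (Subgroup.closure_le A).2 ?_ hc
        rintro _ ⟨y, hy, rfl⟩
        exact hpowA y hy
    exact fun u hu => (hA u).1 (hle hu)
  | succ r ih =>
    obtain ⟨A, hA⟩ := hF.exists_subgroup_approx hp (r + 1)
    have hle : lowerPSeries p G (r + 1 + 1) ≤ A := by
      refine lps_succ_le (fun x hx => (hA _).2 ⟨x, hx, by simp⟩) fun x hx g => (hA _).2 ?_
      by_cases h2 : p = 2
      · exact ⟨1, one_mem _, by simpa using hF.comm_two h2 _ x hx g⟩
      · obtain ⟨a, ha, hax⟩ := ih x hx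
        have hc := hF.comm _ _ ha g
        have hk := hF.comm _ _ hc a
        have h1 := comm_pow_mod hp _ (hF.normal (r + 3)) a g (fun h => absurd h h2)
          (fun _ => ⟨hF.pow _ _ hk, hF.comm _ _ hk _, hF.comm _ _ hk _⟩)
        have h3 := (hF.normal _).conj_mem _ (hF.comm _ _ hax g) (a ^ p)
        refine ⟨⁅g, a⁆, hc, ?_⟩
        have h4 := mul_mem h1 h3
        convert h4 using 1
        simp only [commutatorElement_def]
        group
    exact fun u hu => (hA u).1 (hle hu)

lemma powFiltration (hp : p.Prime) (hF : CentralFiltration p (lowerPSeries p G))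
    (hpow : IsPowerful p G) : PowFiltration p (lowerPSeries p G) where
  toCentralFiltration := hF
  root := by
    intro s u hu
    have key : ∀ k : ℕ, ∃ x ∈ lowerPSeries p G s, (x ^ p)⁻¹ * u ∈ lowerPSeries p G (s + k + 1) := by
      intro k
      induction k with
      | zero => exact ⟨1, one_mem _, by simpa using hu⟩
      | succ k ih =>
        obtain ⟨x, hx, hxu⟩ := ih
        obtain ⟨v, hv, hvu⟩ := hF.exists_approx_root hp hpow _ _ hxu
        refine ⟨x * v, mul_mem hx (hF.mono (by omega) hv), ?_⟩
        have h := mul_mem (inv_mem (hF.mul_pow_mem hp hv x)) hvu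
        convert h using 1
        group
    obtain ⟨n, hn⟩ := hF.bot
    obtain ⟨x, hx, hxu⟩ := key n
    have := hF.mono (show n ≤ s + n + 1 by omega) hxu
    rw [hn, Subgroup.mem_bot, inv_mul_eq_one] at this
    exact ⟨x, hx, this⟩

end CentralFiltration

theorem omega_statement_1 (p : ℕ) (hp : p.Prime) (G : Type*) [Group G] [Finite G]
    (hG : IsPGroup p G) (hpow : IsPowerful p G) :
    ∀ x ∈ omegaSubgroup p 1 (subgroupPow (⊤ : Subgroup G) p),
      ∀ y ∈ omegaSubgroup p 1 (subgroupPow (⊤ : Subgroup G) p), x * y = y * x := by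
  have : Fact p.Prime := ⟨hp⟩
  have : Group.IsNilpotent G := hG.isNilpotent
  obtain ⟨m, hcard⟩ := IsPGroup.iff_card.1 hG
  have hm : ∀ g : G, g ^ p ^ m = 1 := fun g => by rw [← hcard]; exact pow_card_eq_one'
  have hF := (lps_central hm hpow).powFiltration hp hpow
  have hle : subgroupPow (⊤ : Subgroup G) p ≤ lowerPSeries p G 1 := le_sup_left
  intro x hx y hy
  induction hx, hy using Subgroup.closure_induction₂ with
  | mem x y hx hy =>
    have h := hF.commTors_all hp hm 0 0 y (hle hy.1) x (by simpa using hy.2) (by simpa using hx.2)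
    rw [pow_zero, pow_one, commutatorElement_eq_one_iff_mul_comm] at h
    exact h
  | one_left => simp
  | one_right => simp
  | mul_left x y z _ _ _ h1 h2 => exact (Commute.mul_left h1 h2).eq
  | mul_right x y z _ _ _ h1 h2 => exact (Commute.mul_right h1 h2).eq
  | inv_left x y _ _ h => exact (Commute.inv_left h).eq
  | inv_right x y _ _ h => exact (Commute.inv_right h).eq
end

section
/- Let p be a prime and G a finite powerful p-group. Then for all i, j ≥ 0 and k ≥ 1, (Ω_i(G^{p^k}))^{p^j} ≤ Ω_{i-j}(G^{p^{k+j}}), where i - j is interpreted as 0 when j ≥ i (so that the right-hand side is trivial in that case). -/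
universe u

/-! ### Power filtrations -/

/-- An abstraction of the chain `G ≥ G^p ≥ G^{p²} ≥ ⋯` of a powerful group: `P 0` acts on `P a`
by conjugation trivially modulo `P (a + ε)`, and the `p`-th power map sends `P a` onto
`P (a + 1)`.  The bottom layer `P 0` is not required to be normal in the ambient group, so that
the notion passes to the shifted chain and to `restrictChain` below. -/
structure PowerFiltration {G : Type u} [Group G] (p ε : ℕ) (P : ℕ → Subgroup G) : Prop where
  anti : ∀ a, P (a + 1) ≤ P a
  normal : ∀ a, (P (a + 1)).Normal
  comm : ∀ a x y, x ∈ P a → y ∈ P 0 → x⁻¹ * (y⁻¹ * x * y) ∈ P (a + ε)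
  pow : ∀ a x, x ∈ P a → x ^ p ∈ P (a + 1)
  root : ∀ a x, x ∈ P (a + 1) → ∃ y ∈ P a, y ^ p = x

/-- The elements of exponent `p` in `H`, as a subgroup when they are closed under products. -/
def torsionSubgroup {G : Type u} [Group G] (p : ℕ) (H : Subgroup G)
    (hmul : ∀ x y, x ∈ H → y ∈ H → x ^ p = 1 → y ^ p = 1 → (x * y) ^ p = 1) : Subgroup G where
  carrier := {x | x ∈ H ∧ x ^ p = 1}
  mul_mem' := fun hx hy => ⟨H.mul_mem hx.1 hy.1, hmul _ _ hx.1 hy.1 hx.2 hy.2⟩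
  one_mem' := ⟨H.one_mem, one_pow p⟩
  inv_mem' := fun hx => ⟨H.inv_mem hx.1, by rw [inv_pow, hx.2, inv_one]⟩

theorem torsionSubgroup_normal {G : Type u} [Group G] (p : ℕ) (H : Subgroup G) (hH : H.Normal)
    (hmul : ∀ x y, x ∈ H → y ∈ H → x ^ p = 1 → y ^ p = 1 → (x * y) ^ p = 1) :
    (torsionSubgroup p H hmul).Normal := by
  constructor
  rintro x ⟨hx, hx'⟩ g
  exact ⟨hH.conj_mem x hx g, by rw [conj_pow, hx']; simp⟩

namespace PowerFiltration

variable {G : Type u} [Group G] {p ε : ℕ} {P : ℕ → Subgroup G}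

theorem le_of_le (h : PowerFiltration p ε P) {a b : ℕ} (hab : a ≤ b) : P b ≤ P a :=
  antitone_nat_of_succ_le h.anti hab

theorem pow_pow (h : PowerFiltration p ε P) (a j : ℕ) (x : G) (hx : x ∈ P a) :
    x ^ p ^ j ∈ P (a + j) := by
  induction j with
  | zero => simpa using hx
  | succ j ih =>
    rw [pow_succ, pow_mul]
    exact h.pow _ _ ih

theorem shift (h : PowerFiltration p ε P) : PowerFiltration p ε (fun a => P (a + 1)) where
  anti a := h.anti (a + 1)
  normal a := h.normal (a + 1)
  comm a x y hx hy := by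
    have := h.comm (a + 1) x y hx (h.anti 0 hy)
    rwa [show a + ε + 1 = a + 1 + ε by ring]
  pow a x hx := h.pow _ x hx
  root a x hx := h.root _ x hx

theorem map (h : PowerFiltration p ε P) (N : Subgroup G) [N.Normal] :
    PowerFiltration p ε (fun a => (P a).map (QuotientGroup.mk' N)) where
  anti a := Subgroup.map_mono (h.anti a)
  normal a := (h.normal a).map _ (QuotientGroup.mk'_surjective N)
  comm := by
    rintro a _ _ ⟨x, hx, rfl⟩ ⟨y, hy, rfl⟩
    exact ⟨_, h.comm a x y hx hy, by simp⟩
  pow := by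
    rintro a _ ⟨x, hx, rfl⟩
    exact ⟨_, h.pow a x hx, by simp⟩
  root := by
    rintro a _ ⟨x, hx, rfl⟩
    obtain ⟨y, hy, rfl⟩ := h.root a x hx
    exact ⟨_, ⟨y, hy, rfl⟩, by simp⟩

end PowerFiltration

/-! ### Elementary identities -/

section identities

variable {G : Type u} [Group G]

/-- The power formula in nilpotency class two. -/
theorem mul_pow_class_two_s2 (a b e : G) (h : b * a = a * b * e) (ha : Commute e a)
    (hb : Commute e b) (n : ℕ) : (a * b) ^ n = a ^ n * b ^ n * e ^ n.choose 2 := by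
  have key : ∀ n : ℕ, b ^ n * a = a * b ^ n * e ^ n := by
    intro n
    induction n with
    | zero => simp
    | succ n ih =>
      calc b ^ (n + 1) * a = b ^ n * (b * a) := by rw [pow_succ, mul_assoc]
        _ = (b ^ n * a) * b * e := by rw [h]; group
        _ = a * b ^ n * (e ^ n * b) * e := by rw [ih]; group
        _ = a * b ^ n * (b * e ^ n) * e := by rw [(hb.pow_left n).eq]
        _ = a * b ^ (n + 1) * e ^ (n + 1) := by rw [pow_succ, pow_succ]; group
  induction n with
  | zero => simp
  | succ n ih =>
    rw [Nat.choose_succ_succ' n 1, Nat.choose_one_right, pow_succ, ih]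
    have hab : Commute (e ^ n.choose 2) (a * b) := (ha.mul_right hb).pow_left _
    calc a ^ n * b ^ n * e ^ n.choose 2 * (a * b)
        = a ^ n * (b ^ n * a) * b * e ^ n.choose 2 := by
          rw [mul_assoc, hab.eq]; group
      _ = a ^ n * a * b ^ n * (e ^ n * b) * e ^ n.choose 2 := by rw [key]; group
      _ = a ^ n * a * b ^ n * (b * e ^ n) * e ^ n.choose 2 := by rw [(hb.pow_left n).eq]
      _ = a ^ (n + 1) * b ^ (n + 1) * e ^ (n + (n.choose 2)) := by
          rw [pow_succ, pow_succ, pow_add]; group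

theorem commute_of_conj {w v : G} (h : v⁻¹ * w * v = w) : Commute w v := by
  have : w * v = v * w := by
    calc w * v = v * (v⁻¹ * w * v) := by group
      _ = v * w := by rw [h]
  exact this

theorem conj_of_commute {w v : G} (h : Commute w v) : v⁻¹ * w * v = w := by
  rw [mul_assoc, h.eq]; group

theorem comm_mem_of_commute_mk {N : Subgroup G} [N.Normal] {x y : G}
    (h : Commute (QuotientGroup.mk' N x) (QuotientGroup.mk' N y)) :
    x⁻¹ * (y⁻¹ * x * y) ∈ N := by
  rw [← QuotientGroup.eq_one_iff]
  have := conj_of_commute h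
  change (QuotientGroup.mk' N) (x⁻¹ * (y⁻¹ * x * y)) = 1
  rw [map_mul, map_mul, map_mul, map_inv, map_inv, this, inv_mul_cancel]

theorem mk_pow_eq_one {N : Subgroup G} [N.Normal] {x : G} {n : ℕ} (h : x ^ n ∈ N) :
    (QuotientGroup.mk' N x) ^ n = 1 := by
  rw [← map_pow]
  exact (QuotientGroup.eq_one_iff _).2 h

theorem comm_eq_conj_mul (q v : G) : q⁻¹ * (v⁻¹ * q * v) = (q⁻¹ * v * q)⁻¹ * v := by group

/-- If `c` and `[c, q]` have exponent `p` and `[c, q]` is central in `⟨q, c⟩`, then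
`(q c)^p = q^p`; applied to `c = [q, v]` it shows that `v` centralises `q^p`. -/
theorem commute_pow_odd {p : ℕ} (hp : p.Prime) (h2 : p ≠ 2) (q v c e : G)
    (hc : c = q⁻¹ * (v⁻¹ * q * v)) (he : e = c⁻¹ * (q⁻¹ * c * q)) (hcp : c ^ p = 1)
    (hep : e ^ p = 1) (h1 : Commute e q) (h3 : Commute e c) : Commute (q ^ p) v := by
  apply commute_of_conj
  have h4 : v⁻¹ * q * v = q * c := by rw [hc]; group
  have h5 : v⁻¹ * q ^ p * v = (v⁻¹ * q * v) ^ p := by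
    have := conj_pow (i := p) (a := v⁻¹) (b := q)
    simpa using this.symm
  obtain ⟨k, hk⟩ := hp.dvd_choose_self (k := 2) (by norm_num)
    (lt_of_le_of_ne hp.two_le (Ne.symm h2))
  rw [h5, h4, mul_pow_class_two_s2 q c e (by rw [he]; group) h1 h3, hcp, hk, pow_mul, hep]
  simp

/-- If `c = [s, v]` is an involution commuting with `s`, then `v` centralises `s²`. -/
theorem commute_sq (s v c : G) (hc : c = s⁻¹ * (v⁻¹ * s * v)) (hc2 : c ^ 2 = 1)
    (h1 : Commute c s) : Commute (s ^ 2) v := by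
  apply commute_of_conj
  have h4 : v⁻¹ * s * v = s * c := by rw [hc]; group
  have h5 : v⁻¹ * s ^ 2 * v = (v⁻¹ * s * v) ^ 2 := by
    have := conj_pow (i := 2) (a := v⁻¹) (b := s)
    simpa using this.symm
  rw [h5, h4, h1.symm.mul_pow, hc2, mul_one]

/-- If `v²` centralises `s`, then `v` inverts `[s, v]`. -/
theorem conj_comm_eq_inv (s v : G) (h : Commute s (v ^ 2)) :
    v⁻¹ * (s⁻¹ * (v⁻¹ * s * v)) * v = (s⁻¹ * (v⁻¹ * s * v))⁻¹ := by
  have := conj_of_commute h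
  calc v⁻¹ * (s⁻¹ * (v⁻¹ * s * v)) * v
      = v⁻¹ * s⁻¹ * v * ((v ^ 2)⁻¹ * s * v ^ 2) := by simp [pow_two, mul_assoc]
    _ = (s⁻¹ * (v⁻¹ * s * v))⁻¹ := by rw [this]; group

end identities

/-! ### Odd primes -/

/-- The chain `⟨v⟩ P₁ ≥ P₂ ≥ P₃ ≥ ⋯`, one step shorter than `P`. -/
def restrictChain {G : Type u} [Group G] (P : ℕ → Subgroup G) (v : G) : ℕ → Subgroup G
  | 0 => Subgroup.zpowers v ⊔ P 1
  | a + 1 => P (a + 2)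

theorem restrictChain_filtration {G : Type u} [Group G] {p : ℕ} {P : ℕ → Subgroup G}
    (h : PowerFiltration p 1 P) {v : G} (hv : v ∈ P 0) (hvp : v ^ p = 1) :
    PowerFiltration p 1 (restrictChain P v) := by
  have hle : restrictChain P v 0 ≤ P 0 :=
    sup_le (by rwa [Subgroup.zpowers_le]) (h.anti 0)
  have hn1 := h.normal 0
  have hn2 := h.normal 1
  have hcen : ∀ z ∈ P 1, ∀ y ∈ P 0,
      Commute (QuotientGroup.mk' (P 2) z) (QuotientGroup.mk' (P 2) y) := by
    intro z hz y hy
    apply commute_of_conj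
    have := (QuotientGroup.eq_one_iff (N := P 2) _).2 (h.comm 1 z y hz hy)
    change QuotientGroup.mk' (P 2) (z⁻¹ * (y⁻¹ * z * y)) = 1 at this
    rw [map_mul, map_inv, inv_mul_eq_one] at this
    simpa using this.symm
  have hform : ∀ x ∈ restrictChain P v 0, ∃ (i : ℤ) (z : G), z ∈ P 1 ∧ v ^ i * z = x := by
    intro x hx
    obtain ⟨y, ⟨i, rfl⟩, z, hz, rfl⟩ := (Subgroup.mem_sup_of_normal_right).1 hx
    exact ⟨i, z, hz, rfl⟩
  constructor
  · rintro (_ | a)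
    · exact le_trans (h.anti 1) le_sup_right
    · exact h.anti (a + 2)
  · intro a
    exact h.normal (a + 1)
  · rintro (_ | a) x y hx hy
    · obtain ⟨i, z, hz, rfl⟩ := hform x hx
      obtain ⟨j, t, ht, rfl⟩ := hform y hy
      apply comm_mem_of_commute_mk (N := P 2)
      rw [map_mul, map_mul]
      refine Commute.mul_left (Commute.mul_right ?_ ?_) (Commute.mul_right ?_ ?_)
      · rw [map_zpow, map_zpow]
        exact ((Commute.refl _).zpow_left i).zpow_right j
      · exact (hcen t ht _ ((P 0).zpow_mem hv i)).symm
      · exact hcen z hz _ ((P 0).zpow_mem hv j)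
      · exact hcen z hz _ (h.anti 0 ht)
    · exact h.comm (a + 2) x y hx (hle hy)
  · rintro (_ | a) x hx
    · obtain ⟨i, z, hz, rfl⟩ := hform x hx
      change _ ∈ P 2
      rw [← QuotientGroup.eq_one_iff]
      change QuotientGroup.mk' (P 2) ((v ^ i * z) ^ p) = 1
      rw [map_pow, map_mul, (hcen z hz _ ((P 0).zpow_mem hv i)).symm.mul_pow, ← map_pow,
        ← map_pow, ← zpow_natCast, zpow_comm, zpow_natCast, hvp, one_zpow, map_one, one_mul]
      exact (QuotientGroup.eq_one_iff _).2 (h.pow 1 z hz)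
    · exact h.pow (a + 2) x hx
  · rintro (_ | a) x hx
    · obtain ⟨y, hy, rfl⟩ := h.root 1 x hx
      exact ⟨y, (le_sup_right : P 1 ≤ _) hy, rfl⟩
    · exact h.root (a + 2) x hx

/-- For odd `p`, by induction on the length of the filtration: elements of order dividing
`p` in `P₁` commute with those in `P₀`; elements of order dividing `p` in `P₂` commute with elements
of order dividing `p²` in `P₀`; and the elements of order dividing `p` in `P₀` are closed under
products. -/
theorem odd_claims (p : ℕ) (hp : p.Prime) (h2 : p ≠ 2) (n : ℕ) :
    ∀ (G : Type u) [Group G] (P : ℕ → Subgroup G), PowerFiltration p 1 P → P n = ⊥ →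
      (∀ w v, w ∈ P 1 → v ∈ P 0 → w ^ p = 1 → v ^ p = 1 → Commute w v) ∧
      (∀ w v, w ∈ P 2 → v ∈ P 0 → w ^ p = 1 → v ^ (p ^ 2) = 1 → Commute w v) ∧
      (∀ x y, x ∈ P 0 → y ∈ P 0 → x ^ p = 1 → y ^ p = 1 → (x * y) ^ p = 1) := by
  induction n with
  | zero =>
    intro G _ P h hn
    have ht : ∀ a x, x ∈ P a → x = 1 := fun a x hx => by
      simpa [hn] using h.le_of_le (Nat.zero_le a) hx
    refine ⟨fun w v hw _ _ _ => ?_, fun w v hw _ _ _ => ?_, fun x y hx _ _ hy => ?_⟩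
    · rw [ht _ w hw]; exact Commute.one_left v
    · rw [ht _ w hw]; exact Commute.one_left v
    · rw [ht _ x hx, one_mul, hy]
  | succ n ih =>
    intro G _ P h hn
    by_cases hn0 : n = 0
    · subst hn0
      have ht : ∀ a x, x ∈ P (a + 1) → x = 1 := fun a x hx => by
        simpa [hn] using h.le_of_le (Nat.le_add_left 1 a) hx
      refine ⟨fun w v hw _ _ _ => ?_, fun w v hw _ _ _ => ?_, fun x y hx hy hx' hy' => ?_⟩
      · rw [ht _ w hw]; exact Commute.one_left v
      · rw [ht _ w hw]; exact Commute.one_left v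
      · have : Commute x y := by
          apply commute_of_conj
          have := ht 0 _ (h.comm 0 x y hx hy)
          rw [inv_mul_eq_one] at this
          exact this.symm
        rw [this.mul_pow, hx', hy', one_mul]
    obtain ⟨m, rfl⟩ := Nat.exists_eq_succ_of_ne_zero hn0
    obtain ⟨-, hB2s, hDs⟩ := ih G _ h.shift hn
    set N := torsionSubgroup p (P 1) hDs with hN
    have hNn : N.Normal := torsionSubgroup_normal p _ (h.normal 0) hDs
    have hNP : P (m + 1) ≤ N := fun x hx =>
      ⟨h.le_of_le (by omega) hx, by simpa [hn] using h.pow _ x hx⟩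
    have hbar := ih (G ⧸ N) _ (h.map N) (by
      rw [Subgroup.map_eq_bot_iff, QuotientGroup.ker_mk']; exact hNP)
    -- `[q, v]` is the product of `v` and a conjugate of its inverse; both lie in the top layer of
    -- the shorter chain `⟨v⟩ P₁ ≥ P₂ ≥ ⋯`, to which the induction hypothesis applies
    have hcp : ∀ q v, q ∈ P 0 → v ∈ P 0 → v ^ p = 1 → (q⁻¹ * (v⁻¹ * q * v)) ^ p = 1 := by
      intro q v hq hv hvp
      have hD := (ih G _ (restrictChain_filtration h hv hvp) hn).2.2
      have hv0 : v ∈ restrictChain P v 0 :=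
        (le_sup_left : Subgroup.zpowers v ≤ _) (Subgroup.mem_zpowers v)
      have hvq : q⁻¹ * v * q ∈ restrictChain P v 0 := by
        have h1 : v⁻¹ * (q⁻¹ * v * q) ∈ restrictChain P v 0 :=
          (le_sup_right : P 1 ≤ _) (h.comm 0 v q hv hq)
        have := Subgroup.mul_mem _ hv0 h1
        rwa [mul_inv_cancel_left] at this
      rw [comm_eq_conj_mul]
      refine hD _ _ (Subgroup.inv_mem _ hvq) hv0 ?_ hvp
      have := conj_pow (i := p) (a := q⁻¹) (b := v)
      rw [inv_inv] at this
      rw [inv_pow, this, hvp]; simp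
    have hN1 : ∀ c q, c ∈ N → q⁻¹ * c * q ∈ N := fun c q hc => by
      simpa using hNn.conj_mem c hc q⁻¹
    have hB2 : ∀ w v, w ∈ P 2 → v ∈ P 0 → w ^ p = 1 → v ^ (p ^ 2) = 1 → Commute w v := by
      intro w v hw hv hwp hvp
      obtain ⟨q, hq, rfl⟩ := h.root 1 w hw
      have hqN : q ^ p ∈ N := ⟨h.anti 1 hw, hwp⟩
      have hvN : v ^ p ∈ N := ⟨h.pow 0 v hv, by rw [← pow_mul, ← pow_two, hvp]⟩
      have hcN := comm_mem_of_commute_mk (hbar.1 _ _ (Subgroup.mem_map_of_mem _ hq)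
        (Subgroup.mem_map_of_mem _ hv) (mk_pow_eq_one hqN) (mk_pow_eq_one hvN))
      have hc2 := h.comm 1 q v hq hv
      have heN := N.mul_mem (N.inv_mem hcN) (hN1 _ q hcN)
      have he3 := h.comm 2 _ q hc2 (h.anti 0 hq)
      exact commute_pow_odd hp h2 q v _ _ rfl rfl hcN.2 heN.2
        (hB2s _ _ he3 hq heN.2 (by rw [pow_two, pow_mul, hwp]))
        (hB2s _ _ he3 hcN.1 heN.2 (by rw [pow_two, pow_mul, hcN.2, one_pow]))
    have hB1 : ∀ w v, w ∈ P 1 → v ∈ P 0 → w ^ p = 1 → v ^ p = 1 → Commute w v := by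
      intro w v hw hv hwp hvp
      obtain ⟨q, hq, rfl⟩ := h.root 0 w hw
      have hc1 := h.comm 0 q v hq hv
      have hcN : _ ∈ N := ⟨hc1, hcp q v hq hv hvp⟩
      have heN := N.mul_mem (N.inv_mem hcN) (hN1 _ q hcN)
      have he2 := h.comm 1 _ q hc1 hq
      exact commute_pow_odd hp h2 q v _ _ rfl rfl hcN.2 heN.2
        (hB2 _ _ he2 hq heN.2 (by rw [pow_two, pow_mul, hwp]))
        (hB2 _ _ he2 (h.anti 0 hc1) heN.2 (by rw [pow_two, pow_mul, hcN.2, one_pow]))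
    refine ⟨hB1, hB2, fun x y hx hy hxp hyp => ?_⟩
    have hc1 := h.comm 0 y x hy hx
    have hc := hcp y x hy hx hxp
    obtain ⟨k, hk⟩ := hp.dvd_choose_self (k := 2) (by norm_num)
      (lt_of_le_of_ne hp.two_le (Ne.symm h2))
    rw [mul_pow_class_two_s2 x y (y⁻¹ * (x⁻¹ * y * x)) (by group) (hB1 _ _ hc1 hx hc hxp)
      (hB1 _ _ hc1 hy hc hyp), hxp, hyp, hk, pow_mul, hc]
    simp

/-! ### The prime two -/

/-- For `p = 2`, by induction on the length of the filtration: involutions of `P₁` commute; for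
`i ≥ 2`, an involution in `P i` commutes with the elements of order dividing `2 ^ i` in `P₀`; and an
element of `P₃` inverted by an element of order dividing four in `P₀` has order at most two. -/
theorem two_claims (n : ℕ) :
    ∀ (G : Type u) [Group G] (P : ℕ → Subgroup G), PowerFiltration 2 2 P → P n = ⊥ →
      (∀ x y, x ∈ P 1 → y ∈ P 1 → x ^ 2 = 1 → y ^ 2 = 1 → Commute x y) ∧
      (∀ i w v, 2 ≤ i → w ∈ P i → v ∈ P 0 → w ^ 2 = 1 → v ^ (2 ^ i) = 1 → Commute w v) ∧
      (∀ v c, v ∈ P 0 → c ∈ P 3 → v ^ 4 = 1 → v⁻¹ * c * v = c⁻¹ → c ^ 2 = 1) := by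
  induction n with
  | zero =>
    intro G _ P h hn
    have ht : ∀ a x, x ∈ P a → x = 1 := fun a x hx => by
      simpa [hn] using h.le_of_le (Nat.zero_le a) hx
    refine ⟨fun w v hw _ _ _ => ?_, fun i w v _ hw _ _ _ => ?_, fun v c _ hc _ _ => ?_⟩
    · rw [ht _ w hw]; exact Commute.one_left v
    · rw [ht _ w hw]; exact Commute.one_left v
    · rw [ht _ c hc, one_pow]
  | succ n ih =>
    intro G _ P h hn
    by_cases hn2 : n < 2
    · have ht : ∀ a x, 2 ≤ a → x ∈ P a → x = 1 := fun a x ha hx => by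
        simpa [hn] using h.le_of_le (show n + 1 ≤ a by omega) hx
      refine ⟨fun x y hx hy _ _ => ?_, fun i w v hi hw _ _ _ => ?_, fun v c _ hc _ _ => ?_⟩
      · apply commute_of_conj
        have := ht _ _ (by norm_num) (h.comm 1 x y hx (h.anti 0 hy))
        rw [inv_mul_eq_one] at this
        exact this.symm
      · rw [ht _ w hi hw]; exact Commute.one_left v
      · rw [ht _ c (by norm_num) hc, one_pow]
    obtain ⟨m, rfl⟩ : ∃ m, n = m + 2 := ⟨n - 2, by omega⟩
    obtain ⟨hE1s, hBs, -⟩ := ih G _ h.shift hn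
    have hmul : ∀ x y, x ∈ P 2 → y ∈ P 2 → x ^ 2 = 1 → y ^ 2 = 1 → (x * y) ^ 2 = 1 := by
      intro x y hx hy hx2 hy2
      rw [(hE1s x y hx hy hx2 hy2).mul_pow, hx2, hy2, one_mul]
    set M := torsionSubgroup 2 (P 2) hmul with hM
    have hMn : M.Normal := torsionSubgroup_normal 2 _ (h.normal 1) hmul
    have hMP : P (m + 2) ≤ M := fun x hx =>
      ⟨h.le_of_le (by omega) hx, by simpa [hn] using h.pow _ x hx⟩
    obtain ⟨-, hBbar, hIbar⟩ := ih (G ⧸ M) _ (h.map M) (by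
      rw [Subgroup.map_eq_bot_iff, QuotientGroup.ker_mk']; exact hMP)
    have hB3 : ∀ i w v, 3 ≤ i → w ∈ P i → v ∈ P 0 → w ^ 2 = 1 → v ^ (2 ^ i) = 1 →
        Commute w v := by
      intro i w v hi hw hv hw2 hvi
      obtain ⟨j, rfl⟩ : ∃ j, i = j + 1 := ⟨i - 1, by omega⟩
      obtain ⟨r, hr, rfl⟩ := h.root j w hw
      have hrM : r ^ 2 ∈ M := ⟨h.le_of_le (by omega) hw, hw2⟩
      have hvM : v ^ (2 ^ j) ∈ M := by
        refine ⟨h.le_of_le (by omega) (h.pow_pow 0 j v hv), ?_⟩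
        rw [← pow_mul, ← pow_succ, hvi]
      have hd := comm_mem_of_commute_mk (hBbar j _ _ (by omega) (Subgroup.mem_map_of_mem _ hr)
        (Subgroup.mem_map_of_mem _ hv) (mk_pow_eq_one hrM) (mk_pow_eq_one hvM))
      refine commute_sq r v _ rfl hd.2 (hBs 2 _ _ le_rfl ?_ (h.le_of_le (by omega) hr) hd.2 ?_)
      · exact h.le_of_le (by omega) (h.comm j r v hr hv)
      · rw [show 2 ^ 2 = 2 * 2 by norm_num, pow_mul, hw2]
    -- descending induction on the depth `b` of `c`: a square root `s` of `c` has `[s, v]` deeper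
    have hI : ∀ v, v ∈ P 0 → v ^ 4 = 1 → (∀ s, s ∈ P 2 → s ^ 8 = 1 → Commute s (v ^ 2)) →
        ∀ k b c, m + 3 ≤ b + k → 3 ≤ b → c ∈ P b → v⁻¹ * c * v = c⁻¹ → c ^ 2 = 1 := by
      intro v hv hv4 hsv k
      induction k with
      | zero =>
        intro b c hb _ hc _
        have : c = 1 := by simpa [hn] using h.le_of_le (show m + 2 + 1 ≤ b by omega) hc
        rw [this, one_pow]
      | succ k ihk =>
        intro b c hb hb3 hc hcv
        have hc2M : c ^ 2 ∈ M := by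
          have := hIbar _ _ (Subgroup.mem_map_of_mem (QuotientGroup.mk' M) hv)
            (Subgroup.mem_map_of_mem (QuotientGroup.mk' M) (h.le_of_le hb3 hc))
            (by rw [← map_pow, hv4, map_one])
            (by rw [← map_inv, ← map_mul, ← map_mul, hcv, map_inv])
          rw [← map_pow] at this
          exact (QuotientGroup.eq_one_iff _).1 this
        obtain ⟨a, rfl⟩ : ∃ a, b = a + 1 := ⟨b - 1, by omega⟩
        obtain ⟨s, hs, rfl⟩ := h.root a c hc
        have hs8 : s ^ 8 = 1 := by
          have := hc2M.2
          rwa [← pow_mul, ← pow_mul] at this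
        have hg := h.comm a s v hs hv
        have hg2 := ihk (a + 2) _ (by omega) (by omega) hg
          (conj_comm_eq_inv s v (hsv s (h.le_of_le (by omega) hs) hs8))
        have hcomm := commute_sq s v _ rfl hg2
          (hB3 3 _ _ le_rfl (h.le_of_le (by omega) hg) (h.le_of_le (by omega) hs) hg2 hs8)
        rw [conj_of_commute hcomm] at hcv
        calc (s ^ 2) ^ 2 = s ^ 2 * s ^ 2 := pow_two _
          _ = (s ^ 2)⁻¹ * s ^ 2 := by rw [← hcv]
          _ = 1 := inv_mul_cancel _
    have hI1 : ∀ v c, v ∈ P 0 → c ∈ P 3 → v ^ 2 = 1 → v⁻¹ * c * v = c⁻¹ → c ^ 2 = 1 := by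
      intro v c hv hc hv2 hcv
      refine hI v hv (by rw [show 4 = 2 * 2 by norm_num, pow_mul, hv2, one_pow]) ?_ m 3 c
        (by omega) le_rfl hc hcv
      intro s _ _
      rw [hv2]; exact Commute.one_right s
    -- used with `i = 3` for `x ∈ P₀` and with `i = 4` for `x ∈ P₁`, where `[x, y] ∈ P i` holds
    have hY : ∀ i x y, 3 ≤ i → x ∈ P 0 → y ∈ P 1 → y ^ 2 = 1 → x ^ (2 ^ i) = 1 →
        x⁻¹ * (y⁻¹ * x * y) ∈ P i → Commute (x ^ 2) y := by
      intro i x y hi hx hy hy2 hxi hmem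
      have hc2 := hI1 y _ (h.anti 0 hy) (h.le_of_le hi hmem) hy2
        (conj_comm_eq_inv x y (by rw [hy2]; exact Commute.one_right x))
      exact commute_sq x y _ rfl hc2 (hB3 i _ _ hi hmem hx hc2 hxi)
    have hcomm01 : ∀ x y, x ∈ P 0 → y ∈ P 1 → x⁻¹ * (y⁻¹ * x * y) ∈ P 3 := by
      intro x y hx hy
      have := (P 3).inv_mem (h.comm 1 y x hy hx)
      convert this using 1
      group
    have hcomm11 : ∀ x y, x ∈ P 1 → y ∈ P 1 → x⁻¹ * (y⁻¹ * x * y) ∈ P 4 := by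
      intro x y hx hy
      obtain ⟨s, hs, rfl⟩ := h.root 0 x hx
      have hg := hcomm01 s y hs hy
      have h1 : (s⁻¹ * (y⁻¹ * s * y)) ^ 2 ∈ P 4 := h.pow 3 _ hg
      have h2 := h.le_of_le (show 4 ≤ 3 + 2 by norm_num) (h.comm 3 _ s hg hs)
      set g := s⁻¹ * (y⁻¹ * s * y) with hgdef
      have h3 : g * (g⁻¹ * (s⁻¹ * g * s)) * g⁻¹ * g ^ 2 ∈ P 4 :=
        (P 4).mul_mem ((h.normal 3).conj_mem _ h2 g) h1
      convert h3 using 1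
      rw [hgdef]
      simp [pow_two, mul_assoc]
    have hI2 : ∀ v c, v ∈ P 0 → c ∈ P 3 → v ^ 4 = 1 → v⁻¹ * c * v = c⁻¹ → c ^ 2 = 1 := by
      intro v c hv hc hv4 hcv
      refine hI v hv hv4 ?_ m 3 c (by omega) le_rfl hc hcv
      intro s hs hs8
      obtain ⟨x, hx, rfl⟩ := h.root 1 s hs
      have hv2 : v ^ 2 ∈ P 1 := h.pow 0 v hv
      exact hY 4 x _ (by norm_num) (h.anti 0 hx) hv2 (by rw [← pow_mul]; exact hv4)
        (by rw [← pow_mul] at hs8; exact hs8) (hcomm11 x _ hx hv2)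
    have hB : ∀ i w v, 2 ≤ i → w ∈ P i → v ∈ P 0 → w ^ 2 = 1 → v ^ (2 ^ i) = 1 →
        Commute w v := by
      intro i w v hi hw hv hw2 hvi
      rcases Nat.lt_or_ge i 3 with hi3 | hi3
      · obtain rfl : i = 2 := by omega
        obtain ⟨r, hr, rfl⟩ := h.root 1 w hw
        have hr4 : r ^ (2 ^ 2) = 1 := by rw [show 2 ^ 2 = 2 * 2 by norm_num, pow_mul, hw2]
        obtain ⟨x, hx, rfl⟩ := h.root 0 r hr
        have hv2 : v ^ 2 ∈ P 1 := h.pow 0 v hv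
        have hrv := hY 3 x _ le_rfl hx hv2 (by rw [← pow_mul]; exact hvi)
          (by rw [← pow_mul] at hr4; exact hr4) (hcomm01 x _ hx hv2)
        have hd := h.comm 1 _ v hr hv
        have hd2 := hI2 v _ hv hd hvi (conj_comm_eq_inv _ v hrv)
        exact commute_sq _ v _ rfl hd2 (hBs 2 _ _ le_rfl hd hr hd2 hr4)
      · exact hB3 i w v hi3 hw hv hw2 hvi
    refine ⟨fun x y hx hy hx2 hy2 => ?_, hB, hI2⟩
    obtain ⟨q, hq, rfl⟩ := h.root 0 x hx
    have hc := hcomm01 q y hq hy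
    have hc2 := hI1 y _ (h.anti 0 hy) hc hy2
      (conj_comm_eq_inv q y (by rw [hy2]; exact Commute.one_right q))
    exact commute_sq q y _ rfl hc2 (hB 2 _ _ le_rfl (h.anti 2 hc) hq hc2
      (by rw [show 2 ^ 2 = 2 * 2 by norm_num, pow_mul, hx2]))

/-! ### Exponents of the omega subgroups -/

/-- Both parities: the elements of order dividing `p ^ i` in `P₁` are closed under products.  The
case `i = 1` carries the content; the general case follows by passing to the quotient by the
elements of order dividing `p` in `P₁`. -/
theorem mul_pow_eq_one (p : ℕ) (hp : p.Prime) (n i : ℕ) :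
    ∀ (G : Type u) [Group G] (P : ℕ → Subgroup G),
      PowerFiltration p (if p = 2 then 2 else 1) P → P n = ⊥ →
      ∀ x y, x ∈ P 1 → y ∈ P 1 → x ^ p ^ i = 1 → y ^ p ^ i = 1 → (x * y) ^ p ^ i = 1 := by
  induction i with
  | zero =>
    intro G _ P _ _ x y _ _ hx hy
    simp only [pow_zero, pow_one] at *
    rw [hx, hy, one_mul]
  | succ i ih =>
    intro G _ P h hn x y hx hy hxp hyp
    have hcomm : ∀ x y, x ∈ P 1 → y ∈ P 1 → x ^ p = 1 → y ^ p = 1 → Commute x y := by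
      by_cases h2 : p = 2
      · subst h2
        exact (two_claims n G P h hn).1
      · rw [if_neg h2] at h
        intro x y hx hy
        exact (odd_claims p hp h2 n G P h hn).1 x y hx (h.anti 0 hy)
    have hmul : ∀ x y, x ∈ P 1 → y ∈ P 1 → x ^ p = 1 → y ^ p = 1 → (x * y) ^ p = 1 := by
      intro x y hx hy hx1 hy1
      rw [(hcomm x y hx hy hx1 hy1).mul_pow, hx1, hy1, one_mul]
    set N := torsionSubgroup p (P 1) hmul with hN
    have hNn : N.Normal := torsionSubgroup_normal p _ (h.normal 0) hmul
    have hmem : ∀ x, x ∈ P 1 → x ^ p ^ (i + 1) = 1 → x ^ p ^ i ∈ N := fun x hx hxp =>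
      ⟨(P 1).pow_mem hx _, by rw [← pow_mul, ← pow_succ, hxp]⟩
    have := ih (G ⧸ N) _ (h.map N) (by rw [hn, Subgroup.map_bot]) _ _
      (Subgroup.mem_map_of_mem (QuotientGroup.mk' N) hx)
      (Subgroup.mem_map_of_mem (QuotientGroup.mk' N) hy)
      (mk_pow_eq_one (hmem x hx hxp)) (mk_pow_eq_one (hmem y hy hyp))
    rw [← map_mul, ← map_pow] at this
    have hxy : (x * y) ^ p ^ i ∈ N := (QuotientGroup.eq_one_iff _).1 this
    rw [pow_succ, pow_mul]
    exact hxy.2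

/-! ### The power filtration of a powerful group -/

/-- The iterated power subgroups `R 0 = G`, `R (a + 1) = (R a)^p`. -/
def powerChain (G : Type u) [Group G] (p : ℕ) : ℕ → Subgroup G
  | 0 => ⊤
  | a + 1 => subgroupPow (powerChain G p a) p

section powerChain

variable {G : Type u} [Group G]

theorem powerChain_pow (p a : ℕ) {x : G} (hx : x ∈ powerChain G p a) :
    x ^ p ∈ powerChain G p (a + 1) :=
  Subgroup.subset_closure ⟨x, hx, rfl⟩

theorem powerChain_anti (p a : ℕ) : powerChain G p (a + 1) ≤ powerChain G p a := by
  refine (Subgroup.closure_le _).2 ?_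
  rintro _ ⟨x, hx, rfl⟩
  exact Subgroup.pow_mem _ hx p

theorem powerChain_le {p a b : ℕ} (hab : a ≤ b) : powerChain G p b ≤ powerChain G p a :=
  antitone_nat_of_succ_le (powerChain_anti p) hab

instance powerChain_normal (p a : ℕ) : (powerChain G p a).Normal := by
  induction a with
  | zero => exact inferInstanceAs (⊤ : Subgroup G).Normal
  | succ a ih =>
    refine ⟨fun x hx g => ?_⟩
    have hle : powerChain G p (a + 1) ≤
        (powerChain G p (a + 1)).comap (MulAut.conj g).toMonoidHom := by
      refine (Subgroup.closure_le _).2 ?_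
      rintro _ ⟨y, hy, rfl⟩
      refine Subgroup.subset_closure ⟨g * y * g⁻¹, ih.conj_mem y hy g, ?_⟩
      simp
    exact hle hx

/-- The preimage in `G` of the centre of `G ⧸ T`. -/
def centreMod (T : Subgroup G) [T.Normal] : Subgroup G :=
  (Subgroup.center (G ⧸ T)).comap (QuotientGroup.mk' T)

theorem commute_of_mem_centreMod {T : Subgroup G} [T.Normal] {z : G} (hz : z ∈ centreMod T)
    (g : G ⧸ T) : Commute (QuotientGroup.mk' T z) g :=
  (Subgroup.mem_center_iff.1 hz g).symm

theorem mem_centreMod {T : Subgroup G} [T.Normal] {z : G}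
    (hz : ∀ g : G, Commute (QuotientGroup.mk' T z) (QuotientGroup.mk' T g)) :
    z ∈ centreMod T := by
  refine Subgroup.mem_center_iff.2 fun g => ?_
  obtain ⟨g, rfl⟩ := QuotientGroup.mk'_surjective T g
  exact (hz g).symm

theorem comm_mem_commutator {H : Subgroup G} {x : G} (hx : x ∈ H) (y : G) :
    x⁻¹ * (y⁻¹ * x * y) ∈ ⁅H, (⊤ : Subgroup G)⁆ := by
  have := Subgroup.commutator_mem_commutator (H.inv_mem hx) (Subgroup.mem_top y⁻¹)
  rw [commutatorElement_def] at this
  simpa [mul_assoc] using this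

theorem commutator_le_iff_le_centreMod {H T : Subgroup G} [T.Normal] :
    ⁅H, (⊤ : Subgroup G)⁆ ≤ T ↔ H ≤ centreMod T := by
  constructor
  · intro h x hx
    refine mem_centreMod fun g => commute_of_conj ?_
    have := (QuotientGroup.eq_one_iff (N := T) _).2 (h (comm_mem_commutator hx g))
    change QuotientGroup.mk' T (x⁻¹ * (g⁻¹ * x * g)) = 1 at this
    rw [map_mul, map_inv, inv_mul_eq_one] at this
    simpa using this.symm
  · intro h
    refine Subgroup.commutator_le.2 fun x hx y _ => ?_
    have := comm_mem_of_commute_mk (commute_of_mem_centreMod (h (H.inv_mem hx))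
      (QuotientGroup.mk' T y⁻¹))
    rw [commutatorElement_def]
    simpa [mul_assoc] using this

/-- A Nakayama-type property of nilpotent groups: to prove `A ≤ T` with `T` normal, one may work
modulo `[A, G]`. -/
theorem le_of_le_sup_commutator [Group.IsNilpotent G] {A T : Subgroup G} [T.Normal]
    (h : A ≤ T ⊔ ⁅A, (⊤ : Subgroup G)⁆) : A ≤ T := by
  have key : ∀ k, A ≤ T ⊔ (⊤ : Subgroup G).lowerCentralSeries k := by
    intro k
    induction k with
    | zero => simp
    | succ k ih =>
      refine h.trans (sup_le le_sup_left ?_)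
      rw [commutator_le_iff_le_centreMod]
      refine ih.trans (sup_le ?_ ?_)
      · exact commutator_le_iff_le_centreMod.1 (le_trans (Subgroup.commutator_le_left T ⊤) le_sup_left)
      · exact commutator_le_iff_le_centreMod.1 le_sup_right
  obtain ⟨k, hk⟩ := Subgroup.nilpotent_iff_lowerCentralSeries.1 ‹Group.IsNilpotent G›
  simpa [hk] using key k

theorem mk_eq_one_of_mem {T : Subgroup G} [T.Normal] {x : G} (hx : x ∈ T) :
    QuotientGroup.mk' T x = 1 := (QuotientGroup.eq_one_iff _).2 hx

theorem powerChain_le_of_pow {p a : ℕ} {C : Subgroup G}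
    (h : ∀ x ∈ powerChain G p a, x ^ p ∈ C) : powerChain G p (a + 1) ≤ C := by
  refine (Subgroup.closure_le _).2 ?_
  rintro _ ⟨x, hx, rfl⟩
  exact h x hx

/-- The inductive step for `[R a, G] ≤ R (a + 1)` when `p` is odd: one may assume that
`[R (a + 1), G]` is central, so that the power formula in class two applies. -/
theorem powerChain_comm_odd [Group.IsNilpotent G] {p : ℕ} (hp : p.Prime) (h2 : p ≠ 2) (a : ℕ)
    (h : ⁅powerChain G p a, (⊤ : Subgroup G)⁆ ≤ powerChain G p (a + 1)) :
    ⁅powerChain G p (a + 1), (⊤ : Subgroup G)⁆ ≤ powerChain G p (a + 2) := by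
  apply le_of_le_sup_commutator
  set T := powerChain G p (a + 2) ⊔ ⁅⁅powerChain G p (a + 1), (⊤ : Subgroup G)⁆, ⊤⁆ with hT
  have hC : ⁅powerChain G p (a + 1), (⊤ : Subgroup G)⁆ ≤ centreMod T :=
    commutator_le_iff_le_centreMod.1 le_sup_right
  rw [commutator_le_iff_le_centreMod]
  refine powerChain_le_of_pow fun x hx => mem_centreMod fun g => ?_
  have hc := h (comm_mem_commutator hx g)
  have he := comm_mem_commutator hc x
  have hp1 : ∀ z ∈ powerChain G p (a + 1), (QuotientGroup.mk' T z) ^ p = 1 := fun z hz => by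
    rw [← map_pow]
    exact mk_eq_one_of_mem ((le_sup_left : powerChain G p (a + 2) ≤ T) (powerChain_pow p _ hz))
  rw [map_pow]
  exact commute_pow_odd hp h2 _ _ (QuotientGroup.mk' T (x⁻¹ * (g⁻¹ * x * g)))
    (QuotientGroup.mk' T ((x⁻¹ * (g⁻¹ * x * g))⁻¹ * (x⁻¹ * (x⁻¹ * (g⁻¹ * x * g)) * x)))
    (by simp) (by rw [map_mul, map_mul, map_mul, map_inv, map_inv]) (hp1 _ hc)
    (hp1 _ (Subgroup.commutator_le_left (powerChain G p (a + 1)) ⊤ he))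
    (commute_of_mem_centreMod (hC he) _) (commute_of_mem_centreMod (hC he) _)

/-- The inductive step for `[R a, G] ≤ R (a + 2)` when `p = 2`, working modulo
`[R (a + 1), G, G]` and `R (a + 3)`, where `R (a + 2)` is central of exponent two. -/
theorem powerChain_comm_two [Group.IsNilpotent G] (a : ℕ)
    (h : ⁅powerChain G 2 a, (⊤ : Subgroup G)⁆ ≤ powerChain G 2 (a + 2)) :
    ⁅powerChain G 2 (a + 1), (⊤ : Subgroup G)⁆ ≤ powerChain G 2 (a + 3) := by
  apply le_of_le_sup_commutator
  set T := powerChain G 2 (a + 3) ⊔ ⁅⁅powerChain G 2 (a + 1), (⊤ : Subgroup G)⁆, ⊤⁆ with hT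
  have hC : ⁅powerChain G 2 (a + 1), (⊤ : Subgroup G)⁆ ≤ centreMod T :=
    commutator_le_iff_le_centreMod.1 le_sup_right
  have hp1 : ∀ z ∈ powerChain G 2 (a + 2), (QuotientGroup.mk' T z) ^ 2 = 1 := fun z hz => by
    rw [← map_pow]
    exact mk_eq_one_of_mem ((le_sup_left : powerChain G 2 (a + 3) ≤ T) (powerChain_pow 2 _ hz))
  have hC2 : powerChain G 2 (a + 2) ≤ centreMod T := by
    refine powerChain_le_of_pow fun y hy => mem_centreMod fun g => ?_
    have hd := h (comm_mem_commutator (powerChain_anti 2 a hy) g)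
    have hd1 := comm_mem_commutator hy g
    rw [map_pow]
    exact commute_sq _ _ (QuotientGroup.mk' T (y⁻¹ * (g⁻¹ * y * g))) (by simp) (hp1 _ hd)
      (commute_of_mem_centreMod (hC hd1) _)
  rw [commutator_le_iff_le_centreMod]
  refine powerChain_le_of_pow fun x hx => mem_centreMod fun g => ?_
  have hc := h (comm_mem_commutator hx g)
  rw [map_pow]
  exact commute_sq _ _ (QuotientGroup.mk' T (x⁻¹ * (g⁻¹ * x * g))) (by simp) (hp1 _ hc)
    (commute_of_mem_centreMod (hC2 hc) _)

theorem powerChain_comm [Group.IsNilpotent G] {p : ℕ} (hp : p.Prime) (hpow : IsPowerful p G)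
    (a : ℕ) : ⁅powerChain G p a, (⊤ : Subgroup G)⁆ ≤
      powerChain G p (a + if p = 2 then 2 else 1) := by
  by_cases h2 : p = 2
  · subst h2
    simp only [IsPowerful, if_true] at hpow ⊢
    induction a with
    | zero =>
      refine le_trans hpow ((Subgroup.closure_le _).2 ?_)
      rintro _ ⟨x, -, rfl⟩
      have := powerChain_pow 2 _ (powerChain_pow 2 0 (Subgroup.mem_top x))
      rwa [← pow_mul] at this
    | succ a ih => exact powerChain_comm_two a ih
  · simp only [IsPowerful, if_neg h2] at hpow ⊢
    induction a with
    | zero => exact hpow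
    | succ a ih => exact powerChain_comm_odd hp h2 a ih

/-- The `p`-th power map is multiplicative modulo `R (b + 2)` when one factor lies in `R b`. -/
theorem powerChain_mul_pow [Group.IsNilpotent G] {p : ℕ} (hp : p.Prime) (hpow : IsPowerful p G)
    (b : ℕ) (x s : G) (hs : s ∈ powerChain G p b) :
    QuotientGroup.mk' (powerChain G p (b + 2)) ((x * s) ^ p) =
      QuotientGroup.mk' (powerChain G p (b + 2)) (x ^ p * s ^ p) := by
  have he := powerChain_comm hp hpow b (comm_mem_commutator hs x)
  have hle : powerChain G p (b + 1) ≤ centreMod (powerChain G p (b + 2)) :=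
    commutator_le_iff_le_centreMod.1 ((powerChain_comm hp hpow (b + 1)).trans
      (powerChain_le (by split_ifs <;> omega)))
  set e := s⁻¹ * (x⁻¹ * s * x) with hedef
  have hec : e ∈ centreMod (powerChain G p (b + 2)) :=
    hle (powerChain_le (by split_ifs <;> omega) he)
  have hep : (QuotientGroup.mk' (powerChain G p (b + 2)) e) ^ p.choose 2 = 1 := by
    by_cases h2 : p = 2
    · rw [if_pos h2] at he
      rw [mk_eq_one_of_mem he, one_pow]
    · rw [if_neg h2] at he
      obtain ⟨k, hk⟩ := hp.dvd_choose_self (k := 2) (by norm_num)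
        (lt_of_le_of_ne hp.two_le (Ne.symm h2))
      rw [hk, pow_mul, ← map_pow, mk_eq_one_of_mem (powerChain_pow p _ he), one_pow]
  rw [map_pow, map_mul, mul_pow_class_two_s2 _ _ (QuotientGroup.mk' _ e) _
    (commute_of_mem_centreMod hec _) (commute_of_mem_centreMod hec _), hep, mul_one, map_mul,
    map_pow, map_pow]
  rw [← map_mul, ← map_mul, ← map_mul, hedef]
  congr 1
  group

theorem powerChain_root_mod [Group.IsNilpotent G] {p : ℕ} (hp : p.Prime) (hpow : IsPowerful p G)
    (b : ℕ) (t : G) (ht : t ∈ powerChain G p (b + 1)) :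
    ∃ s ∈ powerChain G p b, QuotientGroup.mk' (powerChain G p (b + 2)) (s ^ p) =
      QuotientGroup.mk' (powerChain G p (b + 2)) t := by
  induction ht using Subgroup.closure_induction with
  | mem x hx =>
    obtain ⟨s, hs, rfl⟩ := hx
    exact ⟨s, hs, rfl⟩
  | one => exact ⟨1, Subgroup.one_mem _, by rw [one_pow]⟩
  | mul x y _ _ ihx ihy =>
    obtain ⟨s, hs, hs'⟩ := ihx
    obtain ⟨r, hr, hr'⟩ := ihy
    exact ⟨s * r, Subgroup.mul_mem _ hs hr, by
      rw [powerChain_mul_pow hp hpow b s r hr, map_mul, hs', hr', map_mul]⟩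
  | inv x _ ih =>
    obtain ⟨s, hs, hs'⟩ := ih
    exact ⟨s⁻¹, Subgroup.inv_mem _ hs, by rw [inv_pow, map_inv, hs', map_inv]⟩

/-- Successive approximation of a `p`-th root: each step improves the congruence by one layer. -/
theorem powerChain_root_approx [Group.IsNilpotent G] {p : ℕ} (hp : p.Prime)
    (hpow : IsPowerful p G) (a b : ℕ) (z : G) (hz : z ∈ powerChain G p (a + 1)) :
    ∃ x ∈ powerChain G p a, (x ^ p)⁻¹ * z ∈ powerChain G p (a + b + 1) := by
  induction b with
  | zero => exact ⟨1, Subgroup.one_mem _, by simpa using hz⟩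
  | succ b ih =>
    obtain ⟨x, hx, ht⟩ := ih
    obtain ⟨s, hs, hst⟩ := powerChain_root_mod hp hpow (a + b) _ ht
    refine ⟨x * s, Subgroup.mul_mem _ hx (powerChain_le (by omega) hs), ?_⟩
    change _ ∈ powerChain G p (a + b + 2)
    rw [← QuotientGroup.eq_one_iff]
    change QuotientGroup.mk' (powerChain G p (a + b + 2)) (((x * s) ^ p)⁻¹ * z) = 1
    rw [map_mul, map_inv, powerChain_mul_pow hp hpow (a + b) x s hs, map_mul, hst, map_mul,
      map_inv]
    group

/-- If `H^p = H`, the `p`-th power map is onto, hence injective, on the abelianization of `H`, so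
this `p`-group is trivial and `H` is perfect; being nilpotent, `H` is trivial. -/
theorem eq_bot_of_subgroupPow_eq [Finite G] {p : ℕ} [Fact p.Prime] (hG : IsPGroup p G)
    {H : Subgroup G} (h : subgroupPow H p = H) : H = ⊥ := by
  by_contra hne
  have hnt : Nontrivial H := (Subgroup.nontrivial_iff_ne_bot H).2 hne
  have hHp : IsPGroup p H := hG.to_subgroup H
  have hnil : Group.IsNilpotent H := hHp.isNilpotent
  have hlt : commutator H < ⊤ := Group.IsSolvable.commutator_lt_top_of_nontrivial H
  have hA : IsPGroup p (Abelianization H) := hHp.to_quotient (commutator H)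
  have hsurj : Function.Surjective (powMonoidHom p : Abelianization H →* Abelianization H) := by
    have hle : H ≤ (((powMonoidHom p : Abelianization H →* Abelianization H).range).comap
        (Abelianization.of)).map H.subtype := by
      conv_lhs => rw [← h]
      refine (Subgroup.closure_le _).2 ?_
      rintro _ ⟨x, hx, rfl⟩
      exact ⟨⟨x, hx⟩ ^ p, ⟨Abelianization.of ⟨x, hx⟩, rfl⟩, rfl⟩
    intro y
    obtain ⟨y, rfl⟩ := QuotientGroup.mk_surjective y
    obtain ⟨z, ⟨w, hw⟩, hzy⟩ := hle y.2
    obtain rfl : z = y := Subtype.ext hzy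
    exact ⟨w, hw⟩
  have hinj := Finite.injective_iff_surjective.2 hsurj
  have hone : ∀ (k : ℕ) (y : Abelianization H), y ^ p ^ k = 1 → y = 1 := by
    intro k
    induction k with
    | zero => intro y hy; simpa using hy
    | succ k ih =>
      intro y hy
      apply ih
      apply hinj
      rw [map_one, powMonoidHom_apply, ← pow_mul, ← pow_succ, hy]
  refine hlt.ne (eq_top_iff.2 fun y _ => ?_)
  obtain ⟨k, hk⟩ := hA (Abelianization.of y)
  exact (QuotientGroup.eq_one_iff y).1 (hone k _ hk)

theorem powerChain_eventually_bot [Finite G] {p : ℕ} [Fact p.Prime] (hG : IsPGroup p G) :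
    ∃ n, powerChain G p n = ⊥ := by
  obtain ⟨n, hn⟩ := WellFoundedLT.antitone_chain_condition
    (antitone_nat_of_succ_le (powerChain_anti (G := G) p))
  exact ⟨n, eq_bot_of_subgroupPow_eq hG (hn (n + 1) (Nat.le_succ n)).symm⟩

theorem powerChain_filtration [Finite G] {p : ℕ} [Fact p.Prime] (hG : IsPGroup p G)
    (hpow : IsPowerful p G) :
    PowerFiltration p (if p = 2 then 2 else 1) (powerChain G p) where
  anti := powerChain_anti p
  normal a := powerChain_normal p (a + 1)
  comm a x y hx _ := by
    have : Group.IsNilpotent G := hG.isNilpotent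
    exact powerChain_comm Fact.out hpow a (comm_mem_commutator hx y)
  pow a x hx := powerChain_pow p a hx
  root a x hx := by
    have : Group.IsNilpotent G := hG.isNilpotent
    obtain ⟨n, hn⟩ := powerChain_eventually_bot hG
    obtain ⟨y, hy, hyx⟩ := powerChain_root_approx Fact.out hpow a n x hx
    have h1 : (y ^ p)⁻¹ * x ∈ powerChain G p n := powerChain_le (by omega) hyx
    rw [hn, Subgroup.mem_bot, inv_mul_eq_one] at h1
    exact ⟨y, hy, h1⟩

theorem PowerFiltration.exists_root {p ε : ℕ} {P : ℕ → Subgroup G} (h : PowerFiltration p ε P)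
    (k : ℕ) : ∀ x ∈ P k, ∃ y ∈ P 0, y ^ p ^ k = x := by
  induction k with
  | zero => exact fun x hx => ⟨x, hx, by simp⟩
  | succ k ih =>
    intro x hx
    obtain ⟨z, hz, rfl⟩ := h.root k x hx
    obtain ⟨y, hy, rfl⟩ := ih z hz
    exact ⟨y, hy, by rw [pow_succ, pow_mul]⟩

theorem subgroupPow_top_eq_powerChain [Finite G] {p : ℕ} [Fact p.Prime] (hG : IsPGroup p G)
    (hpow : IsPowerful p G) (k : ℕ) :
    subgroupPow (⊤ : Subgroup G) (p ^ k) = powerChain G p k := by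
  have h := powerChain_filtration hG hpow
  apply le_antisymm
  · refine (Subgroup.closure_le _).2 ?_
    rintro _ ⟨x, -, rfl⟩
    have := h.pow_pow 0 k x (Subgroup.mem_top x)
    rwa [zero_add] at this
  · intro x hx
    obtain ⟨y, -, rfl⟩ := h.exists_root k x hx
    exact Subgroup.subset_closure ⟨y, Subgroup.mem_top y, rfl⟩

end powerChain

theorem omega_statement_2 (p : ℕ) (hp : p.Prime) (G : Type*) [Group G] [Finite G]
    (hG : IsPGroup p G) (hpow : IsPowerful p G) (i j k : ℕ) (hk : 1 ≤ k) :
    subgroupPow (omegaSubgroup p i (subgroupPow (⊤ : Subgroup G) (p ^ k))) (p ^ j) ≤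
      omegaSubgroup p (i - j) (subgroupPow (⊤ : Subgroup G) (p ^ (k + j))) := by
  have : Fact p.Prime := ⟨hp⟩
  have h := powerChain_filtration hG hpow
  obtain ⟨n, hn⟩ := powerChain_eventually_bot hG
  rw [subgroupPow_top_eq_powerChain hG hpow, subgroupPow_top_eq_powerChain hG hpow]
  have hexp : ∀ x ∈ omegaSubgroup p i (powerChain G p k),
      x ∈ powerChain G p k ∧ x ^ p ^ i = 1 := by
    intro x hx
    induction hx using Subgroup.closure_induction with
    | mem x hx => exact hx
    | one => exact ⟨Subgroup.one_mem _, one_pow _⟩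
    | mul x y _ _ hx hy =>
      exact ⟨Subgroup.mul_mem _ hx.1 hy.1, mul_pow_eq_one p hp n i G _ h hn x y
        (h.le_of_le hk hx.1) (h.le_of_le hk hy.1) hx.2 hy.2⟩
    | inv x _ hx => exact ⟨Subgroup.inv_mem _ hx.1, by rw [inv_pow, hx.2, inv_one]⟩
  refine (Subgroup.closure_le _).2 ?_
  rintro _ ⟨x, hx, rfl⟩
  obtain ⟨hxk, hxi⟩ := hexp x hx
  refine Subgroup.subset_closure ⟨h.pow_pow k j x hxk, ?_⟩
  rw [← pow_mul, ← pow_add]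
  obtain ⟨m, hm⟩ := pow_dvd_pow p (show i ≤ j + (i - j) by omega)
  rw [hm, pow_mul, hxi, one_pow]
end

section
/- Let p be a prime and G a finite powerful p-group. Then for all i ≥ j ≥ 0 and k ≥ 1, the subgroup (Ω_i(G^{p^k}))^{p^j} has exponent dividing p^{i-j}, i.e., every element x of (Ω_i(G^{p^k}))^{p^j} satisfies x^{p^{i-j}} = 1. -/
namespace PowerfulOmega

open Subgroup
open scoped commutatorElement

universe u

/-! ### Generalities on powers and commutators -/

/-- The exponent occurring in the definition of a powerful `p`-group: `4` if `p = 2`, else `p`. -/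
def powerfulExp (p : ℕ) : ℕ := if p = 2 then 4 else p

theorem isPowerful_iff {p : ℕ} {G : Type*} [Group G] :
    IsPowerful p G ↔ ⁅(⊤ : Subgroup G), (⊤ : Subgroup G)⁆ ≤ subgroupPow ⊤ (powerfulExp p) := by
  unfold IsPowerful powerfulExp
  split_ifs <;> rfl

section
variable {G : Type*} [Group G]

theorem pow_mem_subgroupPow {H : Subgroup G} {x : G} (hx : x ∈ H) (n : ℕ) :
    x ^ n ∈ subgroupPow H n := subset_closure ⟨x, hx, rfl⟩

theorem subgroupPow_le {H K : Subgroup G} {n : ℕ} :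
    subgroupPow H n ≤ K ↔ ∀ x ∈ H, x ^ n ∈ K := by
  rw [subgroupPow, closure_le]
  constructor
  · exact fun h x hx => h ⟨x, hx, rfl⟩
  · rintro h _ ⟨x, hx, rfl⟩
    exact h x hx

theorem subgroupPow_mono {H K : Subgroup G} (h : H ≤ K) (n : ℕ) :
    subgroupPow H n ≤ subgroupPow K n :=
  subgroupPow_le.2 fun _ hx => pow_mem_subgroupPow (h hx) n

theorem map_subgroupPow {G' : Type*} [Group G'] (f : G →* G') (H : Subgroup G) (n : ℕ) :
    (subgroupPow H n).map f = subgroupPow (H.map f) n := by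
  apply le_antisymm
  · rw [map_le_iff_le_comap, subgroupPow_le]
    intro x hx
    rw [mem_comap, map_pow]
    exact pow_mem_subgroupPow (mem_map_of_mem f hx) n
  · rw [subgroupPow_le]
    rintro _ ⟨x, hx, rfl⟩
    rw [← map_pow]
    exact mem_map_of_mem f (pow_mem_subgroupPow hx n)

theorem subgroupPow_normal (H : Subgroup G) [hH : H.Normal] (n : ℕ) :
    (subgroupPow H n).Normal := by
  constructor
  intro x hx g
  have h1 : (subgroupPow H n).map (MulAut.conj g).toMonoidHom ≤ subgroupPow H n := by
    rw [map_subgroupPow]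
    apply subgroupPow_mono
    rintro _ ⟨y, hy, rfl⟩
    exact hH.conj_mem y hy g
  exact h1 (mem_map_of_mem _ hx)

theorem omegaSubgroup_normal (p i : ℕ) (H : Subgroup G) [hH : H.Normal] :
    (omegaSubgroup p i H).Normal := by
  constructor
  intro x hx g
  have h1 : (omegaSubgroup p i H).map (MulAut.conj g).toMonoidHom ≤ omegaSubgroup p i H := by
    rw [omegaSubgroup, MonoidHom.map_closure, closure_le]
    rintro _ ⟨y, ⟨hy, hy'⟩, rfl⟩
    exact subset_closure ⟨hH.conj_mem y hy g, by rw [← map_pow, hy', map_one]⟩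
  exact h1 (mem_map_of_mem _ hx)

/-- Powers of a product whose factors have a commutator `d` commuting with both of them. -/
theorem mul_pow_of_class_two {a c d : G} (hda : Commute d a) (hdc : Commute d c)
    (h : c * a = d * (a * c)) (n : ℕ) :
    (a * c) ^ n = a ^ n * c ^ n * d ^ n.choose 2 := by
  have hca : ∀ n : ℕ, c ^ n * a = d ^ n * (a * c ^ n) := by
    intro n
    induction n with
    | zero => simp
    | succ n ih =>
      calc c ^ (n + 1) * a = c * (c ^ n * a) := by rw [pow_succ', mul_assoc]
        _ = c * d ^ n * a * c ^ n := by rw [ih]; simp only [mul_assoc]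
        _ = d ^ n * (c * a) * c ^ n := by
          rw [← (hdc.pow_left n).eq]; simp only [mul_assoc]
        _ = d ^ (n + 1) * (a * c ^ (n + 1)) := by
          rw [h, pow_succ d, pow_succ' c]; simp only [mul_assoc]
  induction n with
  | zero => simp
  | succ n ih =>
    have hd : Commute (d ^ n.choose 2) (a * c) := (hda.mul_right hdc).pow_left _
    have hdn : Commute (d ^ n) (a * c ^ (n + 1)) :=
      (hda.mul_right (hdc.pow_right _)).pow_left _
    calc (a * c) ^ (n + 1) = a ^ n * c ^ n * (d ^ n.choose 2 * (a * c)) := by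
          rw [pow_succ, ih, mul_assoc]
      _ = a ^ n * (c ^ n * a) * c * d ^ n.choose 2 := by
          rw [hd.eq]; simp only [mul_assoc]
      _ = a ^ n * (d ^ n * (a * c ^ (n + 1))) * d ^ n.choose 2 := by
          rw [hca, pow_succ c]; simp only [mul_assoc]
      _ = a ^ (n + 1) * c ^ (n + 1) * d ^ (n + 1).choose 2 := by
          rw [hdn.eq, pow_succ a, Nat.choose_succ_succ' n 1, Nat.choose_one_right, pow_add d]
          simp only [mul_assoc]

theorem mul_eq_comm_mul (c a : G) : c * a = ⁅c, a⁆ * (a * c) := by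
  simp [commutatorElement_def, mul_assoc]

/-- The conjugate of `a` by `y` is `a * ⁅a⁻¹, y⁆`, so `y` commutes with `a ^ n` as soon as
`(a * ⁅a⁻¹, y⁆) ^ n = a ^ n`. -/
theorem commute_pow_of_mul_pow_eq {a y : G} {n : ℕ} (h : (a * ⁅a⁻¹, y⁆) ^ n = a ^ n) :
    Commute (a ^ n) y := by
  have h1 : a * ⁅a⁻¹, y⁆ = y * a * y⁻¹ := by simp [commutatorElement_def, mul_assoc]
  rw [h1, conj_pow] at h
  exact (mul_inv_eq_iff_eq_mul.1 h).symm

/-- If `⁅a⁻¹, y⁆` commutes with `a` and has order dividing `n`, then `a ^ n` commutes with `y`. -/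
theorem commute_pow_of_commute {a y : G} {n : ℕ} (h : Commute a ⁅a⁻¹, y⁆)
    (hn : ⁅a⁻¹, y⁆ ^ n = 1) : Commute (a ^ n) y :=
  commute_pow_of_mul_pow_eq (by rw [h.mul_pow, hn, mul_one])

theorem dvd_choose_two {p : ℕ} (hp : p.Prime) (h2 : p ≠ 2) : p ∣ p.choose 2 :=
  hp.dvd_choose_self (by norm_num) (lt_of_le_of_ne hp.two_le (Ne.symm h2))

theorem pow_choose_two_eq_one {p : ℕ} (hp : p.Prime) (h2 : p ≠ 2) {d : G} (hd : d ^ p = 1) :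
    d ^ p.choose 2 = 1 := by
  obtain ⟨m, hm⟩ := dvd_choose_two hp h2
  rw [hm, pow_mul, hd, one_pow]

theorem pow_eq_one_of_closure {s : Set G} {n : ℕ} (hc : ∀ x ∈ s, ∀ y ∈ s, Commute x y)
    (hs : ∀ x ∈ s, x ^ n = 1) : ∀ x ∈ closure s, x ^ n = 1 := by
  have := Subgroup.isMulCommutative_closure (k := s) hc
  intro x hx
  induction hx using closure_induction with
  | mem x h => exact hs x h
  | one => simp
  | mul x y hx hy h1 h2 =>
    have : Commute x y := setLike_mul_comm hx hy
    rw [this.mul_pow, h1, h2, one_mul]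
  | inv x _ h => rw [inv_pow, h, inv_one]

/-- In a nilpotent group, `V ≤ M [V, G]` forces `V ≤ M`. -/
theorem le_of_le_sup_commutator [Group.IsNilpotent G] {V M : Subgroup G} [M.Normal]
    (h : V ≤ M ⊔ ⁅V, (⊤ : Subgroup G)⁆) : V ≤ M := by
  obtain ⟨n, hn⟩ := Subgroup.nilpotent_iff_lowerCentralSeries.1 ‹Group.IsNilpotent G›
  have key : ∀ n, V ≤ M ⊔ (⊤ : Subgroup G).lowerCentralSeries n := by
    intro n
    induction n with
    | zero => simp
    | succ n ih =>
      refine h.trans (sup_le le_sup_left ?_)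
      rw [commutator_le]
      intro v hv g _
      obtain ⟨m, hm, l, hl, rfl⟩ := mem_sup_of_normal_left.1 (ih hv)
      rw [commutatorElement_mul_left_eq_conj_mul]
      have h1 : ⁅l, g⁆ ∈ (⊤ : Subgroup G).lowerCentralSeries (n + 1) :=
        commutator_mem_commutator hl (mem_top g)
      have h2 : ⁅m, g⁆ ∈ M := commutator_le_left M ⊤ (commutator_mem_commutator hm (mem_top g))
      have hm' := mem_sup_left (T := (⊤ : Subgroup G).lowerCentralSeries (n + 1)) hm
      exact mul_mem (mul_mem (mul_mem hm' (mem_sup_right h1)) (inv_mem hm')) (mem_sup_left h2)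
  simpa [hn] using key n

/-- The commutator subgroup of an extension of a normal subgroup `N` by a cyclic group
lies in `[N, G]`. -/
theorem commutator_zpowers_sup_le (x : G) (N : Subgroup G) [N.Normal] :
    ⁅zpowers x ⊔ N, zpowers x ⊔ N⁆ ≤ ⁅N, (⊤ : Subgroup G)⁆ := by
  rw [commutator_le]
  have hcen : ∀ n ∈ N, ∀ g : G,
      Commute (n : G ⧸ ⁅N, (⊤ : Subgroup G)⁆) (g : G ⧸ ⁅N, (⊤ : Subgroup G)⁆) := by
    intro n hn g
    rw [← commutatorElement_eq_one_iff_commute]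
    have := (QuotientGroup.eq_one_iff (N := ⁅N, (⊤ : Subgroup G)⁆) ⁅n, g⁆).2
      (commutator_mem_commutator hn (mem_top g))
    simpa [commutatorElement_def] using this
  intro g hg h hh
  obtain ⟨_, ⟨i, rfl⟩, n, hn, rfl⟩ := mem_sup_of_normal_right.1 hg
  obtain ⟨_, ⟨j, rfl⟩, m, hm, rfl⟩ := mem_sup_of_normal_right.1 hh
  rw [← QuotientGroup.eq_one_iff]
  have h1 : Commute ((x ^ i * n : G) : G ⧸ ⁅N, (⊤ : Subgroup G)⁆)
      ((x ^ j * m : G) : G ⧸ ⁅N, (⊤ : Subgroup G)⁆) := by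
    rw [QuotientGroup.mk_mul]
    refine Commute.mul_left ?_ (hcen n hn _)
    rw [QuotientGroup.mk_mul]
    refine Commute.mul_right ?_ (hcen m hm _).symm
    rw [QuotientGroup.mk_zpow, QuotientGroup.mk_zpow]
    exact ((Commute.refl _).zpow_left i).zpow_right j
  have h2 := commutatorElement_eq_one_iff_commute.2 h1
  simpa [commutatorElement_def] using h2

/-- A finite `p`-group is generated by any subset generating it modulo `p`-th powers,
because these lie in the Frattini subgroup. -/
theorem eq_top_of_sup_subgroupPow {p : ℕ} (hp : p.Prime) [Finite G] (hG : IsPGroup p G)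
    {H : Subgroup G} (h : H ⊔ subgroupPow ⊤ p = ⊤) : H = ⊤ := by
  have := Fact.mk hp
  have := hG.isNilpotent
  apply frattini_nongenerating
  rw [eq_top_iff, ← h]
  refine sup_le_sup_left ?_ H
  rw [subgroupPow_le]
  intro x _
  simp only [frattini, Order.radical, mem_iInf]
  intro M hM
  have hM : IsCoatom M := hM
  have : M.Normal := Group.normalizerCondition_of_isNilpotent.normal_of_coatom M hM
  by_contra hx
  have h1 : zpowers (x ^ p) ⊔ M = ⊤ := by
    refine hM.2 _ (lt_of_le_of_ne le_sup_right ?_)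
    intro he
    exact hx (he ▸ mem_sup_left (mem_zpowers _))
  have h2 : x ∈ zpowers (x ^ p) ⊔ M := h1 ▸ mem_top x
  obtain ⟨_, ⟨k, rfl⟩, m, hm, hk⟩ := mem_sup_of_normal_right.1 h2
  have h3 : ((x : G ⧸ M) ^ p) ^ k = x := by
    conv_rhs => rw [← hk]
    simp [(QuotientGroup.eq_one_iff m).2 hm]
  have h4 : ∀ n : ℕ, ((x : G ⧸ M) ^ p ^ n) ^ (k ^ n) = x := by
    intro n
    induction n with
    | zero => simp
    | succ n ih =>
      conv_rhs => rw [← ih]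
      conv_rhs => rw [← h3]
      simp only [← zpow_natCast, ← zpow_mul]
      congr 1
      push_cast
      ring
  obtain ⟨n, hn⟩ := hG x
  have h5 := h4 n
  rw [← QuotientGroup.mk_pow, hn, QuotientGroup.mk_one, one_zpow] at h5
  exact hx (pow_mem ((QuotientGroup.eq_one_iff x).1 h5.symm) p)

theorem commute_of_zpowers_sup_eq_top {p : ℕ} (hp : p.Prime) [Finite G] (hG : IsPGroup p G)
    {x : G} (h : zpowers x ⊔ subgroupPow ⊤ p = ⊤) (a b : G) : Commute a b := by
  have h1 := eq_top_of_sup_subgroupPow hp hG h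
  obtain ⟨i, rfl⟩ : a ∈ zpowers x := h1 ▸ mem_top a
  obtain ⟨j, rfl⟩ : b ∈ zpowers x := h1 ▸ mem_top b
  exact ((Commute.refl x).zpow_left i).zpow_right j

end

/-! ### Powerfully embedded subgroups -/

section
variable {G : Type*} [Group G]

/-- The case of odd `p` of `commutator_subgroupPow_eq_bot`: there `⁅x⁻¹, g⁆` has order dividing
`p` and the group generated by it and `x` has class at most two. -/
theorem commutator_subgroupPow_eq_bot_of_odd {p : ℕ} (hp : p.Prime) (h2 : p ≠ 2)
    {N : Subgroup G} [N.Normal] (hN : ⁅N, (⊤ : Subgroup G)⁆ ≤ subgroupPow N p)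
    (hexp : ∀ w ∈ subgroupPow N p, w ^ p = 1)
    (hcen : ∀ w ∈ subgroupPow N p, ∀ g h : G, Commute ⁅w, g⁆ h) :
    ⁅subgroupPow N p, (⊤ : Subgroup G)⁆ = ⊥ := by
  have := subgroupPow_normal N p
  rw [commutator_top_right_eq_bot_iff_le_center, subgroupPow_le]
  intro x hx
  rw [mem_center_iff]
  intro g
  have hc : ⁅x⁻¹, g⁆ ∈ subgroupPow N p :=
    hN (commutator_mem_commutator (inv_mem hx) (mem_top g))
  have hd : ⁅⁅x⁻¹, g⁆, x⁆ ∈ subgroupPow N p :=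
    commutator_le_left _ ⊤ (commutator_mem_commutator hc (mem_top x))
  refine (commute_pow_of_mul_pow_eq ?_).symm.eq
  rw [mul_pow_of_class_two (hcen _ hc _ _) (hcen _ hc _ _) (mul_eq_comm_mul _ _), hexp _ hc,
    pow_choose_two_eq_one hp h2 (hexp _ hd), mul_one, mul_one]

/-- The case `p = 2` of `commutator_subgroupPow_eq_bot`: successively, fourth powers of elements
of `N` commute with each other, then with all of `G`, and finally squares are central. -/
theorem commutator_subgroupPow_eq_bot_of_two
    {N : Subgroup G} [N.Normal] (hN : ⁅N, (⊤ : Subgroup G)⁆ ≤ subgroupPow N 4)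
    (hexp : ∀ w ∈ subgroupPow N 2, w ^ 4 = 1)
    (hcen : ∀ w ∈ subgroupPow N 2, ∀ g h : G, Commute ⁅w, g⁆ h) :
    ⁅subgroupPow N 2, (⊤ : Subgroup G)⁆ = ⊥ := by
  have hsq : ∀ x ∈ N, x ^ 2 ∈ subgroupPow N 2 := fun x hx => pow_mem_subgroupPow hx 2
  have hsqN : ∀ x ∈ N, x ^ 2 ∈ N := fun x hx => pow_mem hx 2
  have h44 : ∀ x ∈ N, ∀ y ∈ N, Commute (x ^ 4) (y ^ 4) := by
    intro x hx y hy
    have hu := inv_mem (hsq x hx)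
    set e := ⁅(x ^ 2)⁻¹, y ^ 2⁆ with he
    have hconj : y ^ 2 * x ^ 2 * (y ^ 2)⁻¹ = x ^ 2 * e := by
      simp [he, commutatorElement_def, mul_assoc]
    have hec : ∀ h, Commute e h := hcen _ hu _
    have he4 : e ^ 4 = 1 := by
      have h1 := congrArg (· ^ 4) hconj
      simp only [conj_pow, (hec (x ^ 2)).symm.mul_pow, hexp _ (hsq x hx)] at h1
      simpa using h1.symm
    have h1 : y ^ 4 * x ^ 2 * (y ^ 4)⁻¹ = x ^ 2 * e ^ 2 := by
      calc y ^ 4 * x ^ 2 * (y ^ 4)⁻¹ = y ^ 2 * (y ^ 2 * x ^ 2 * (y ^ 2)⁻¹) * (y ^ 2)⁻¹ := by group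
        _ = y ^ 2 * x ^ 2 * (e * (y ^ 2)⁻¹) := by rw [hconj]; simp only [mul_assoc]
        _ = y ^ 2 * x ^ 2 * (y ^ 2)⁻¹ * e := by rw [(hec _).eq]; simp only [mul_assoc]
        _ = x ^ 2 * e ^ 2 := by rw [hconj, pow_two e, mul_assoc]
    have h2 := congrArg (· ^ 2) h1
    simp only [conj_pow, ((hec (x ^ 2)).symm.pow_right 2).mul_pow, ← pow_mul] at h2
    rw [he4, mul_one] at h2
    exact (mul_inv_eq_iff_eq_mul.1 h2).symm
  have hexp2 : ∀ w ∈ subgroupPow N 4, w ^ 2 = 1 := by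
    apply pow_eq_one_of_closure
    · rintro _ ⟨x, hx, rfl⟩ _ ⟨y, hy, rfl⟩
      exact h44 x hx y hy
    · rintro _ ⟨x, hx, rfl⟩
      rw [← hexp _ (hsq x hx)]
      group
  have hcen4 : ∀ w ∈ subgroupPow N 4, ∀ g, Commute w g := by
    have : subgroupPow N 4 ≤ center G := by
      rw [subgroupPow_le]
      intro x hx
      rw [mem_center_iff]
      intro g
      have h1 : Commute ((x ^ 2) ^ 2) g :=
        commute_pow_of_commute (hcen _ (inv_mem (hsq x hx)) _ _).symm
          (hexp2 _ (hN (commutator_mem_commutator (inv_mem (hsqN x hx)) (mem_top g))))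
      rw [← pow_mul] at h1
      exact h1.symm.eq
    exact fun w hw g => (mem_center_iff.1 (this hw) g).symm
  rw [commutator_top_right_eq_bot_iff_le_center, subgroupPow_le]
  intro x hx
  rw [mem_center_iff]
  intro g
  have hc : ⁅x⁻¹, g⁆ ∈ subgroupPow N 4 :=
    hN (commutator_mem_commutator (inv_mem hx) (mem_top g))
  exact (commute_pow_of_commute (hcen4 _ hc x).symm (hexp2 _ hc)).symm.eq

/-- The essential case of `commutator_subgroupPow_le`, in which `(N^p)^q`, where
`q = powerfulExp p`, is trivial and `[N^p, G]` is central. -/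
theorem commutator_subgroupPow_eq_bot {p : ℕ} (hp : p.Prime) {N : Subgroup G} [N.Normal]
    (hN : ⁅N, (⊤ : Subgroup G)⁆ ≤ subgroupPow N (powerfulExp p))
    (hexp : ∀ w ∈ subgroupPow N p, w ^ powerfulExp p = 1)
    (hcen : ∀ w ∈ subgroupPow N p, ∀ g h : G, Commute ⁅w, g⁆ h) :
    ⁅subgroupPow N p, (⊤ : Subgroup G)⁆ = ⊥ := by
  by_cases h2 : p = 2
  · subst h2
    exact commutator_subgroupPow_eq_bot_of_two hN hexp hcen
  · rw [powerfulExp, if_neg h2] at hN hexp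
    exact commutator_subgroupPow_eq_bot_of_odd hp h2 hN hexp hcen

/-- If `N` is powerfully embedded in `G`, that is, `[N, G] ≤ N^p` (`N^4` if `p = 2`), then so
is `N^p`. -/
theorem commutator_subgroupPow_le {p : ℕ} (hp : p.Prime) [Group.IsNilpotent G]
    {N : Subgroup G} [hNn : N.Normal]
    (hN : ⁅N, (⊤ : Subgroup G)⁆ ≤ subgroupPow N (powerfulExp p)) :
    ⁅subgroupPow N p, (⊤ : Subgroup G)⁆ ≤ subgroupPow (subgroupPow N p) (powerfulExp p) := by
  have h1 := subgroupPow_normal N p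
  have h2 := subgroupPow_normal (subgroupPow N p) (powerfulExp p)
  apply le_of_le_sup_commutator
  set R := subgroupPow (subgroupPow N p) (powerfulExp p) ⊔
    ⁅⁅subgroupPow N p, (⊤ : Subgroup G)⁆, (⊤ : Subgroup G)⁆ with hR
  have hsurj := QuotientGroup.mk'_surjective R
  have htop : (⊤ : Subgroup G).map (QuotientGroup.mk' R) = ⊤ := map_top_of_surjective _ hsurj
  have hmem : ∀ w ∈ subgroupPow (N.map (QuotientGroup.mk' R)) p,
      ∃ v ∈ subgroupPow N p, QuotientGroup.mk' R v = w := by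
    intro w hw
    rw [← map_subgroupPow] at hw
    exact hw
  have hone : ∀ v ∈ R, QuotientGroup.mk' R v = 1 := fun v hv =>
    (QuotientGroup.eq_one_iff v).2 hv
  have hNq : (N.map (QuotientGroup.mk' R)).Normal := hNn.map _ hsurj
  have h3 := commutator_subgroupPow_eq_bot hp (N := N.map (QuotientGroup.mk' R))
    (by
      rw [← map_subgroupPow, ← htop, ← map_commutator]
      exact map_mono hN)
    (by
      intro w hw
      obtain ⟨v, hv, rfl⟩ := hmem w hw
      rw [← map_pow]
      exact hone _ (mem_sup_left (pow_mem_subgroupPow hv _)))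
    (by
      intro w hw g h
      obtain ⟨v, hv, rfl⟩ := hmem w hw
      obtain ⟨g, rfl⟩ := hsurj g
      obtain ⟨h, rfl⟩ := hsurj h
      rw [← map_commutatorElement, ← commutatorElement_eq_one_iff_commute,
        ← map_commutatorElement]
      exact hone _ (mem_sup_right (commutator_mem_commutator
        (commutator_mem_commutator hv (mem_top _)) (mem_top _))))
  rw [← map_subgroupPow, ← htop, ← map_commutator, Subgroup.map_eq_bot_iff,
    QuotientGroup.ker_mk'] at h3
  exact h3

theorem isPowerful_subgroup {p : ℕ} {H : Subgroup G}
    (h : ⁅H, H⁆ ≤ subgroupPow H (powerfulExp p)) : IsPowerful p H := by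
  have htop : (⊤ : Subgroup H).map H.subtype = H := by
    rw [← MonoidHom.range_eq_map, range_subtype]
  rw [isPowerful_iff, ← map_subtype_le_map_subtype, map_commutator, map_subgroupPow, htop]
  exact h

theorem isPowerful_quotient {p : ℕ} (h : IsPowerful p G) (N : Subgroup G) [N.Normal] :
    IsPowerful p (G ⧸ N) := by
  rw [isPowerful_iff] at h ⊢
  have htop : (⊤ : Subgroup G).map (QuotientGroup.mk' N) = ⊤ :=
    map_top_of_surjective _ (QuotientGroup.mk'_surjective N)
  rw [← htop, ← map_commutator, ← map_subgroupPow]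
  exact map_mono h

theorem isPowerful_zpowers_sup {p : ℕ} (hp : p.Prime) [Group.IsNilpotent G] (h : IsPowerful p G)
    (x : G) : IsPowerful p ↥(zpowers x ⊔ subgroupPow ⊤ p) := by
  apply isPowerful_subgroup
  exact (commutator_zpowers_sup_le x _).trans ((commutator_subgroupPow_le hp
    (isPowerful_iff.1 h)).trans (subgroupPow_mono le_sup_right _))

/-- If `G^p` is central of exponent dividing `p` in a powerful group `G`, then raising to the
`p`-th power is a homomorphism. -/
theorem powerful_mul_pow_eq {p : ℕ} (hp : p.Prime) (h : IsPowerful p G)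
    (hexp : ∀ w ∈ subgroupPow (⊤ : Subgroup G) p, w ^ p = 1)
    (hcen : ∀ w ∈ subgroupPow (⊤ : Subgroup G) p, ∀ g, Commute w g) (x y : G) :
    (x * y) ^ p = x ^ p * y ^ p := by
  have hd := isPowerful_iff.1 h (commutator_mem_commutator (mem_top y) (mem_top x))
  by_cases h2 : p = 2
  · subst h2
    have h4 : subgroupPow (⊤ : Subgroup G) (powerfulExp 2) = ⊥ := by
      rw [eq_bot_iff, subgroupPow_le]
      intro x _
      have h5 := hexp _ (pow_mem_subgroupPow (mem_top x) 2)
      rw [← pow_mul] at h5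
      exact h5
    rw [h4, mem_bot, commutatorElement_eq_one_iff_commute] at hd
    exact hd.symm.mul_pow 2
  · rw [powerfulExp, if_neg h2] at hd
    rw [mul_pow_of_class_two (hcen _ hd _) (hcen _ hd _) (mul_eq_comm_mul _ _),
      pow_choose_two_eq_one hp h2 (hexp _ hd), mul_one]

end

/-- Modulo `(G^p)^p`, the `p`-th powers in a powerful group form a subgroup. -/
theorem exists_pow_mul {G : Type*} [Group G] {p : ℕ} (hp : p.Prime) [Group.IsNilpotent G]
    (h : IsPowerful p G) {z : G} (hz : z ∈ subgroupPow (⊤ : Subgroup G) p) :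
    ∃ x, ∃ w ∈ subgroupPow (subgroupPow (⊤ : Subgroup G) p) p, x ^ p * w = z := by
  have hM := subgroupPow_normal (subgroupPow (⊤ : Subgroup G) p) p
  set M := subgroupPow (subgroupPow (⊤ : Subgroup G) p) p with hMdef
  have hsurj := QuotientGroup.mk'_surjective M
  have hmem : ∀ w ∈ subgroupPow (⊤ : Subgroup (G ⧸ M)) p,
      ∃ v ∈ subgroupPow (⊤ : Subgroup G) p, QuotientGroup.mk' M v = w := by
    intro w hw
    rw [← map_top_of_surjective _ hsurj, ← map_subgroupPow] at hw
    exact hw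
  have hone : ∀ v ∈ M, QuotientGroup.mk' M v = 1 := fun v hv =>
    (QuotientGroup.eq_one_iff v).2 hv
  have hcomm : ⁅subgroupPow (⊤ : Subgroup G) p, (⊤ : Subgroup G)⁆ ≤ M := by
    refine (commutator_subgroupPow_le hp (isPowerful_iff.1 h)).trans ?_
    rw [subgroupPow_le]
    intro x hx
    have hdvd : p ∣ powerfulExp p := by
      unfold powerfulExp
      split_ifs with h2
      · rw [h2]; norm_num
      · exact dvd_rfl
    obtain ⟨m, hm⟩ := hdvd
    rw [hm, pow_mul]
    exact pow_mem (pow_mem_subgroupPow hx p) m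
  have key := powerful_mul_pow_eq hp (isPowerful_quotient h M)
    (by
      intro w hw
      obtain ⟨v, hv, rfl⟩ := hmem w hw
      rw [← map_pow]
      exact hone _ (pow_mem_subgroupPow hv _))
    (by
      intro w hw g
      obtain ⟨v, hv, rfl⟩ := hmem w hw
      obtain ⟨g, rfl⟩ := hsurj g
      rw [← commutatorElement_eq_one_iff_commute, ← map_commutatorElement]
      exact hone _ (hcomm (commutator_mem_commutator hv (mem_top _))))
  have h1 : ∃ x : G, (x : G ⧸ M) ^ p = z := by
    unfold subgroupPow at hz
    induction hz using closure_induction with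
    | mem x h =>
      obtain ⟨y, -, rfl⟩ := h
      exact ⟨y, by simp⟩
    | one => exact ⟨1, by simp⟩
    | mul x y _ _ h1 h2 =>
      obtain ⟨a, ha⟩ := h1
      obtain ⟨b, hb⟩ := h2
      exact ⟨a * b, by rw [QuotientGroup.mk_mul, key, ha, hb, QuotientGroup.mk_mul]⟩
    | inv x _ h =>
      obtain ⟨a, ha⟩ := h
      exact ⟨a⁻¹, by rw [QuotientGroup.mk_inv, inv_pow, ha, QuotientGroup.mk_inv]⟩
  obtain ⟨x, hx⟩ := h1
  refine ⟨x, (x ^ p)⁻¹ * z, ?_, by group⟩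
  rw [← QuotientGroup.mk_pow, QuotientGroup.eq] at hx
  exact hx

/-- Every element of `G^p` is a `p`-th power if `G` is powerful. -/
theorem exists_pow_eq {p : ℕ} (hp : p.Prime) (n : ℕ) :
    ∀ (G : Type u) [Group G] [Finite G], Nat.card G = n → IsPGroup p G → IsPowerful p G →
      ∀ z ∈ subgroupPow (⊤ : Subgroup G) p, ∃ x, x ^ p = z := by
  induction n using Nat.strong_induction_on with
  | _ n ih =>
  intro G _ _ hn hG h z hz
  have := Fact.mk hp
  have := hG.isNilpotent
  obtain ⟨x, w, hw, rfl⟩ := exists_pow_mul hp h hz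
  by_cases hK : zpowers x ⊔ subgroupPow ⊤ p = ⊤
  · -- here `G` is cyclic, and `p`-th powers form a subgroup
    have hcomm := commute_of_zpowers_sup_eq_top hp hG hK
    generalize x ^ p * w = v at hz
    unfold subgroupPow at hz
    induction hz using closure_induction with
    | mem x h =>
      obtain ⟨y, -, rfl⟩ := h
      exact ⟨y, rfl⟩
    | one => exact ⟨1, one_pow p⟩
    | mul x y _ _ h1 h2 =>
      obtain ⟨a, rfl⟩ := h1
      obtain ⟨b, rfl⟩ := h2
      exact ⟨a * b, (hcomm a b).mul_pow p⟩
    | inv x _ h =>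
      obtain ⟨a, rfl⟩ := h
      exact ⟨a⁻¹, inv_pow a p⟩
  · set K := zpowers x ⊔ subgroupPow ⊤ p with hKdef
    have hlt : Nat.card K < n := by
      rw [← hn]
      exact lt_of_le_of_ne (Subgroup.card_le_card_group K)
        (fun he => hK (Subgroup.eq_top_of_card_eq K he))
    have hmem : x ^ p * w ∈ subgroupPow K p :=
      mul_mem (pow_mem_subgroupPow (mem_sup_left (mem_zpowers x)) p)
        (subgroupPow_mono le_sup_right p hw)
    have htop : (⊤ : Subgroup K).map K.subtype = K := by
      rw [← MonoidHom.range_eq_map, range_subtype]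
    rw [← htop, ← map_subgroupPow] at hmem
    obtain ⟨v, hv, hvz⟩ := hmem
    obtain ⟨y, hy⟩ := ih _ hlt K rfl (hG.to_subgroup K) (isPowerful_zpowers_sup hp h x) v hv
    exact ⟨y, by rw [← hvz, ← hy]; simp⟩

/-- The structure of the subgroups `G^{p^k}` of a powerful group: they consist of powers, and
are powerfully embedded. -/
theorem powerful_structure {G : Type u} [Group G] [Finite G] {p : ℕ} (hp : p.Prime)
    (hG : IsPGroup p G) (h : IsPowerful p G) (k : ℕ) :
    (∀ z ∈ subgroupPow (⊤ : Subgroup G) (p ^ k), ∃ x, x ^ p ^ k = z) ∧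
    ⁅subgroupPow (⊤ : Subgroup G) (p ^ k), (⊤ : Subgroup G)⁆ ≤
      subgroupPow (subgroupPow (⊤ : Subgroup G) (p ^ k)) (powerfulExp p) := by
  have := Fact.mk hp
  have := hG.isNilpotent
  induction k with
  | zero =>
    refine ⟨fun z _ => ⟨z, by simp⟩, ?_⟩
    have h1 : subgroupPow (⊤ : Subgroup G) (p ^ 0) = ⊤ := by
      rw [eq_top_iff]
      intro x _
      have := pow_mem_subgroupPow (mem_top x) (p ^ 0)
      rwa [pow_zero, pow_one] at this
    rw [h1]
    exact isPowerful_iff.1 h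
  | succ k ih =>
    obtain ⟨ih1, ih2⟩ := ih
    have h1 : subgroupPow (⊤ : Subgroup G) (p ^ (k + 1)) =
        subgroupPow (subgroupPow (⊤ : Subgroup G) (p ^ k)) p := by
      apply le_antisymm
      · rw [subgroupPow_le]
        intro x _
        rw [pow_succ, pow_mul]
        exact pow_mem_subgroupPow (pow_mem_subgroupPow (mem_top x) _) _
      · rw [subgroupPow_le]
        intro x hx
        obtain ⟨y, rfl⟩ := ih1 x hx
        rw [← pow_mul, ← pow_succ]
        exact pow_mem_subgroupPow (mem_top y) _
    refine ⟨?_, ?_⟩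
    · intro z hz
      rw [h1] at hz
      set P := subgroupPow (⊤ : Subgroup G) (p ^ k) with hP
      have htop : (⊤ : Subgroup P).map P.subtype = P := by
        rw [← MonoidHom.range_eq_map, range_subtype]
      rw [← htop, ← map_subgroupPow] at hz
      obtain ⟨v, hv, rfl⟩ := hz
      obtain ⟨y, rfl⟩ := exists_pow_eq hp _ P rfl (hG.to_subgroup P)
        (isPowerful_subgroup ((commutator_mono le_rfl le_top).trans ih2)) v hv
      obtain ⟨x, hx⟩ := ih1 y y.2
      exact ⟨x, by rw [pow_succ, pow_mul, hx]; simp⟩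
    · rw [h1]
      exact commutator_subgroupPow_le hp ih2

/-! ### Commutators of elements of bounded order -/

section
variable {G : Type u} [Group G] {p : ℕ}

theorem pow_mem_P (x : G) {k m : ℕ} (h : k ≤ m) :
    x ^ p ^ m ∈ subgroupPow (⊤ : Subgroup G) (p ^ k) := by
  obtain ⟨l, rfl⟩ := Nat.exists_eq_add_of_le h
  rw [add_comm k l, pow_add, pow_mul]
  exact pow_mem_subgroupPow (mem_top _) _

theorem P_anti {k m : ℕ} (h : k ≤ m) :
    subgroupPow (⊤ : Subgroup G) (p ^ m) ≤ subgroupPow (⊤ : Subgroup G) (p ^ k) :=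
  subgroupPow_le.2 fun x _ => pow_mem_P x h

theorem exists_root [Finite G] (hp : p.Prime) (hG : IsPGroup p G) (h : IsPowerful p G) {k : ℕ}
    {z : G} (hz : z ∈ subgroupPow (⊤ : Subgroup G) (p ^ k)) : ∃ x, x ^ p ^ k = z :=
  (powerful_structure hp hG h k).1 z hz

theorem commutator_mem_P [Finite G] (hp : p.Prime) (hG : IsPGroup p G) (h : IsPowerful p G)
    {k : ℕ} {z : G} (hz : z ∈ subgroupPow (⊤ : Subgroup G) (p ^ k)) (g : G) :
    ⁅z, g⁆ ∈ subgroupPow (⊤ : Subgroup G) (p ^ (k + 1)) ∧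
      (p = 2 → ⁅z, g⁆ ∈ subgroupPow (⊤ : Subgroup G) (p ^ (k + 2))) := by
  have key : ⁅z, g⁆ ∈ subgroupPow (subgroupPow (⊤ : Subgroup G) (p ^ k)) (powerfulExp p) :=
    (powerful_structure hp hG h k).2 (commutator_mem_commutator hz (mem_top g))
  have h2 : p = 2 → ⁅z, g⁆ ∈ subgroupPow (⊤ : Subgroup G) (p ^ (k + 2)) := by
    rintro rfl
    refine subgroupPow_le.2 ?_ key
    intro x hx
    obtain ⟨y, rfl⟩ := exists_root hp hG h hx
    have h4 : 2 ^ k * powerfulExp 2 = 2 ^ (k + 2) := by rw [pow_add]; rfl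
    rw [← pow_mul, h4]
    exact pow_mem_subgroupPow (mem_top y) _
  refine ⟨?_, h2⟩
  by_cases hp2 : p = 2
  · exact P_anti (by omega) (h2 hp2)
  · rw [powerfulExp, if_neg hp2] at key
    refine subgroupPow_le.2 ?_ key
    intro x hx
    obtain ⟨y, rfl⟩ := exists_root hp hG h hx
    rw [← pow_mul, ← pow_succ]
    exact pow_mem_subgroupPow (mem_top y) _

theorem mem_P_zero (x : G) : x ∈ subgroupPow (⊤ : Subgroup G) (p ^ 0) := by
  have := pow_mem_P (p := p) x (le_refl 0)
  rwa [pow_zero, pow_one] at this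

end

/-- The properties of powerful `p`-groups established by simultaneous induction on the order. -/
structure OmegaProps (p : ℕ) (G : Type u) [Group G] : Prop where
  /-- If `a^{p^{i+1}} = 1` and `y^{p^i} = 1`, then `a^{p^i}` and `y` commute. -/
  comm : ∀ i, 1 ≤ i → ∀ a y : G, a ^ p ^ (i + 1) = 1 → y ^ p ^ i = 1 → Commute (a ^ p ^ i) y
  /-- The commutator of an element of order dividing `p` with any element has order dividing `p`. -/
  commutator : ∀ a y : G, y ^ p = 1 → ⁅a, y⁆ ^ p = 1
  /-- For odd `p`, elements of order dividing `p` form a subgroup. -/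
  mul : p ≠ 2 → ∀ x y : G, x ^ p = 1 → y ^ p = 1 → (x * y) ^ p = 1

/-- The information available in the inductive step: `G` is powerful, `OmegaProps` holds in the
subgroups `⟨b⟩ G^p` (`sub_comm`, `sub_mul`), and in the quotient of `G` by the group of all elements
of `G^p` of order dividing `p` (`quot_comm`, `quot_commutator`, where membership in that group is
spelled out). -/
structure StepHyp (p : ℕ) (G : Type u) [Group G] [Finite G] : Prop where
  prime : p.Prime
  pgroup : IsPGroup p G
  powerful : IsPowerful p G
  sub_comm : ∀ b : G, ∀ i, 1 ≤ i → ∀ a ∈ zpowers b ⊔ subgroupPow ⊤ (p ^ 1),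
    ∀ y ∈ zpowers b ⊔ subgroupPow ⊤ (p ^ 1), a ^ p ^ (i + 1) = 1 → y ^ p ^ i = 1 →
    Commute (a ^ p ^ i) y
  sub_mul : p ≠ 2 → ∀ b : G, ∀ x ∈ zpowers b ⊔ subgroupPow ⊤ (p ^ 1),
    ∀ y ∈ zpowers b ⊔ subgroupPow ⊤ (p ^ 1), x ^ p = 1 → y ^ p = 1 → (x * y) ^ p = 1
  quot_comm : ∀ i, 1 ≤ i → ∀ a y : G,
    (a ^ p ^ (i + 1) ∈ subgroupPow (⊤ : Subgroup G) (p ^ 1) ∧ (a ^ p ^ (i + 1)) ^ p = 1) →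
    (y ^ p ^ i ∈ subgroupPow (⊤ : Subgroup G) (p ^ 1) ∧ (y ^ p ^ i) ^ p = 1) →
    ∀ x : G, x = a ^ p ^ i → ⁅x⁻¹, y⁆ ^ p = 1
  quot_commutator : ∀ a y : G, y ^ p = 1 → (⁅a, y⁆ ^ p) ^ p = 1

namespace StepHyp
variable {G : Type u} [Group G] [Finite G] {p : ℕ}

/-- With `x = a ^ p ^ (i - 1)`, the commutator `⁅x⁻¹, y⁆` has order dividing `p` by the quotient
hypothesis, and commutes with `x` because it is a `p ^ i`-th power. -/
theorem comm_of_two_le (H : StepHyp p G) {i : ℕ} (hi : 2 ≤ i) {a y : G}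
    (ha : a ^ p ^ (i + 1) = 1) (hy : y ^ p ^ i = 1) : Commute (a ^ p ^ i) y := by
  obtain ⟨j, rfl⟩ : ∃ j, i = j + 1 := ⟨i - 1, by omega⟩
  have hj : 1 ≤ j := by omega
  set x := a ^ p ^ j with hx
  have hw : ⁅x⁻¹, y⁆ ^ p = 1 :=
    H.quot_comm j hj a y
      ⟨pow_mem_P a (by omega), by rw [← pow_mul, ← pow_succ, ha]⟩
      ⟨pow_mem_P y hj, by rw [← pow_mul, ← pow_succ, hy]⟩ x hx
  have hwP : ⁅x⁻¹, y⁆ ∈ subgroupPow (⊤ : Subgroup G) (p ^ (j + 1)) :=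
    (commutator_mem_P H.prime H.pgroup H.powerful (inv_mem (pow_mem_P a le_rfl)) y).1
  obtain ⟨v, hv⟩ := exists_root H.prime H.pgroup H.powerful hwP
  have hcom : Commute (v ^ p ^ (j + 1)) x := by
    refine H.sub_comm v (j + 1) (by omega) v (mem_sup_left (mem_zpowers v)) x
      (mem_sup_right (pow_mem_P a hj)) ?_ ?_
    · rw [pow_succ, pow_mul, hv, hw]
    · have h1 : p ^ j * p ^ (j + 1) = p ^ (j + 1 + 1) * p ^ (j - 1) := by
        rw [← pow_add, ← pow_add]
        congr 1
        omega
      rw [hx, ← pow_mul, h1, pow_mul, ha, one_pow]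
  rw [hv] at hcom
  have := commute_pow_of_commute hcom.symm hw
  rwa [hx, ← pow_mul, ← pow_succ] at this

/-- For odd `p`, `⁅a, y⁆` is the product of two elements of order dividing `p` in `⟨y⟩ G^p`. -/
theorem commutator_of_odd (H : StepHyp p G) (h2 : p ≠ 2) {a y : G} (hy : y ^ p = 1) :
    ⁅a, y⁆ ^ p = 1 := by
  have h1 : ⁅a, y⁆ = (a * y * a⁻¹) * y⁻¹ := by rw [commutatorElement_def]
  have hc := (commutator_mem_P (k := 0) H.prime H.pgroup H.powerful (mem_P_zero a) y).1
  have hyT : y ∈ zpowers y ⊔ subgroupPow ⊤ (p ^ 1) := mem_sup_left (mem_zpowers y)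
  rw [h1]
  refine H.sub_mul h2 y _ ?_ _ (inv_mem hyT) ?_ ?_
  · have h3 : a * y * a⁻¹ = ⁅a, y⁆ * y := by simp [commutatorElement_def]
    rw [h3]
    exact mul_mem (mem_sup_right hc) hyT
  · rw [conj_pow, hy]; group
  · rw [inv_pow, hy, inv_one]

/-- Let `c` be such that `⁅c, y⁆ = c ^ 2` for an involution `y`, as is the case for `c = ⁅a, y⁆`.
If `c ^ 2` is a `2 ^ n`-th power, write it as `g ^ 16` with `g` a `2 ^ (n - 4)`-th power. Then `c` and
`g ^ 8` differ by an element of `G^4` of order dividing `2`, which commutes with `y`; hence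
`c ^ 2 = ⁅g ^ 8, y⁆` is an even higher power. -/
theorem sq_mem_P_succ (H : StepHyp 2 G) {c y h : G} {n : ℕ} (hn : 4 ≤ n) (hy : y ^ 2 = 1)
    (hcP : c ∈ subgroupPow (⊤ : Subgroup G) (2 ^ 2)) (hc4 : (c ^ 2) ^ 2 = 1)
    (hcy : ⁅c, y⁆ = c ^ 2) (hh : h ^ 2 ^ n = c ^ 2) :
    c ^ 2 ∈ subgroupPow (⊤ : Subgroup G) (2 ^ (n + 1)) := by
  obtain ⟨g, hg⟩ : ∃ g, g = h ^ 2 ^ (n - 4) := ⟨_, rfl⟩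
  have hg8P : g ^ 8 ∈ subgroupPow (⊤ : Subgroup G) (2 ^ (n - 1)) := by
    have h1 : 2 ^ (n - 4) * 8 = 2 ^ (n - 1) := by
      have : n - 1 = n - 4 + 3 := by omega
      rw [this, pow_add]; norm_num
    rw [hg, ← pow_mul, h1]
    exact pow_mem_P h le_rfl
  have hg16 : g ^ 16 = c ^ 2 := by
    have h1 : 2 ^ (n - 4) * 16 = 2 ^ n := by
      have : n = n - 4 + 4 := by omega
      conv_rhs => rw [this, pow_add]
      norm_num
    rw [hg, ← pow_mul, h1, hh]
  have hc2P : c ^ 2 ∈ subgroupPow (⊤ : Subgroup G) (2 ^ 1) := pow_mem (P_anti (by norm_num) hcP) 2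
  obtain ⟨f, hf⟩ := exists_root H.prime H.pgroup H.powerful hcP
  have hf8 : f ^ 2 ^ (2 + 1) = c ^ 2 := by rw [← hf, ← pow_mul]; norm_num
  have hg4 : (g ^ 4) ^ 2 ^ 2 = c ^ 2 := by rw [← hg16, ← pow_mul]; norm_num
  -- `c = f ^ 4` and `g ^ 4` commute modulo the elements of `G^2` of order dividing `2`,
  -- because `f ^ 8` and `(g ^ 4) ^ 4` are such elements
  have ht : ⁅c⁻¹, g ^ 4⁆ ^ 2 = 1 :=
    H.quot_comm 2 (by norm_num) f (g ^ 4) (by rw [hf8]; exact ⟨hc2P, hc4⟩)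
      (by rw [hg4]; exact ⟨hc2P, hc4⟩) c hf.symm
  have htP := (commutator_mem_P H.prime H.pgroup H.powerful (inv_mem hcP) (g ^ 4)).2 rfl
  obtain ⟨r, hr⟩ := exists_root H.prime H.pgroup H.powerful htP
  have htcomm : ∀ z : G, z ^ 16 = 1 → Commute ⁅c⁻¹, g ^ 4⁆ z := by
    intro z hz
    rw [← hr]
    refine H.comm_of_two_le (by norm_num) ?_ (by simpa using hz)
    rw [pow_succ 2, pow_mul, hr, ht]
  have htg : Commute ⁅c⁻¹, g ^ 4⁆ (g ^ 4) := by
    apply htcomm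
    rw [← pow_mul, show 4 * 16 = 16 * 2 * 2 by norm_num, pow_mul, pow_mul, hg16, hc4, one_pow]
  have hcg : Commute c (g ^ 8) := by
    have h1 : Commute ((g ^ 4) ^ 2) c := by
      have hu : g ^ 4 * c = c * ⁅c⁻¹, g ^ 4⁆ * g ^ 4 := by simp [commutatorElement_def, mul_assoc]
      generalize ⁅c⁻¹, g ^ 4⁆ = t at ht htg hu
      generalize g ^ 4 = u at htg hu ⊢
      calc u ^ 2 * c = u * (u * c) := by rw [pow_two, mul_assoc]
        _ = u * c * (t * u) := by conv_lhs => rw [hu]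
                                  simp only [mul_assoc]
        _ = c * t * (u * t) * u := by rw [hu]; simp only [mul_assoc]
        _ = c * t ^ 2 * u ^ 2 := by rw [← htg.eq]; simp only [pow_two, mul_assoc]
        _ = c * u ^ 2 := by rw [ht, mul_one]
    rw [← pow_mul] at h1
    exact h1.symm
  have hs2 : (c⁻¹ * g ^ 8) ^ 2 = 1 := by
    rw [hcg.inv_left.mul_pow, ← pow_mul, hg16, inv_pow, inv_mul_cancel]
  have hsP : c⁻¹ * g ^ 8 ∈ subgroupPow (⊤ : Subgroup G) (2 ^ 2) :=
    mul_mem (inv_mem hcP) (P_anti (by omega) hg8P)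
  obtain ⟨m, hm⟩ := exists_root H.prime H.pgroup H.powerful hsP
  have hsy : Commute (c⁻¹ * g ^ 8) y := by
    have h1 : (m ^ 2 ^ 1) ^ 2 ^ 1 = c⁻¹ * g ^ 8 := by rw [← hm, ← pow_mul]; norm_num
    rw [← h1]
    refine H.sub_comm y 1 le_rfl _ (mem_sup_right (pow_mem_P m le_rfl)) y
      (mem_sup_left (mem_zpowers y)) ?_ (by simpa using hy)
    rw [pow_succ 2 1, pow_mul, h1, hs2]
  have hfin : ⁅g ^ 8, y⁆ = c ^ 2 := by
    have h1 : g ^ 8 = c * (c⁻¹ * g ^ 8) := by group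
    rw [h1, commutatorElement_mul_left_eq_conj_mul, hsy.commutator_eq, hcy]
    group
  have h9 := (commutator_mem_P H.prime H.pgroup H.powerful hg8P y).2 rfl
  rw [hfin] at h9
  exact P_anti (by omega) h9

theorem commutator_of_two (H : StepHyp 2 G) {a y : G} (hy : y ^ 2 = 1) : ⁅a, y⁆ ^ 2 = 1 := by
  obtain ⟨c, hc⟩ : ∃ c, c = ⁅a, y⁆ := ⟨_, rfl⟩
  have hcP : c ∈ subgroupPow (⊤ : Subgroup G) (2 ^ 2) := by
    rw [hc]
    exact (commutator_mem_P (k := 0) H.prime H.pgroup H.powerful (mem_P_zero a) y).2 rfl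
  have hc4 : (c ^ 2) ^ 2 = 1 := by rw [hc]; exact H.quot_commutator a y hy
  have hyi : y⁻¹ = y := by
    rw [inv_eq_iff_mul_eq_one, ← pow_two, hy]
  have hcy : ⁅c, y⁆ = c ^ 2 := by
    have h1 : y * c⁻¹ * y⁻¹ = c := by
      rw [hc, commutatorElement_def]
      simp only [mul_inv_rev, inv_inv]
      rw [hyi]
      have : y * (y * (a * (y * a⁻¹))) * y = y ^ 2 * (a * y * a⁻¹ * y) := by
        simp only [mul_assoc, pow_two]
      rw [this, hy, one_mul]
    have h3 : ⁅c, y⁆ = c * (y * c⁻¹ * y⁻¹) := by simp [commutatorElement_def, mul_assoc]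
    rw [h3, h1, pow_two]
  have key : ∀ n, c ^ 2 ∈ subgroupPow (⊤ : Subgroup G) (2 ^ (n + 4)) := by
    intro n
    induction n with
    | zero =>
      rw [← hcy]
      exact (commutator_mem_P H.prime H.pgroup H.powerful hcP y).2 rfl
    | succ n ih =>
      obtain ⟨h, hh⟩ := exists_root H.prime H.pgroup H.powerful ih
      exact H.sq_mem_P_succ (by omega) hy hcP hc4 hcy hh
  have := Fact.mk H.prime
  obtain ⟨n, hn⟩ := IsPGroup.iff_card.1 H.pgroup
  obtain ⟨h, hh⟩ := exists_root H.prime H.pgroup H.powerful (key n)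
  rw [← hc, ← hh, pow_add, pow_mul, ← hn, pow_card_eq_one', one_pow]

theorem commutator (H : StepHyp p G) {a y : G} (hy : y ^ p = 1) : ⁅a, y⁆ ^ p = 1 := by
  by_cases h2 : p = 2
  · subst h2
    exact H.commutator_of_two hy
  · exact H.commutator_of_odd h2 hy

theorem comm_one (H : StepHyp p G) {a y : G} (ha : a ^ p ^ 2 = 1) (hy : y ^ p = 1) :
    Commute (a ^ p) y := by
  have hcp : ⁅a⁻¹, y⁆ ^ p = 1 := H.commutator hy
  have hcP := commutator_mem_P (k := 0) H.prime H.pgroup H.powerful (mem_P_zero a⁻¹) y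
  set c := ⁅a⁻¹, y⁆ with hc
  have hcomm : ∀ d ∈ subgroupPow (⊤ : Subgroup G) (p ^ 2), d ^ p = 1 →
      ∀ z, z ^ p ^ 2 = 1 → Commute d z := by
    intro d hd hdp z hz
    obtain ⟨r, rfl⟩ := exists_root H.prime H.pgroup H.powerful hd
    exact H.comm_of_two_le le_rfl (by rw [pow_succ, pow_mul, hdp]) hz
  by_cases h2 : p = 2
  · exact commute_pow_of_commute (hcomm c (hcP.2 h2) hcp a ha).symm hcp
  · have hdP := (commutator_mem_P H.prime H.pgroup H.powerful hcP.1 a).1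
    have hdp : ⁅c, a⁆ ^ p = 1 := by
      rw [← commutatorElement_inv, inv_pow, H.commutator hcp, inv_one]
    apply commute_pow_of_mul_pow_eq
    rw [← hc, mul_pow_of_class_two (hcomm _ hdP hdp a ha)
      (hcomm _ hdP hdp c (by rw [pow_two, pow_mul, hcp, one_pow])) (mul_eq_comm_mul c a), hcp,
      pow_choose_two_eq_one H.prime h2 hdp, mul_one, mul_one]

theorem mul_of_odd (H : StepHyp p G) (h2 : p ≠ 2) {x y : G} (hx : x ^ p = 1) (hy : y ^ p = 1) :
    (x * y) ^ p = 1 := by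
  have hdp : ⁅y, x⁆ ^ p = 1 := H.commutator hx
  have hdP := (commutator_mem_P (k := 0) H.prime H.pgroup H.powerful (mem_P_zero y) x).1
  have hcomm : ∀ z, z ^ p = 1 → Commute ⁅y, x⁆ z := by
    intro z hz
    obtain ⟨r, hr⟩ := exists_root H.prime H.pgroup H.powerful hdP
    rw [zero_add, pow_one] at hr
    rw [← hr]
    exact H.comm_one (by rw [pow_two, pow_mul, hr, hdp]) hz
  rw [mul_pow_of_class_two (hcomm x hx) (hcomm y hy) (mul_eq_comm_mul y x), hx, hy,
    pow_choose_two_eq_one H.prime h2 hdp, mul_one, mul_one]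

theorem omegaProps (H : StepHyp p G) : OmegaProps p G where
  comm := by
    intro i hi a y ha hy
    rcases Nat.lt_or_ge i 2 with h | h
    · obtain rfl : i = 1 := by omega
      rw [pow_one] at hy ⊢
      exact H.comm_one ha hy
    · exact H.comm_of_two_le h ha hy
  commutator := fun _ _ hy => H.commutator hy
  mul := fun h2 _ _ hx hy => H.mul_of_odd h2 hx hy

end StepHyp

theorem omegaProps_of_commute {p : ℕ} {G : Type u} [Group G] (h : ∀ a b : G, Commute a b) :
    OmegaProps p G where
  comm := fun _ _ _ _ _ _ => h _ _
  commutator := fun a y _ => by rw [(h a y).commutator_eq, one_pow]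
  mul := fun _ x y hx hy => by rw [(h x y).mul_pow, hx, hy, one_mul]

/-- The set of elements of `G^p` of order dividing `p` is a subgroup once its elements commute. -/
theorem omega_one_of_commute {p : ℕ} {G : Type u} [Group G]
    (hc : ∀ x ∈ subgroupPow (⊤ : Subgroup G) (p ^ 1), x ^ p = 1 →
      ∀ y ∈ subgroupPow (⊤ : Subgroup G) (p ^ 1), y ^ p = 1 → Commute x y) (x : G) :
    x ∈ omegaSubgroup p 1 (subgroupPow (⊤ : Subgroup G) (p ^ 1)) ↔
      x ∈ subgroupPow (⊤ : Subgroup G) (p ^ 1) ∧ x ^ p = 1 := by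
  constructor
  · intro hx
    refine ⟨(closure_le _).2 (fun z hz => hz.1) hx, ?_⟩
    refine pow_eq_one_of_closure ?_ ?_ x hx
    · rintro a ⟨ha, ha'⟩ b ⟨hb, hb'⟩
      rw [pow_one] at ha' hb'
      exact hc a ha ha' b hb hb'
    · rintro a ⟨_, ha'⟩
      rwa [pow_one] at ha'
  · exact fun hx => subset_closure ⟨hx.1, by rw [pow_one]; exact hx.2⟩

theorem omegaProps_of_card {p : ℕ} (hp : p.Prime) (n : ℕ) :
    ∀ (G : Type u) [Group G] [Finite G], Nat.card G = n → IsPGroup p G → IsPowerful p G →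
      OmegaProps p G := by
  induction n using Nat.strong_induction_on with
  | _ n ih =>
  intro G _ _ hn hG h
  have := Fact.mk hp
  have := hG.isNilpotent
  by_cases hab : ∀ a b : G, Commute a b
  · exact omegaProps_of_commute hab
  have hsub : ∀ b : G, OmegaProps p ↥(zpowers b ⊔ subgroupPow (⊤ : Subgroup G) (p ^ 1)) := by
    intro b
    rw [pow_one]
    refine ih _ ?_ _ rfl (hG.to_subgroup _) (isPowerful_zpowers_sup hp h b)
    rw [← hn]
    refine lt_of_le_of_ne (Subgroup.card_le_card_group _) fun he => hab ?_
    exact commute_of_zpowers_sup_eq_top hp hG (Subgroup.eq_top_of_card_eq _ he)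
  have hsub_comm : ∀ b : G, ∀ i, 1 ≤ i → ∀ a ∈ zpowers b ⊔ subgroupPow ⊤ (p ^ 1),
      ∀ y ∈ zpowers b ⊔ subgroupPow ⊤ (p ^ 1), a ^ p ^ (i + 1) = 1 → y ^ p ^ i = 1 →
      Commute (a ^ p ^ i) y := by
    intro b i hi a ha y hy ha' hy'
    have h1 := (hsub b).comm i hi ⟨a, ha⟩ ⟨y, hy⟩ (Subtype.ext (by simpa using ha'))
      (Subtype.ext (by simpa using hy'))
    exact congrArg Subtype.val h1.eq
  have hsub_mul : p ≠ 2 → ∀ b : G, ∀ x ∈ zpowers b ⊔ subgroupPow ⊤ (p ^ 1),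
      ∀ y ∈ zpowers b ⊔ subgroupPow ⊤ (p ^ 1), x ^ p = 1 → y ^ p = 1 → (x * y) ^ p = 1 := by
    intro h2 b x hx y hy hx' hy'
    have h1 := (hsub b).mul h2 ⟨x, hx⟩ ⟨y, hy⟩ (Subtype.ext (by simpa using hx'))
      (Subtype.ext (by simpa using hy'))
    exact congrArg Subtype.val h1
  have hmemN := omega_one_of_commute (p := p) (G := G) (by
    intro x hx hx' y hy hy'
    obtain ⟨r, rfl⟩ := exists_root hp hG h hx
    exact hsub_comm r 1 le_rfl r (mem_sup_left (mem_zpowers r)) y (mem_sup_right hy)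
      (by rw [pow_succ, pow_mul, hx']) (by rwa [pow_one]))
  have hNn := omegaSubgroup_normal p 1 (subgroupPow (⊤ : Subgroup G) (p ^ 1))
  set N := omegaSubgroup p 1 (subgroupPow (⊤ : Subgroup G) (p ^ 1)) with hN
  have hNbot : N ≠ ⊥ := by
    intro hbot
    apply hab
    intro a b
    by_contra hcomm
    -- a nontrivial commutator has a power of order `p`, and that power lies in `G^p`
    have hcP := (commutator_mem_P (k := 0) hp hG h (mem_P_zero a) b).1
    have hne : ⁅a, b⁆ ≠ 1 := fun he => hcomm (commutatorElement_eq_one_iff_commute.1 he)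
    obtain ⟨m, hm⟩ := hG ⁅a, b⁆
    have hall : ∀ m, ⁅a, b⁆ ^ p ^ m = 1 → ⁅a, b⁆ = 1 := by
      intro m
      induction m with
      | zero => simp
      | succ m ihm =>
        intro hm
        apply ihm
        have h1 : ⁅a, b⁆ ^ p ^ m ∈ N :=
          (hmemN _).2 ⟨pow_mem hcP _, by rw [← pow_mul, ← pow_succ, hm]⟩
        rwa [hbot, mem_bot] at h1
    exact hne (hall m hm)
  have hquot : OmegaProps p (G ⧸ N) := by
    refine ih _ ?_ _ rfl (hG.to_quotient N) (isPowerful_quotient h N)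
    rw [← hn, Subgroup.card_eq_card_quotient_mul_card_subgroup N]
    have h1 : 1 < Nat.card N := by
      rw [Subgroup.one_lt_card_iff_ne_bot]
      exact hNbot
    exact lt_mul_of_one_lt_right Nat.card_pos h1
  have hq : ∀ v : G, v ∈ subgroupPow (⊤ : Subgroup G) (p ^ 1) ∧ v ^ p = 1 →
      (v : G ⧸ N) = 1 := fun v hv => (QuotientGroup.eq_one_iff v).2 ((hmemN v).2 hv)
  have hq' : ∀ v : G, QuotientGroup.mk' N v = 1 → v ^ p = 1 := fun v hv =>
    ((hmemN v).1 ((QuotientGroup.eq_one_iff v).1 hv)).2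
  refine StepHyp.omegaProps ⟨hp, hG, h, hsub_comm, hsub_mul, ?_, ?_⟩
  · rintro i hi a y ha hy x rfl
    have h1 := hquot.comm i hi (QuotientGroup.mk' N a) (QuotientGroup.mk' N y)
      (by rw [← map_pow]; exact hq _ ha) (by rw [← map_pow]; exact hq _ hy)
    apply hq'
    rw [map_commutatorElement, map_inv, map_pow]
    exact h1.inv_left.commutator_eq
  · intro a y hy
    have h1 := hquot.commutator (QuotientGroup.mk' N a) (QuotientGroup.mk' N y)
      (by rw [← map_pow, hy, map_one])
    apply hq'
    rw [map_pow, map_commutatorElement, h1]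

/-! ### The exponent of the omega subgroups -/

/-- In a powerful `p`-group, `Ω_i(G^p)` has exponent dividing `p^i`. Dividing out `Ω_i(G^p)` reduces
the inductive step to elements of order `p` in `G^p`, which commute. -/
theorem omega_exponent {p : ℕ} (hp : p.Prime) {G : Type u} [Group G] [Finite G]
    (hG : IsPGroup p G) (h : IsPowerful p G) (i : ℕ) :
    ∀ x ∈ omegaSubgroup p i (subgroupPow (⊤ : Subgroup G) (p ^ 1)), x ^ p ^ i = 1 := by
  induction i with
  | zero =>
    intro x hx
    have h1 : omegaSubgroup p 0 (subgroupPow (⊤ : Subgroup G) (p ^ 1)) ≤ ⊥ :=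
      (closure_le _).2 fun z hz => by simpa using hz.2
    simpa using h1 hx
  | succ i ih =>
    have hNn := omegaSubgroup_normal p i (subgroupPow (⊤ : Subgroup G) (p ^ 1))
    set N := omegaSubgroup p i (subgroupPow (⊤ : Subgroup G) (p ^ 1)) with hN
    have hquot : OmegaProps p (G ⧸ N) :=
      omegaProps_of_card hp _ _ rfl (hG.to_quotient N) (isPowerful_quotient h N)
    have hmap : (subgroupPow (⊤ : Subgroup G) (p ^ 1)).map (QuotientGroup.mk' N) =
        subgroupPow ⊤ (p ^ 1) := by
      rw [map_subgroupPow, map_top_of_surjective _ (QuotientGroup.mk'_surjective N)]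
    have hmem := omega_one_of_commute (p := p) (G := G ⧸ N) (by
      intro x hx hx' y _ hy'
      obtain ⟨r, rfl⟩ := exists_root hp (hG.to_quotient N) (isPowerful_quotient h N) hx
      exact hquot.comm 1 le_rfl r y (by rw [pow_succ, pow_mul, hx']) (by rwa [pow_one]))
    have hle : omegaSubgroup p (i + 1) (subgroupPow (⊤ : Subgroup G) (p ^ 1)) ≤
        (omegaSubgroup p 1 (subgroupPow (⊤ : Subgroup (G ⧸ N)) (p ^ 1))).comap
          (QuotientGroup.mk' N) := by
      refine (closure_le _).2 ?_
      rintro z ⟨hz, hz'⟩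
      refine (hmem _).2 ⟨hmap ▸ mem_map_of_mem _ hz, ?_⟩
      rw [← map_pow]
      refine (QuotientGroup.eq_one_iff _).2 (subset_closure ⟨pow_mem hz p, ?_⟩)
      rw [← pow_mul, ← pow_succ', hz']
    intro x hx
    have h1 := ((hmem _).1 (hle hx)).2
    rw [← map_pow] at h1
    have h2 := ih _ ((QuotientGroup.eq_one_iff _).1 h1)
    rw [← pow_mul, ← pow_succ'] at h2
    exact h2

end PowerfulOmega

theorem omega_statement_3 (p : ℕ) (hp : p.Prime) (G : Type*) [Group G] [Finite G]
    (hG : IsPGroup p G) (hpow : IsPowerful p G) (i j k : ℕ) (hji : j ≤ i) (hk : 1 ≤ k) :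
    ∀ x ∈ subgroupPow (omegaSubgroup p i (subgroupPow (⊤ : Subgroup G) (p ^ k))) (p ^ j),
      x ^ p ^ (i - j) = 1 := by
  intro x hx
  have hle : omegaSubgroup p i (subgroupPow (⊤ : Subgroup G) (p ^ k)) ≤
      omegaSubgroup p i (subgroupPow (⊤ : Subgroup G) (p ^ 1)) :=
    Subgroup.closure_mono fun z hz => ⟨PowerfulOmega.P_anti hk hz.1, hz.2⟩
  refine PowerfulOmega.omega_exponent hp hG hpow (i - j) x
    (PowerfulOmega.subgroupPow_le.2 ?_ hx)
  intro y hy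
  refine Subgroup.subset_closure ⟨pow_mem ?_ _, ?_⟩
  · exact (Subgroup.closure_le _).2 (fun z hz => hz.1) (hle hy)
  · rw [← pow_mul, ← pow_add, Nat.add_sub_cancel' hji]
    exact PowerfulOmega.omega_exponent hp hG hpow i y (hle hy)
end

section
/- Let p be an odd prime, G a finite powerful p-group, and i ≥ 1. Then the quotient group H = Ω_i(G^p) / (Ω_i(G^p))^{p²} is powerful, i.e., [H, H] ≤ H^p. -/
open scoped commutatorElement

theorem isPowerful_iff {p : ℕ} (hp2 : p ≠ 2) {G : Type*} [Group G] :
    IsPowerful p G ↔ commutator G ≤ subgroupPow (⊤ : Subgroup G) p := by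
  simp [IsPowerful, hp2]

/-! ### Power subgroups -/

theorem pow_mem_subgroupPow {G : Type*} [Group G] {H : Subgroup G} {n : ℕ} {x : G}
    (hx : x ∈ H) : x ^ n ∈ subgroupPow H n :=
  Subgroup.subset_closure ⟨x, hx, rfl⟩

theorem subgroupPow_le_iff {G : Type*} [Group G] {H K : Subgroup G} {n : ℕ} :
    subgroupPow H n ≤ K ↔ ∀ x ∈ H, x ^ n ∈ K := by
  rw [subgroupPow, Subgroup.closure_le]
  constructor
  · intro h x hx
    exact h ⟨x, hx, rfl⟩
  · rintro h _ ⟨x, hx, rfl⟩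
    exact h x hx

theorem subgroupPow_mono {G : Type*} [Group G] {H K : Subgroup G} {n : ℕ} (h : H ≤ K) :
    subgroupPow H n ≤ subgroupPow K n :=
  subgroupPow_le_iff.mpr fun _ hx => pow_mem_subgroupPow (h hx)

theorem subgroupPow_le_self {G : Type*} [Group G] (H : Subgroup G) (n : ℕ) :
    subgroupPow H n ≤ H :=
  subgroupPow_le_iff.mpr fun _ hx => pow_mem hx n

theorem map_subgroupPow {G G' : Type*} [Group G] [Group G'] (f : G →* G') (H : Subgroup G)
    (n : ℕ) : (subgroupPow H n).map f = subgroupPow (H.map f) n := by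
  apply le_antisymm
  · rw [Subgroup.map_le_iff_le_comap, subgroupPow_le_iff]
    intro x hx
    rw [Subgroup.mem_comap, map_pow]
    exact pow_mem_subgroupPow (Subgroup.mem_map_of_mem f hx)
  · rw [subgroupPow_le_iff]
    rintro _ ⟨x, hx, rfl⟩
    rw [← map_pow]
    exact Subgroup.mem_map_of_mem f (pow_mem_subgroupPow hx)

-- The low priority leaves `subgroupPow_top_normal` as the instance found for `⊤`.
instance (priority := 100) subgroupPow_normal_s4 {G : Type*} [Group G] (H : Subgroup G) [hH : H.Normal] (n : ℕ) :
    (subgroupPow H n).Normal := by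
  refine ⟨fun x hx g => ?_⟩
  have h : subgroupPow H n ≤ (subgroupPow H n).comap (MulAut.conj g).toMonoidHom := by
    rw [subgroupPow_le_iff]
    intro y hy
    have := pow_mem_subgroupPow (n := n) (hH.conj_mem y hy g)
    simpa [conj_pow] using this
  simpa using h hx

theorem IsPowerful.of_surjective {p : ℕ} (hp2 : p ≠ 2) {G G' : Type*} [Group G] [Group G']
    (hG : IsPowerful p G) (f : G →* G') (hf : Function.Surjective f) : IsPowerful p G' := by
  rw [isPowerful_iff hp2] at hG ⊢
  have h := Subgroup.map_mono (f := f) hG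
  rwa [map_subgroupPow, Subgroup.map_top_of_surjective f hf, commutator_def,
    Subgroup.map_commutator, Subgroup.map_top_of_surjective f hf] at h

theorem isPowerful_subgroup_iff {p : ℕ} (hp2 : p ≠ 2) {G : Type*} [Group G] {T : Subgroup G} :
    IsPowerful p T ↔ ⁅T, T⁆ ≤ subgroupPow T p := by
  rw [isPowerful_iff hp2, ← Subgroup.map_subtype_le_map_subtype, Subgroup.map_subtype_commutator,
    map_subgroupPow, ← MonoidHom.range_eq_map, Subgroup.range_subtype]

/-! ### Powers of products in class two -/

theorem mul_pow_of_commute_commutator {G : Type*} [Group G] {x u : G}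
    (hx : Commute ⁅x, u⁆ x) (hu : Commute ⁅x, u⁆ u) (n : ℕ) :
    (u * x) ^ n = u ^ n * x ^ n * ⁅x, u⁆ ^ n.choose 2 := by
  have hsw : x * u = ⁅x, u⁆ * u * x := by simp [commutatorElement_def]
  generalize ⁅x, u⁆ = w at *
  have hsw' : ∀ n : ℕ, x ^ n * u = w ^ n * u * x ^ n := by
    intro n
    induction n with
    | zero => simp
    | succ n ih =>
      rw [pow_succ', mul_assoc, ih, pow_succ', ← mul_assoc, ← mul_assoc,
        ((hx.pow_left n).symm).eq, mul_assoc (w ^ n), hsw]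
      simp only [← mul_assoc]
      rw [← pow_succ, ← pow_succ']
  induction n with
  | zero => simp
  | succ n ih =>
    have hc : Commute (w ^ n.choose 2) (u * x) := (hu.mul_right hx).pow_left _
    rw [pow_succ, ih, mul_assoc, hc.eq, Nat.choose_succ_succ' n 1, Nat.choose_one_right]
    calc u ^ n * x ^ n * (u * x * w ^ n.choose 2)
        = u ^ n * (x ^ n * u) * x * w ^ n.choose 2 := by simp only [mul_assoc]
      _ = u ^ n * (u * x ^ n * w ^ n) * x * w ^ n.choose 2 := by
          rw [hsw', mul_assoc (w ^ n), ((hu.mul_right (hx.pow_right n)).pow_left n).eq]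
      _ = u ^ n * u * (x ^ n * (w ^ n * x)) * w ^ n.choose 2 := by simp only [mul_assoc]
      _ = _ := by
          rw [(hx.pow_left n).eq, pow_succ, pow_succ, pow_add]
          simp only [mul_assoc]

theorem mul_pow_prime_of_commute_commutator {p : ℕ} (hp : p.Prime) (hp2 : p ≠ 2) {G : Type*}
    [Group G] {x u : G} (hx : Commute ⁅x, u⁆ x) (hu : Commute ⁅x, u⁆ u) (hw : ⁅x, u⁆ ^ p = 1) :
    (u * x) ^ p = u ^ p * x ^ p := by
  rw [mul_pow_of_commute_commutator hx hu]
  have h2 : p ∣ p.choose 2 := hp.dvd_choose_self two_ne_zero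
    (lt_of_le_of_ne hp.two_le hp2.symm)
  obtain ⟨k, hk⟩ := h2
  rw [hk, pow_mul, hw, one_pow, mul_one]

/-- If `u = [y, x]` has order dividing `p` and `[x, u]` has order dividing `p` and commutes with
`x` and `u`, then conjugation by `y` sends `x ^ p` to `(u * x) ^ p = x ^ p`. -/
theorem commute_pow_of_commutator {p : ℕ} (hp : p.Prime) (hp2 : p ≠ 2) {G : Type*}
    [Group G] {x y : G} (hx : Commute ⁅x, ⁅y, x⁆⁆ x) (hu : Commute ⁅x, ⁅y, x⁆⁆ ⁅y, x⁆)
    (hw : ⁅x, ⁅y, x⁆⁆ ^ p = 1) (hup : ⁅y, x⁆ ^ p = 1) : Commute y (x ^ p) := by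
  have h := mul_pow_prime_of_commute_commutator hp hp2 hx hu hw
  have h1 : ⁅y, x⁆ * x = y * x * y⁻¹ := by simp [commutatorElement_def]
  rw [hup, one_mul, h1, conj_pow] at h
  exact mul_inv_eq_iff_eq_mul.mp h

/-! ### Power subgroups of powerful groups -/

/-- In a nilpotent group an inclusion `L ≤ K` may be checked modulo `[L, G]`. -/
theorem le_of_le_commutator_sup {G : Type*} [Group G] [Group.IsNilpotent G] {L K : Subgroup G}
    [K.Normal] (h : L ≤ ⁅L, (⊤ : Subgroup G)⁆ ⊔ K) : L ≤ K := by
  have hK : K = (QuotientGroup.mk' K).ker := (QuotientGroup.ker_mk' K).symm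
  have hL : L.map (QuotientGroup.mk' K) ≤ ⁅L.map (QuotientGroup.mk' K), ⊤⁆ := by
    have := Subgroup.map_mono (f := QuotientGroup.mk' K) h
    rwa [Subgroup.map_sup, Subgroup.map_commutator, QuotientGroup.map_mk'_self, sup_bot_eq,
      Subgroup.map_top_of_surjective _ (QuotientGroup.mk'_surjective K)] at this
  have hn : ∀ n, L.map (QuotientGroup.mk' K) ≤ (⊤ : Subgroup (G ⧸ K)).lowerCentralSeries n := by
    intro n
    induction n with
    | zero => exact le_top
    | succ n ih => exact hL.trans (Subgroup.commutator_mono ih le_rfl)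
  obtain ⟨n, hn'⟩ := Subgroup.nilpotent_iff_lowerCentralSeries.mp
    (inferInstance : Group.IsNilpotent (G ⧸ K))
  have := hn n
  rw [hn', Subgroup.map_le_iff_le_comap] at this
  rwa [MonoidHom.comap_bot, ← hK] at this

/-- If `N` is powerfully embedded in `G`, so is `Nᵖ`. Modulo `(Nᵖ)ᵖ` and `[Nᵖ, G, G]`, the class two
power formula shows that each `nᵖ` is central. -/
theorem commutator_subgroupPow_le {p : ℕ} (hp : p.Prime) (hp2 : p ≠ 2) {G : Type*} [Group G]
    [Group.IsNilpotent G] {N : Subgroup G} [N.Normal]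
    (hN : ⁅N, (⊤ : Subgroup G)⁆ ≤ subgroupPow N p) :
    ⁅subgroupPow N p, (⊤ : Subgroup G)⁆ ≤ subgroupPow (subgroupPow N p) p := by
  apply le_of_le_commutator_sup
  set L := ⁅subgroupPow N p, (⊤ : Subgroup G)⁆ with hLdef
  set J := ⁅L, (⊤ : Subgroup G)⁆ ⊔ subgroupPow (subgroupPow N p) p with hJ
  have hone : ∀ x ∈ J, QuotientGroup.mk' J x = 1 := fun x hx => by
    rwa [QuotientGroup.mk'_apply, QuotientGroup.eq_one_iff]
  have hpp : ∀ x ∈ subgroupPow N p, (QuotientGroup.mk' J x) ^ p = 1 := fun x hx => by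
    rw [← map_pow]
    exact hone _ (Subgroup.mem_sup_right (pow_mem_subgroupPow hx))
  have hcen : ∀ x ∈ L, ∀ g, Commute (QuotientGroup.mk' J x) (QuotientGroup.mk' J g) := by
    intro x hx g
    rw [← commutatorElement_eq_one_iff_commute, ← map_commutatorElement]
    exact hone _ (Subgroup.mem_sup_left
      (Subgroup.commutator_mem_commutator hx (Subgroup.mem_top g)))
  have hmain : subgroupPow N p ≤
      (Subgroup.center (G ⧸ J)).comap (QuotientGroup.mk' J) := by
    rw [subgroupPow_le_iff]
    intro n hn
    rw [Subgroup.mem_comap, Subgroup.mem_center_iff]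
    intro g'
    obtain ⟨g, rfl⟩ := QuotientGroup.mk'_surjective J g'
    have hgn : ⁅g, n⁆ ∈ subgroupPow N p := by
      rw [← commutatorElement_inv]
      exact inv_mem (hN (Subgroup.commutator_mem_commutator hn (Subgroup.mem_top g)))
    have hw : ⁅n, ⁅g, n⁆⁆ ∈ L := by
      rw [← commutatorElement_inv]
      exact inv_mem (Subgroup.commutator_mem_commutator hgn (Subgroup.mem_top n))
    rw [map_pow]
    apply commute_pow_of_commutator hp hp2 <;> simp only [← map_commutatorElement]
    · exact hcen _ hw _
    · exact hcen _ hw _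
    · exact hpp _ (Subgroup.commutator_le_left _ _ hw)
    · exact hpp _ hgn
  rw [hLdef, Subgroup.commutator_le]
  intro x hx g _
  have := Subgroup.mem_center_iff.mp (hmain hx) (QuotientGroup.mk' J g)
  have h2 : Commute (QuotientGroup.mk' J x) (QuotientGroup.mk' J g) := this.symm
  rw [← commutatorElement_eq_one_iff_commute, ← map_commutatorElement,
    QuotientGroup.mk'_apply, QuotientGroup.eq_one_iff] at h2
  exact h2

theorem commutator_pow_top_le {p : ℕ} [Fact p.Prime] (hp2 : p ≠ 2) {G : Type*} [Group G]
    [Finite G] (hG : IsPGroup p G) (hpow : IsPowerful p G) :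
    ⁅subgroupPow (⊤ : Subgroup G) p, (⊤ : Subgroup G)⁆ ≤
      subgroupPow (subgroupPow (⊤ : Subgroup G) p) p := by
  have := hG.isNilpotent
  exact commutator_subgroupPow_le Fact.out hp2 ((isPowerful_iff hp2).mp hpow)

/-- `⟨y⟩ Gᵖ` is powerful: modulo `(Gᵖ)ᵖ` the subgroup `Gᵖ` is central. -/
theorem isPowerful_zpowers_sup {p : ℕ} [Fact p.Prime] (hp2 : p ≠ 2) {G : Type*} [Group G]
    [Finite G] (hG : IsPGroup p G) (hpow : IsPowerful p G) (y : G) :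
    IsPowerful p ↥(Subgroup.zpowers y ⊔ subgroupPow (⊤ : Subgroup G) p) := by
  rw [isPowerful_subgroup_iff hp2]
  refine le_trans ?_ (subgroupPow_mono (le_sup_right (a := Subgroup.zpowers y)
    (b := subgroupPow (⊤ : Subgroup G) p)))
  set K := subgroupPow (subgroupPow (⊤ : Subgroup G) p) p with hK
  have hcomm : ∀ a b : G, ⁅a, b⁆ ∈ K ↔
      Commute (QuotientGroup.mk' K a) (QuotientGroup.mk' K b) := by
    intro a b
    rw [← commutatorElement_eq_one_iff_commute, ← map_commutatorElement,
      QuotientGroup.mk'_apply, QuotientGroup.eq_one_iff]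
  have hcen : ∀ a ∈ subgroupPow (⊤ : Subgroup G) p, ∀ g,
      Commute (QuotientGroup.mk' K a) (QuotientGroup.mk' K g) := fun a ha g =>
    (hcomm a g).mp (commutator_pow_top_le hp2 hG hpow
      (Subgroup.commutator_mem_commutator ha (Subgroup.mem_top g)))
  rw [Subgroup.commutator_le]
  intro a ha b hb
  rw [Subgroup.mem_sup_of_normal_right] at ha hb
  obtain ⟨_, ⟨m, rfl⟩, s, hs, rfl⟩ := ha
  obtain ⟨_, ⟨n, rfl⟩, t, ht, rfl⟩ := hb
  rw [hcomm, map_mul, map_mul]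
  refine Commute.mul_left (Commute.mul_right ?_ (hcen t ht _).symm)
    (Commute.mul_right (hcen s hs _) (hcen s hs _))
  simp only [map_zpow]
  exact (Commute.refl _).zpow_zpow m n

theorem card_subgroup_lt {G : Type*} [Group G] [Finite G] {T : Subgroup G} (h : T ≠ ⊤) :
    Nat.card T < Nat.card G :=
  lt_of_le_of_ne (Subgroup.card_le_card_group _) fun he => h (Subgroup.eq_top_of_card_eq _ he)

/-- Since `Gᵖ` lies in every subgroup of index `p`, it consists of non-generators. -/
theorem zpowers_eq_top_of_sup {p : ℕ} [hp : Fact p.Prime] {G : Type*} [Group G]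
    [Finite G] (hG : IsPGroup p G) {y : G}
    (h : Subgroup.zpowers y ⊔ subgroupPow (⊤ : Subgroup G) p = ⊤) : Subgroup.zpowers y = ⊤ := by
  by_contra hne
  obtain ⟨N, hN⟩ := IsPGroup.iff_card.mp hG
  obtain ⟨n, hn⟩ := IsPGroup.iff_card.mp (hG.to_subgroup (Subgroup.zpowers y))
  have hlt : n < N := by
    have h1 := card_subgroup_lt hne
    rw [hN, hn] at h1
    exact (Nat.pow_lt_pow_iff_right hp.out.one_lt).mp h1
  obtain ⟨M, rfl⟩ : ∃ M, N = M + 1 := ⟨N - 1, by omega⟩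
  obtain ⟨K, hK, hyK⟩ := Sylow.exists_subgroup_card_pow_prime_le (p := p) (m := M)
    (by rw [hN]; exact pow_dvd_pow p (Nat.le_succ M)) (Subgroup.zpowers y) hn (by omega)
  have hidx : K.index = p := by
    have := K.card_mul_index
    rw [hK, hN, pow_succ] at this
    exact Nat.eq_of_mul_eq_mul_left (pow_pos hp.out.pos M) this
  have hKn : K.Normal := by
    apply Subgroup.normal_of_index_eq_minFac_card
    rw [hidx, hN, hp.out.pow_minFac (Nat.succ_ne_zero M)]
  have hle : subgroupPow (⊤ : Subgroup G) p ≤ K := by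
    rw [subgroupPow_le_iff]
    intro x _
    have := K.pow_index_mem x
    rwa [hidx] at this
  have htop : K = ⊤ := top_le_iff.mp (h ▸ sup_le hyK hle)
  rw [htop, Subgroup.index_top] at hidx
  exact hp.out.one_lt.ne hidx

theorem commute_of_zpowers_sup {p : ℕ} [hp : Fact p.Prime] {G : Type*} [Group G]
    [Finite G] (hG : IsPGroup p G) {y : G}
    (h : Subgroup.zpowers y ⊔ subgroupPow (⊤ : Subgroup G) p = ⊤) (a b : G) : Commute a b := by
  have htop := zpowers_eq_top_of_sup hG h
  obtain ⟨m, rfl⟩ := Subgroup.mem_zpowers_iff.mp (htop ▸ Subgroup.mem_top a)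
  obtain ⟨n, rfl⟩ := Subgroup.mem_zpowers_iff.mp (htop ▸ Subgroup.mem_top b)
  exact (Commute.refl y).zpow_zpow m n

theorem exists_pow_eq_of_commute {G : Type*} [Group G] (hc : ∀ a b : G, Commute a b) {n : ℕ}
    {x : G} (hx : x ∈ subgroupPow (⊤ : Subgroup G) n) : ∃ g, g ^ n = x := by
  induction hx using Subgroup.closure_induction with
  | mem x hx => obtain ⟨g, -, rfl⟩ := hx; exact ⟨g, rfl⟩
  | one => exact ⟨1, one_pow n⟩
  | mul x y _ _ ihx ihy =>
    obtain ⟨a, rfl⟩ := ihx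
    obtain ⟨b, rfl⟩ := ihy
    exact ⟨a * b, (hc a b).mul_pow n⟩
  | inv x _ ih =>
    obtain ⟨a, rfl⟩ := ih
    exact ⟨a⁻¹, inv_pow a n⟩

/-- In a powerful group every product of `p`-th powers is a `p`-th power modulo `(Gᵖ)ᵖ`. -/
theorem exists_pow_mul_of_mem {p : ℕ} [hp : Fact p.Prime] (hp2 : p ≠ 2) {G : Type*} [Group G]
    [Finite G] (hG : IsPGroup p G) (hpow : IsPowerful p G) {x : G}
    (hx : x ∈ subgroupPow (⊤ : Subgroup G) p) :
    ∃ g, ∃ v ∈ subgroupPow (subgroupPow (⊤ : Subgroup G) p) p, g ^ p * v = x := by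
  set K := subgroupPow (subgroupPow (⊤ : Subgroup G) p) p with hK
  have hone : ∀ x ∈ K, QuotientGroup.mk' K x = 1 := fun x hx => by
    rwa [QuotientGroup.mk'_apply, QuotientGroup.eq_one_iff]
  have key : ∀ a b : G, (QuotientGroup.mk' K (a * b)) ^ p =
      (QuotientGroup.mk' K a) ^ p * (QuotientGroup.mk' K b) ^ p := by
    intro a b
    have hba : ⁅b, a⁆ ∈ subgroupPow (⊤ : Subgroup G) p := (isPowerful_iff hp2).mp hpow
      (Subgroup.commutator_mem_commutator (Subgroup.mem_top b) (Subgroup.mem_top a))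
    have hcen : ∀ g, Commute (QuotientGroup.mk' K ⁅b, a⁆) (QuotientGroup.mk' K g) := by
      intro g
      rw [← commutatorElement_eq_one_iff_commute, ← map_commutatorElement]
      exact hone _ (commutator_pow_top_le hp2 hG hpow
        (Subgroup.commutator_mem_commutator hba (Subgroup.mem_top g)))
    rw [map_mul]
    apply mul_pow_prime_of_commute_commutator hp.out hp2 <;>
      simp only [← map_commutatorElement, ← map_pow]
    · exact hcen b
    · exact hcen a
    · exact hone _ (pow_mem_subgroupPow hba)
  suffices h : ∃ g : G, (QuotientGroup.mk' K g) ^ p = QuotientGroup.mk' K x by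
    obtain ⟨g, hg⟩ := h
    refine ⟨g, (g ^ p)⁻¹ * x, ?_, mul_inv_cancel_left _ _⟩
    rw [← map_pow, QuotientGroup.mk'_apply, QuotientGroup.mk'_apply, QuotientGroup.eq] at hg
    exact hg
  induction hx using Subgroup.closure_induction with
  | mem x hx => obtain ⟨g, -, rfl⟩ := hx; exact ⟨g, (map_pow _ _ _).symm⟩
  | one => exact ⟨1, by simp⟩
  | mul x y _ _ ihx ihy =>
    obtain ⟨a, ha⟩ := ihx
    obtain ⟨b, hb⟩ := ihy
    exact ⟨a * b, by rw [key, ha, hb, map_mul]⟩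
  | inv x _ ih =>
    obtain ⟨a, ha⟩ := ih
    exact ⟨a⁻¹, by rw [map_inv, inv_pow, ha, map_inv]⟩

universe u

/-- In a powerful group every element of `Gᵖ` is a `p`-th power. Writing `x = gᵖ v` with
`v ∈ (Gᵖ)ᵖ`, the element `x` lies in `Tᵖ` for the powerful subgroup `T = ⟨g⟩ Gᵖ`, which is
smaller than `G` unless `G` is cyclic. -/
theorem exists_pow_eq_of_mem {p : ℕ} [hp : Fact p.Prime] (hp2 : p ≠ 2) (n : ℕ) :
    ∀ (G : Type u) [Group G] [Finite G], Nat.card G = n → IsPGroup p G → IsPowerful p G →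
      ∀ x ∈ subgroupPow (⊤ : Subgroup G) p, ∃ g, g ^ p = x := by
  induction n using Nat.strong_induction_on with
  | _ n ih =>
    intro G _ _ hn hG hpow x hx
    obtain ⟨g, v, hv, rfl⟩ := exists_pow_mul_of_mem hp2 hG hpow hx
    set T := Subgroup.zpowers g ⊔ subgroupPow (⊤ : Subgroup G) p with hT
    by_cases htop : T = ⊤
    · exact exists_pow_eq_of_commute (commute_of_zpowers_sup hG htop) hx
    · have hxT : g ^ p * v ∈ subgroupPow T p :=
        mul_mem (pow_mem_subgroupPow (Subgroup.mem_sup_left (Subgroup.mem_zpowers g)))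
          (subgroupPow_mono le_sup_right hv)
      have hmap : (subgroupPow (⊤ : Subgroup T) p).map T.subtype = subgroupPow T p := by
        rw [map_subgroupPow, ← MonoidHom.range_eq_map, Subgroup.range_subtype]
      rw [← hmap] at hxT
      obtain ⟨z, hz, hzx⟩ := hxT
      obtain ⟨w, rfl⟩ := ih _ (hn ▸ card_subgroup_lt htop) T rfl (hG.to_subgroup T)
        (isPowerful_zpowers_sup hp2 hG hpow g) z hz
      exact ⟨w, by rw [← hzx]; simp⟩

/-- The iterated power subgroups `G ≥ Gᵖ ≥ (Gᵖ)ᵖ ≥ ⋯`. -/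
def iterPow (p : ℕ) (G : Type*) [Group G] : ℕ → Subgroup G
  | 0 => ⊤
  | k + 1 => subgroupPow (iterPow p G k) p

instance iterPow_normal (p : ℕ) (G : Type*) [Group G] (k : ℕ) : (iterPow p G k).Normal := by
  induction k with
  | zero => exact Subgroup.normal_of_characteristic ⊤
  | succ k ih => exact subgroupPow_normal_s4 _ p

theorem pow_mem_iterPow (p : ℕ) {G : Type*} [Group G] (x : G) (k : ℕ) :
    x ^ p ^ k ∈ iterPow p G k := by
  induction k with
  | zero => exact Subgroup.mem_top _
  | succ k ih => rw [pow_succ, pow_mul]; exact pow_mem_subgroupPow ih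

theorem commutator_iterPow_le {p : ℕ} [hp : Fact p.Prime] (hp2 : p ≠ 2) {G : Type*} [Group G]
    [Finite G] (hG : IsPGroup p G) (hpow : IsPowerful p G) (k : ℕ) :
    ⁅iterPow p G k, (⊤ : Subgroup G)⁆ ≤ iterPow p G (k + 1) := by
  have := hG.isNilpotent
  induction k with
  | zero => exact (isPowerful_iff hp2).mp hpow
  | succ k ih => exact commutator_subgroupPow_le hp.out hp2 ih

theorem exists_pow_eq_of_mem_iterPow {p : ℕ} [hp : Fact p.Prime] (hp2 : p ≠ 2) {G : Type u}
    [Group G] [Finite G] (hG : IsPGroup p G) (hpow : IsPowerful p G) (k : ℕ) :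
    ∀ x ∈ iterPow p G k, ∃ g, g ^ p ^ k = x := by
  induction k with
  | zero => exact fun x _ => ⟨x, by simp⟩
  | succ k ih =>
    intro x hx
    have hP : IsPowerful p (iterPow p G k) := by
      rw [isPowerful_subgroup_iff hp2]
      exact (Subgroup.commutator_mono le_rfl le_top).trans (commutator_iterPow_le hp2 hG hpow k)
    have hmap : (subgroupPow (⊤ : Subgroup (iterPow p G k)) p).map (iterPow p G k).subtype =
        subgroupPow (iterPow p G k) p := by
      rw [map_subgroupPow, ← MonoidHom.range_eq_map, Subgroup.range_subtype]
    have hx' : x ∈ subgroupPow (iterPow p G k) p := hx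
    rw [← hmap] at hx'
    obtain ⟨z, hz, rfl⟩ := hx'
    obtain ⟨w, rfl⟩ := exists_pow_eq_of_mem hp2 _ _ rfl (hG.to_subgroup _) hP z hz
    obtain ⟨g, hg⟩ := ih w w.2
    exact ⟨g, by rw [pow_succ, pow_mul, hg]; simp⟩

/-! ### Elements of order dividing `p` -/

/-- The elements of `H` of order dividing `p`, as a subgroup, when they are closed under
products. -/
def primeTorsion {G : Type*} [Group G] (p : ℕ) (H : Subgroup G)
    (h : ∀ a ∈ H, ∀ b ∈ H, a ^ p = 1 → b ^ p = 1 → (a * b) ^ p = 1) : Subgroup G where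
  carrier := {z | z ∈ H ∧ z ^ p = 1}
  mul_mem' ha hb := ⟨mul_mem ha.1 hb.1, h _ ha.1 _ hb.1 ha.2 hb.2⟩
  one_mem' := ⟨one_mem H, one_pow p⟩
  inv_mem' ha := ⟨inv_mem ha.1, by rw [inv_pow, ha.2, inv_one]⟩

theorem mem_primeTorsion {G : Type*} [Group G] {p : ℕ} {H : Subgroup G}
    {h : ∀ a ∈ H, ∀ b ∈ H, a ^ p = 1 → b ^ p = 1 → (a * b) ^ p = 1} {z : G} :
    z ∈ primeTorsion p H h ↔ z ∈ H ∧ z ^ p = 1 := Iff.rfl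

instance primeTorsion_normal {G : Type*} [Group G] {p : ℕ} {H : Subgroup G} [hH : H.Normal]
    {h : ∀ a ∈ H, ∀ b ∈ H, a ^ p = 1 → b ^ p = 1 → (a * b) ^ p = 1} :
    (primeTorsion p H h).Normal :=
  ⟨fun z hz g => ⟨hH.conj_mem z hz.1 g, by rw [conj_pow, hz.2, mul_one, mul_inv_cancel]⟩⟩

theorem primeTorsion_ne_bot {G : Type*} [Group G] {p : ℕ} (hG : IsPGroup p G)
    {H : Subgroup G} {h : ∀ a ∈ H, ∀ b ∈ H, a ^ p = 1 → b ^ p = 1 → (a * b) ^ p = 1}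
    (hH : H ≠ ⊥) : primeTorsion p H h ≠ ⊥ := by
  obtain ⟨z, hz, hz1⟩ := H.bot_or_exists_ne_one.resolve_left hH
  classical
  have hex := hG z
  have h0 : Nat.find hex ≠ 0 := by
    intro h0
    have := Nat.find_spec hex
    rw [h0, pow_zero, pow_one] at this
    exact hz1 this
  obtain ⟨j, hj⟩ := Nat.exists_eq_succ_of_ne_zero h0
  intro hbot
  have hmem : z ^ p ^ j ∈ primeTorsion p H h := by
    refine ⟨pow_mem hz _, ?_⟩
    rw [← pow_mul, ← pow_succ, ← Nat.succ_eq_add_one, ← hj]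
    exact Nat.find_spec hex
  rw [hbot, Subgroup.mem_bot] at hmem
  exact Nat.find_min hex (by omega) hmem

theorem card_quotient_lt {G : Type*} [Group G] [Finite G] {M : Subgroup G} (hM : M ≠ ⊥) :
    Nat.card (G ⧸ M) < Nat.card G := by
  rw [M.card_eq_card_quotient_mul_card_subgroup]
  exact lt_mul_of_one_lt_right Nat.card_pos (M.one_lt_card_iff_ne_bot.mpr hM)

/-- The two facts on element orders, proved together by induction on the order of the powerful
group: the elements of order dividing `p` are closed under products, and `x ^ p ^ k` commutes
with `y` whenever `x ^ p ^ (k + 1) = 1` and `y ^ p ^ k = 1`. -/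
theorem order_facts {p : ℕ} [hp : Fact p.Prime] (hp2 : p ≠ 2) (n : ℕ) :
    ∀ (G : Type u) [Group G] [Finite G], Nat.card G = n → IsPGroup p G → IsPowerful p G →
      (∀ x y : G, x ^ p = 1 → y ^ p = 1 → (x * y) ^ p = 1) ∧
      ∀ (k : ℕ) (x y : G), 1 ≤ k → x ^ p ^ (k + 1) = 1 → y ^ p ^ k = 1 →
        Commute y (x ^ p ^ k) := by
  induction n using Nat.strong_induction_on with
  | _ n ih =>
    intro G _ _ hn hG hpow
    by_cases hab : ∀ a b : G, Commute a b
    · refine ⟨fun x y hx hy => ?_, fun k x y _ _ _ => hab _ _⟩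
      rw [(hab x y).mul_pow, hx, hy, one_mul]
    set P := subgroupPow (⊤ : Subgroup G) p with hP
    -- `⟨y⟩ Gᵖ` is a proper subgroup, so the induction hypothesis applies to it.
    have hT : ∀ y a b : G, a ∈ Subgroup.zpowers y ⊔ P → b ∈ Subgroup.zpowers y ⊔ P →
        a ^ p = 1 → b ^ p = 1 → (a * b) ^ p = 1 := by
      intro y a b ha hb hap hbp
      have hne : Subgroup.zpowers y ⊔ P ≠ ⊤ := fun h => hab (commute_of_zpowers_sup hG h)
      have h := (ih _ (hn ▸ card_subgroup_lt hne) _ rfl (hG.to_subgroup _)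
        (isPowerful_zpowers_sup hp2 hG hpow y)).1 ⟨a, ha⟩ ⟨b, hb⟩ (Subtype.ext hap)
        (Subtype.ext hbp)
      exact congrArg Subtype.val h
    have hcP : ∀ x y : G, ⁅x, y⁆ ∈ P := fun x y => (isPowerful_iff hp2).mp hpow
      (Subgroup.commutator_mem_commutator (Subgroup.mem_top x) (Subgroup.mem_top y))
    have hcomm : ∀ x y : G, y ^ p = 1 → ⁅x, y⁆ ^ p = 1 := by
      intro x y hy
      have hy' : y ∈ Subgroup.zpowers y ⊔ P := Subgroup.mem_sup_left (Subgroup.mem_zpowers y)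
      have h1 : x * y * x⁻¹ = ⁅x, y⁆ * y := by simp [commutatorElement_def]
      rw [commutatorElement_def]
      refine hT y _ _ ?_ (inv_mem hy') ?_ ?_
      · rw [h1]
        exact mul_mem (Subgroup.mem_sup_right (hcP x y)) hy'
      · rw [conj_pow, hy, mul_one, mul_inv_cancel]
      · rw [inv_pow, hy, inv_one]
    have hcomm' : ∀ x y : G, y ^ p = 1 → ⁅y, x⁆ ^ p = 1 := by
      intro x y hy
      rw [← commutatorElement_inv, inv_pow, hcomm x y hy, inv_one]
    have hclosed : ∀ a ∈ P, ∀ b ∈ P, a ^ p = 1 → b ^ p = 1 → (a * b) ^ p = 1 :=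
      fun a ha b hb => hT 1 a b (Subgroup.mem_sup_right ha) (Subgroup.mem_sup_right hb)
    have hPbot : P ≠ ⊥ := by
      intro hbot
      apply hab
      intro a b
      have := hcP a b
      rwa [hbot, Subgroup.mem_bot, commutatorElement_eq_one_iff_commute] at this
    obtain ⟨M, hM⟩ : ∃ M, M = primeTorsion p P hclosed := ⟨_, rfl⟩
    have hMn : M.Normal := hM ▸ primeTorsion_normal
    have hMmem : ∀ z, z ∈ M ↔ z ∈ P ∧ z ^ p = 1 := fun z => by rw [hM, mem_primeTorsion]
    have hMbot : M ≠ ⊥ := hM ▸ primeTorsion_ne_bot hG hPbot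
    obtain ⟨N, hN⟩ : ∃ N, ∀ x : G, x ^ p ^ N = 1 := by
      obtain ⟨N, hN⟩ := IsPGroup.iff_card.mp hG
      exact ⟨N, fun x => by rw [← hN]; exact pow_card_eq_one'⟩
    have hpowP : ∀ (x : G) (k : ℕ), x ^ p ^ (k + 1) ∈ P := by
      intro x k
      rw [pow_succ, pow_mul]
      exact pow_mem_subgroupPow (Subgroup.mem_top _)
    -- Downward induction on `k`, starting where `x ^ p ^ k = 1` for every `x`.
    have hS : ∀ (d k : ℕ) (x y : G), N ≤ k + d → 1 ≤ k → x ^ p ^ (k + 1) = 1 → y ^ p ^ k = 1 →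
        Commute y (x ^ p ^ k) := by
      intro d
      induction d with
      | zero =>
        intro k x y hk _ _ _
        obtain ⟨j, rfl⟩ := Nat.exists_eq_add_of_le (show N ≤ k by omega)
        rw [pow_add, pow_mul, hN, one_pow]
        exact Commute.one_right y
      | succ d ihd =>
        intro k x y hk hk1 hx hy
        obtain ⟨m, rfl⟩ := Nat.exists_eq_add_of_le' hk1
        obtain ⟨X, hX⟩ : ∃ X, X = x ^ p ^ m := ⟨_, rfl⟩
        have hXp : x ^ p ^ (m + 1) = X ^ p := by rw [hX, ← pow_mul, ← pow_succ]
        have hup : ⁅y, X⁆ ^ p = 1 := by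
          rcases m with _ | m
          · rw [zero_add, pow_one] at hy
            exact hcomm' _ _ hy
          · have hq := (ih _ (hn ▸ card_quotient_lt hMbot) (G ⧸ M) rfl (hG.to_quotient M)
              (hpow.of_surjective hp2 _ (QuotientGroup.mk'_surjective M))).2 (m + 1)
              (QuotientGroup.mk' M x) (QuotientGroup.mk' M y) (by omega)
              (by
                rw [← map_pow, QuotientGroup.mk'_apply, QuotientGroup.eq_one_iff, hMmem]
                exact ⟨hpowP _ _, by rw [← pow_mul, ← pow_succ, hx]⟩)
              (by
                rw [← map_pow, QuotientGroup.mk'_apply, QuotientGroup.eq_one_iff, hMmem]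
                exact ⟨hpowP _ _, by rw [← pow_mul, ← pow_succ, hy]⟩)
            rw [← map_pow, ← hX, ← commutatorElement_eq_one_iff_commute, ← map_commutatorElement,
              QuotientGroup.mk'_apply, QuotientGroup.eq_one_iff, hMmem] at hq
            exact hq.2
        have hwp : ⁅X, ⁅y, X⁆⁆ ^ p = 1 := hcomm _ _ hup
        have humem : ⁅y, X⁆ ∈ iterPow p G (m + 1) := by
          rw [← commutatorElement_inv]
          refine inv_mem (commutator_iterPow_le hp2 hG hpow m
            (Subgroup.commutator_mem_commutator ?_ (Subgroup.mem_top y)))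
          rw [hX]
          exact pow_mem_iterPow p x m
        have hwmem : ⁅X, ⁅y, X⁆⁆ ∈ iterPow p G (m + 2) := by
          rw [← commutatorElement_inv]
          exact inv_mem (commutator_iterPow_le hp2 hG hpow (m + 1)
            (Subgroup.commutator_mem_commutator humem (Subgroup.mem_top X)))
        obtain ⟨g, hg⟩ := exists_pow_eq_of_mem_iterPow hp2 hG hpow (m + 2) _ hwmem
        have hgp : g ^ p ^ (m + 2 + 1) = 1 := by rw [pow_succ, pow_mul, hg, hwp]
        have hwc : ∀ z : G, z ^ p ^ (m + 2) = 1 → Commute ⁅X, ⁅y, X⁆⁆ z := by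
          intro z hz
          rw [← hg]
          exact (ihd (m + 2) g z (by omega) (by omega) hgp hz).symm
        rw [hXp]
        refine commute_pow_of_commutator hp.out hp2 (hwc _ ?_) (hwc _ ?_) hwp hup
        · rw [hX, ← pow_mul, mul_comm, pow_mul, hx, one_pow]
        · rw [pow_succ', pow_mul, hup, one_pow]
    have hS' : ∀ (k : ℕ) (x y : G), 1 ≤ k → x ^ p ^ (k + 1) = 1 → y ^ p ^ k = 1 →
        Commute y (x ^ p ^ k) := fun k x y => hS N k x y (Nat.le_add_left N k)
    refine ⟨fun x y hx hy => ?_, hS'⟩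
    have hwp : ⁅y, x⁆ ^ p = 1 := hcomm _ _ hx
    obtain ⟨d, hd⟩ := exists_pow_eq_of_mem_iterPow hp2 hG hpow 1 ⁅y, x⁆ (hcP y x)
    have hwc : ∀ z : G, z ^ p = 1 → Commute ⁅y, x⁆ z := by
      intro z hz
      rw [← hd]
      refine (hS' 1 d z le_rfl ?_ (by rwa [pow_one])).symm
      rw [pow_succ, pow_mul, hd, hwp]
    rw [mul_pow_prime_of_commute_commutator hp.out hp2 (hwc y hy) (hwc x hx) hwp, hx, hy, one_mul]

/-! ### Elements of order dividing `p ^ i` -/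

theorem mk_primeTorsion_eq_one_iff {G : Type*} [Group G] {p : ℕ}
    {h : ∀ a ∈ (⊤ : Subgroup G), ∀ b ∈ (⊤ : Subgroup G), a ^ p = 1 → b ^ p = 1 → (a * b) ^ p = 1}
    (x : G) (i : ℕ) :
    (QuotientGroup.mk' (primeTorsion p ⊤ h) x) ^ p ^ i = 1 ↔ x ^ p ^ (i + 1) = 1 := by
  rw [← map_pow, QuotientGroup.mk'_apply, QuotientGroup.eq_one_iff, mem_primeTorsion,
    ← pow_mul, ← pow_succ]
  simp

theorem mul_pow_prime_pow_eq_one {p : ℕ} [hp : Fact p.Prime] (hp2 : p ≠ 2) (i : ℕ) :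
    ∀ (G : Type u) [Group G] [Finite G], IsPGroup p G → IsPowerful p G →
      ∀ x y : G, x ^ p ^ i = 1 → y ^ p ^ i = 1 → (x * y) ^ p ^ i = 1 := by
  induction i with
  | zero =>
    intro G _ _ _ _ x y hx hy
    rw [pow_zero, pow_one] at *
    rw [hx, hy, one_mul]
  | succ i ih =>
    intro G _ _ hG hpow x y hx hy
    have hA := (order_facts hp2 _ G rfl hG hpow).1
    have h : ∀ a ∈ (⊤ : Subgroup G), ∀ b ∈ (⊤ : Subgroup G),
        a ^ p = 1 → b ^ p = 1 → (a * b) ^ p = 1 := fun a _ b _ => hA a b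
    rw [← mk_primeTorsion_eq_one_iff (h := h)] at hx hy ⊢
    rw [map_mul]
    exact ih _ (hG.to_quotient _)
      (hpow.of_surjective hp2 _ (QuotientGroup.mk'_surjective _)) _ _ hx hy

theorem commutator_pow_prime_pow_eq_one {p : ℕ} [hp : Fact p.Prime] (hp2 : p ≠ 2) (i : ℕ) :
    ∀ (G : Type u) [Group G] [Finite G], IsPGroup p G → IsPowerful p G →
      ∀ x y : G, x ^ p ^ (i + 2) = 1 → y ^ p ^ (i + 1) = 1 → ⁅x ^ p, y⁆ ^ p ^ i = 1 := by
  induction i with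
  | zero =>
    intro G _ _ hG hpow x y hx hy
    have := (order_facts hp2 _ G rfl hG hpow).2 1 x y le_rfl hx hy
    rw [pow_one] at this
    rw [this.symm.commutator_eq, one_pow]
  | succ i ih =>
    intro G _ _ hG hpow x y hx hy
    have hA := (order_facts hp2 _ G rfl hG hpow).1
    have h : ∀ a ∈ (⊤ : Subgroup G), ∀ b ∈ (⊤ : Subgroup G),
        a ^ p = 1 → b ^ p = 1 → (a * b) ^ p = 1 := fun a _ b _ => hA a b
    rw [show i + 1 + 2 = i + 2 + 1 from rfl] at hx
    rw [← mk_primeTorsion_eq_one_iff (h := h)] at hx hy ⊢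
    rw [map_commutatorElement, map_pow]
    exact ih _ (hG.to_quotient _)
      (hpow.of_surjective hp2 _ (QuotientGroup.mk'_surjective _)) _ _ hx hy

theorem pow_eq_one_of_mem_omegaSubgroup {p : ℕ} [hp : Fact p.Prime] (hp2 : p ≠ 2) {G : Type u}
    [Group G] [Finite G] (hG : IsPGroup p G) (hpow : IsPowerful p G) {i : ℕ} {H : Subgroup G}
    {x : G} (hx : x ∈ omegaSubgroup p i H) : x ^ p ^ i = 1 := by
  induction hx using Subgroup.closure_induction with
  | mem x hx => exact hx.2
  | one => exact one_pow _
  | mul x y _ _ ihx ihy => exact mul_pow_prime_pow_eq_one hp2 i G hG hpow x y ihx ihy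
  | inv x _ ih => rw [inv_pow, ih, inv_one]

/-- `Ω_i(Gᵖ)` is itself powerful. For `x = aᵖ` and `y` in it, `[x, y] = (gᵖ)ᵖ` for some `g`, and
`(gᵖ) ^ p ^ i = [aᵖ, y] ^ p ^ (i - 1) = 1`, so `gᵖ` lies in `Ω_i(Gᵖ)`. -/
theorem isPowerful_omegaSubgroup {p : ℕ} [hp : Fact p.Prime] (hp2 : p ≠ 2) {G : Type u}
    [Group G] [Finite G] (hG : IsPGroup p G) (hpow : IsPowerful p G) {i : ℕ} (hi : 1 ≤ i) :
    IsPowerful p ↥(omegaSubgroup p i (subgroupPow (⊤ : Subgroup G) p)) := by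
  rw [isPowerful_subgroup_iff hp2, Subgroup.commutator_le]
  intro x hx y hy
  obtain ⟨j, rfl⟩ := Nat.exists_eq_add_of_le' hi
  have hxP : x ∈ iterPow p G 1 := by
    refine (?_ : omegaSubgroup p (j + 1) (subgroupPow (⊤ : Subgroup G) p) ≤ _) hx
    exact (Subgroup.closure_le _).mpr fun z hz => hz.1
  have hxp := pow_eq_one_of_mem_omegaSubgroup hp2 hG hpow hx
  have hyp := pow_eq_one_of_mem_omegaSubgroup hp2 hG hpow hy
  obtain ⟨a, ha⟩ := exists_pow_eq_of_mem_iterPow hp2 hG hpow 1 x hxP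
  rw [pow_one] at ha
  have hap : a ^ p ^ (j + 2) = 1 := by rw [pow_succ', pow_mul, ha, hxp]
  have hc := commutator_pow_prime_pow_eq_one hp2 j G hG hpow a y hap hyp
  rw [ha] at hc
  obtain ⟨g, hg⟩ := exists_pow_eq_of_mem_iterPow hp2 hG hpow 2 ⁅x, y⁆
    (commutator_iterPow_le hp2 hG hpow 1
      (Subgroup.commutator_mem_commutator hxP (Subgroup.mem_top y)))
  rw [← hg, pow_two, pow_mul]
  refine pow_mem_subgroupPow (Subgroup.subset_closure
    ⟨pow_mem_subgroupPow (Subgroup.mem_top g), ?_⟩)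
  rw [pow_succ', pow_mul, ← pow_mul g, ← pow_two, hg, hc]

theorem omega_statement_4 (p : ℕ) (hp : p.Prime) (hp2 : p ≠ 2) (G : Type*) [Group G]
    [Finite G] (hG : IsPGroup p G) (hpow : IsPowerful p G) (i : ℕ) (hi : 1 ≤ i) :
    IsPowerful p
      (↥(omegaSubgroup p i (subgroupPow (⊤ : Subgroup G) p)) ⧸
        subgroupPow (⊤ : Subgroup ↥(omegaSubgroup p i (subgroupPow (⊤ : Subgroup G) p)))
          (p ^ 2)) := by
  have := Fact.mk hp
  exact (isPowerful_omegaSubgroup hp2 hG hpow hi).of_surjective hp2 _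
    (QuotientGroup.mk'_surjective _)
end
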